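/- Let $n \ge 1$ and let $\Omega_1 \subset \mathbb{R}^n$ be a bounded connected (nonempty) domain with smooth boundary; let $\mathcal{H}^n$ denote the $n$-dimensional Hausdorff (i.e. Lebesgue) measure. Let $1 < p < \infty$ and $1 \le q < p^*$, where $p^* = pn/(n-p)$ if $p < n$ and $p^* = \infty$ if $p \ge n$. For $v \in W^{1,p}(\Omega_1)$ write $\|v\|^p_{W^{1,p}(\Omega_1)} = \int_{\Omega_1} |\nabla v|^p + |v|^p \, dx$, and for $0 < \alpha < 1$ set $$\mathbb{S}(\alpha) := \inf\left\{ \frac{\|v\|^p_{W^{1,p}(\Omega_1)}}{\|v\|^p_{L^q(\Omega_1)}} : v \in W^{1,p}(\Omega_1),\ v \not\equiv 0,\ \mathcal{H}^n(\{x \in \Omega_1 : v(x) = 0\}) \ge \alpha\, \mathcal{H}^n(\Omega_1) \right\}.$$ Then for every $0 < \alpha < 1$ there exists $v_\alpha \in W^{1,p}(\Omega_1)$, $v_\alpha \not\equiv 0$, with $\mathcal{H}^n(\{x \in \Omega_1 : v_\alpha(x) = 0\}) = \alpha\, \mathcal{H}^n(\Omega_1)$ such that $$\mathbb{S}(\alpha)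 = \frac{\|v_\alpha\|^p_{W^{1,p}(\Omega_1)}}{\|v_\alpha\|^p_{L^q(\Omega_1)}}.$$ Moreover, $\alpha \mapsto \mathbb{S}(\alpha)$ is strictly increasing on $(0,1)$. -/

import Mathlib

open MeasureTheory Set Bornology
open scoped ENNReal RealInnerProductSpace ContDiff

noncomputable section

/-- `g` is a weak (distributional) gradient of `u` on the open set `Ω`, tested against
`C_c^∞(Ω)`. -/
def IsWeakGradient {n : ℕ} (Ω : Set (EuclideanSpace ℝ (Fin n)))
    (u : EuclideanSpace ℝ (Fin n) → ℝ)
    (g : EuclideanSpace ℝ (Fin n) → EuclideanSpace ℝ (Fin n)) : Prop :=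
  ∀ φ : EuclideanSpace ℝ (Fin n) → ℝ, ContDiff ℝ ∞ φ → HasCompactSupport φ → tsupport φ ⊆ Ω →
    ∀ e : EuclideanSpace ℝ (Fin n),
      ∫ x in Ω, u x * fderiv ℝ φ x e = - ∫ x in Ω, φ x * ⟪g x, e⟫

/-- `u ∈ W^{1,p}(Ω)` with weak gradient `g`. Both `u` and `g` are in `L^p(Ω)`, which includes
their a.e. measurability; `g` is determined by `u` up to a null subset of `Ω`. -/
def MemW1p {n : ℕ} (Ω : Set (EuclideanSpace ℝ (Fin n))) (p : ℝ)
    (u : EuclideanSpace ℝ (Fin n) → ℝ)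
    (g : EuclideanSpace ℝ (Fin n) → EuclideanSpace ℝ (Fin n)) : Prop :=
  MemLp u (ENNReal.ofReal p) (volume.restrict Ω) ∧
    MemLp g (ENNReal.ofReal p) (volume.restrict Ω) ∧
    IsWeakGradient Ω u g

/-- `‖u‖_{W^{1,p}(Ω)}^p = ∫_Ω |∇u|^p + |u|^p`, where `g` is the weak gradient of `u`. -/
def sobolevEnergy {n : ℕ} (Ω : Set (EuclideanSpace ℝ (Fin n))) (p : ℝ)
    (u : EuclideanSpace ℝ (Fin n) → ℝ)
    (g : EuclideanSpace ℝ (Fin n) → EuclideanSpace ℝ (Fin n)) : ℝ :=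
  ∫ x in Ω, ‖g x‖ ^ p + |u x| ^ p

/-- `‖u‖_{L^q(Ω)}^q = ∫_Ω |u|^q`. -/
def intLqPow {n : ℕ} (Ω : Set (EuclideanSpace ℝ (Fin n))) (q : ℝ)
    (u : EuclideanSpace ℝ (Fin n) → ℝ) : ℝ :=
  ∫ x in Ω, |u x| ^ q

/-- The quotient `‖u‖_{W^{1,p}(Ω)}^p / ‖u‖_{L^q(Ω)}^p`. -/
def sobolevQuotient {n : ℕ} (Ω : Set (EuclideanSpace ℝ (Fin n))) (p q : ℝ)
    (u : EuclideanSpace ℝ (Fin n) → ℝ)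
    (g : EuclideanSpace ℝ (Fin n) → EuclideanSpace ℝ (Fin n)) : ℝ :=
  sobolevEnergy Ω p u g / (intLqPow Ω q u) ^ (p / q)

/-- `𝕊(α)`: the infimum of the quotient over the `v ∈ W^{1,p}(Ω)`, not a.e. zero, that vanish on
a subset of `Ω` of measure at least `α |Ω|`. -/
def interiorConst {n : ℕ} (Ω : Set (EuclideanSpace ℝ (Fin n))) (p q α : ℝ) : ℝ :=
  sInf { r | ∃ v g, MemW1p Ω p v g ∧ 0 < intLqPow Ω q v ∧
    ENNReal.ofReal α * volume Ω ≤ volume {x ∈ Ω | v x = 0} ∧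
    r = sobolevQuotient Ω p q v g }

/-- `Ω` has a smooth boundary: near each boundary point, `Ω` is the sublevel set `{f < 0}` of a
`C^∞` function `f` with nonvanishing differential at that point. -/
def HasSmoothBoundary {n : ℕ} (Ω : Set (EuclideanSpace ℝ (Fin n))) : Prop :=
  ∀ x ∈ frontier Ω, ∃ (U : Set (EuclideanSpace ℝ (Fin n))) (f : EuclideanSpace ℝ (Fin n) → ℝ),
    IsOpen U ∧ x ∈ U ∧ ContDiffOn ℝ ∞ f U ∧ fderiv ℝ f x ≠ 0 ∧
      Ω ∩ U = {y ∈ U | f y < 0}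

end

open Filter Topology

variable {n : ℕ}

local notation "𝔼" => EuclideanSpace ℝ (Fin n)

/-- The function `(y, t) ↦ f (y + t z)` is integrable on `ℝⁿ × (0, 1]`. -/
theorem integrable_prod_comp_add_smul {F : Type*} [NormedAddCommGroup F] [MeasurableSpace F]
    [BorelSpace F] [SecondCountableTopology F]
    {f : 𝔼 → F} (hfm : Measurable f) (hf : Integrable f) (z : 𝔼) :
    Integrable (fun a : 𝔼 × ℝ => f (a.1 + a.2 • z))
      ((volume : Measure 𝔼).prod (volume.restrict (Ioc (0:ℝ) 1))) := by
  have hm : Measurable (fun a : 𝔼 × ℝ => f (a.1 + a.2 • z)) :=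
    hfm.comp (by fun_prop)
  rw [integrable_prod_iff' hm.aestronglyMeasurable]
  constructor
  · exact Eventually.of_forall fun t => hf.comp_add_right (t • z)
  · have : (fun t : ℝ => ∫ y : 𝔼, ‖f (y + t • z)‖) = fun _ => ∫ y : 𝔼, ‖f y‖ := by
      funext t
      exact integral_add_right_eq_self (fun y => ‖f y‖) (t • z)
    simp only [this]
    exact integrable_const _

theorem exists_bound_fderiv_apply {φ : 𝔼 → ℝ} (hφ : ContDiff ℝ ∞ φ) (hc : HasCompactSupport φ)
    (e : 𝔼) : ∃ C, ∀ x, ‖fderiv ℝ φ x e‖ ≤ C := by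
  have h1 : Continuous fun x => fderiv ℝ φ x := hφ.continuous_fderiv (by simp)
  obtain ⟨C, hC⟩ := (hc.fderiv (𝕜 := ℝ)).exists_bound_of_continuous h1
  exact ⟨C * ‖e‖, fun x => ((fderiv ℝ φ x).le_opNorm e).trans
    (mul_le_mul_of_nonneg_right (hC x) (norm_nonneg _))⟩

theorem continuous_fderiv_apply_const {φ : 𝔼 → ℝ} (hφ : ContDiff ℝ ∞ φ) (e : 𝔼) :
    Continuous fun x => fderiv ℝ φ x e :=
  (hφ.continuous_fderiv (by simp)).clm_apply continuous_const

theorem integrable_mul_fderiv {μ : Measure 𝔼} {u : 𝔼 → ℝ} (hu : Integrable u μ) {φ : 𝔼 → ℝ}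
    (hφ : ContDiff ℝ ∞ φ) (hc : HasCompactSupport φ) (e : 𝔼) :
    Integrable (fun x => u x * fderiv ℝ φ x e) μ := by
  obtain ⟨C, hC⟩ := exists_bound_fderiv_apply hφ hc e
  exact hu.mul_bdd (c := C) (continuous_fderiv_apply_const hφ e).aestronglyMeasurable
    (Eventually.of_forall hC)

theorem integrable_test_mul {μ : Measure 𝔼} {u : 𝔼 → ℝ} (hu : Integrable u μ) {φ : 𝔼 → ℝ}
    (hφ : ContDiff ℝ ∞ φ) (hc : HasCompactSupport φ) :
    Integrable (fun x => φ x * u x) μ := by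
  obtain ⟨C, hC⟩ := hc.exists_bound_of_continuous hφ.continuous
  exact hu.bdd_mul hφ.continuous.aestronglyMeasurable (Eventually.of_forall hC)

/-- **Translation identity.** A Sobolev function satisfies the fundamental theorem of calculus
along almost every translate of a segment inside the domain. -/
theorem IsWeakGradient.ae_translate_sub {Ω W : Set 𝔼} {u : 𝔼 → ℝ} {g : 𝔼 → 𝔼}
    (hu : Integrable u) (hg : Integrable g)
    (hgm : Measurable g) (hu0 : ∀ x ∉ Ω, u x = 0) (hg0 : ∀ x ∉ Ω, g x = 0)
    (h : IsWeakGradient Ω u g) (hW : IsOpen W) {z : 𝔼}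
    (hz : ∀ y ∈ W, ∀ t ∈ Icc (0:ℝ) 1, y + t • z ∈ Ω) :
    ∀ᵐ y, y ∈ W → u (y + z) - u y = ∫ t in (0:ℝ)..1, ⟪g (y + t • z), z⟫ := by
  have hgz : Integrable (fun x => ⟪g x, z⟫) := hg.inner_const z
  have hgzm : Measurable (fun x => ⟪g x, z⟫) := hgm.inner_const
  have hprod := integrable_prod_comp_add_smul hgzm hgz z
  have hG : Integrable (fun y : 𝔼 => ∫ t in (0:ℝ)..1, ⟪g (y + t • z), z⟫) := by
    simp_rw [intervalIntegral.integral_of_le zero_le_one]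
    exact hprod.integral_prod_left
  have huz : Integrable (fun y => u (y + z)) := hu.comp_add_right z
  have hF := (huz.sub hu).sub hG
  have key := hW.ae_eq_zero_of_integral_contDiff_smul_eq_zero (μ := volume)
    (hF.locallyIntegrable.locallyIntegrableOn W) ?_
  · filter_upwards [key] with y hy hyW
    simpa [sub_eq_zero] using hy hyW
  intro φ hφ hc hsupp
  have e1 : ∫ y, φ y * u (y + z) = ∫ x, φ (x - z) * u x := by
    rw [← integral_add_right_eq_self (fun x => φ (x - z) * u x) z]
    simp
  have wk : ∀ t ∈ Icc (0:ℝ) 1, ∫ y, φ y * ⟪g (y + t • z), z⟫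
      = - ∫ x, u x * fderiv ℝ φ (x - t • z) z := by
    intro t ht
    have e2 : ∫ y, φ y * ⟪g (y + t • z), z⟫ = ∫ x, φ (x - t • z) * ⟪g x, z⟫ := by
      rw [← integral_add_right_eq_self (fun x => φ (x - t • z) * ⟪g x, z⟫) (t • z)]
      simp
    set ψ : 𝔼 → ℝ := fun x => φ (x - t • z) with hψ
    have hψs : ContDiff ℝ ∞ ψ := hφ.comp (contDiff_id.sub contDiff_const)
    have hψc : HasCompactSupport ψ := hc.comp_homeomorph (Homeomorph.subRight (t • z))
    have hψt : tsupport ψ ⊆ Ω := by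
      intro x hx
      have hx' : x - t • z ∈ tsupport φ :=
        tsupport_comp_subset_preimage φ (f := fun x : 𝔼 => x - t • z) (by fun_prop) hx
      simpa using hz _ (hsupp hx') t ht
    have := h ψ hψs hψc hψt z
    have hfd : ∀ x, fderiv ℝ ψ x z = fderiv ℝ φ (x - t • z) z := by
      intro x
      rw [hψ, fderiv_comp_sub]
    simp_rw [hfd] at this
    rw [setIntegral_eq_integral_of_forall_compl_eq_zero,
      setIntegral_eq_integral_of_forall_compl_eq_zero] at this
    · rw [e2, this, neg_neg]
    · intro x hx; simp [hg0 x hx]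
    · intro x hx; simp [hu0 x hx]
  have e3 : ∫ y, φ y * ∫ t in (0:ℝ)..1, ⟪g (y + t • z), z⟫
      = ∫ x, u x * (φ (x - z) - φ x) := by
    obtain ⟨C, hC⟩ := hc.exists_bound_of_continuous hφ.continuous
    obtain ⟨C', hC'⟩ := exists_bound_fderiv_apply hφ hc z
    simp_rw [intervalIntegral.integral_of_le zero_le_one, ← integral_const_mul]
    rw [integral_integral_swap]
    · rw [setIntegral_congr_fun measurableSet_Ioc
        (fun t ht => wk t ⟨ht.1.le, ht.2⟩), integral_neg]
      rw [← integral_integral_swap, ← integral_neg]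
      · congr 1
        funext x
        have := intervalIntegral.integral_eq_sub_of_hasDerivAt (a := 0) (b := 1)
          (f := fun t : ℝ => φ (x - t • z)) (f' := fun t => - fderiv ℝ φ (x - t • z) z)
          (fun t _ => by
            have h1 : HasDerivAt (fun t : ℝ => x - t • z) (-z) t := by
              simpa using ((hasDerivAt_id t).smul_const z).const_sub x
            have h2 := (hφ.differentiable (by simp) (x - t • z)).hasFDerivAt
            have h3 := h2.comp_hasDerivAt t h1
            rw [map_neg] at h3
            exact h3)
          (by
            apply Continuous.intervalIntegrable
            exact ((continuous_fderiv_apply_const hφ z).comp (by fun_prop)).neg)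
        rw [integral_const_mul, ← mul_neg, ← integral_neg,
          ← intervalIntegral.integral_of_le zero_le_one, this]
        simp
      · refine Integrable.mul_bdd (c := C') (hu.comp_fst _)
          (g := fun a : 𝔼 × ℝ => fderiv ℝ φ (a.1 - a.2 • z) z) ?_ ?_
        · have hcont : Continuous fun a : 𝔼 × ℝ => a.1 - a.2 • z := by fun_prop
          exact ((continuous_fderiv_apply_const hφ z).comp hcont).aestronglyMeasurable
        · exact Eventually.of_forall fun a => hC' _
    · exact hprod.bdd_mul (c := C) ((hφ.continuous.comp continuous_fst).aestronglyMeasurable)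
        (Eventually.of_forall fun a => hC a.1)
  have i1 : Integrable fun x => φ (x - z) * u x := by
    obtain ⟨C, hC⟩ := hc.exists_bound_of_continuous hφ.continuous
    exact hu.bdd_mul (hφ.continuous.comp (by fun_prop)).aestronglyMeasurable
      (Eventually.of_forall fun x => hC (x - z))
  have i2 := integrable_test_mul hu hφ hc
  have i1' := integrable_test_mul huz hφ hc
  have i3 := integrable_test_mul hG hφ hc
  have i12 : Integrable fun y => φ y * u (y + z) - φ y * u y := i1'.sub i2
  calc ∫ y, φ y • (u (y + z) - u y - ∫ t in (0:ℝ)..1, ⟪g (y + t • z), z⟫)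
      = ∫ y, (φ y * u (y + z) - φ y * u y - φ y * ∫ t in (0:ℝ)..1, ⟪g (y + t • z), z⟫) := by
        congr 1; funext y; simp only [smul_eq_mul]; ring
    _ = 0 := by
        rw [integral_sub i12 i3, integral_sub i1' i2, e1, e3, ← integral_sub i1 i2]
        rw [sub_eq_zero]
        congr 1; funext y; ring

/-- Translations are continuous in `L¹`. -/
theorem tendsto_integral_norm_translate_sub {F : Type*} [NormedAddCommGroup F]
    {g : 𝔼 → F} (hg : Integrable g) :
    Tendsto (fun z : 𝔼 => ∫ x, ‖g (x + z) - g x‖) (𝓝 0) (𝓝 0) := by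
  let T : 𝔼 → C(𝔼, 𝔼) := fun z => ⟨fun x => x + z, by fun_prop⟩
  have hT : Continuous T :=
    (ContinuousMap.curry ⟨fun a : 𝔼 × 𝔼 => a.2 + a.1, by fun_prop⟩).continuous
  have hmp : ∀ z, MeasurePreserving (T z) (volume : Measure 𝔼) volume :=
    fun z => measurePreserving_add_right volume z
  have hf := (tendsto_const_nhds (x := hg.toL1 g) (f := 𝓝 (0 : 𝔼))).compMeasurePreservingLp
    (hT.tendsto 0) hmp (hmp 0) ENNReal.one_ne_top
  have h0 := tendsto_iff_norm_sub_tendsto_zero.1 hf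
  refine h0.congr fun z => ?_
  rw [L1.norm_eq_integral_norm]
  refine integral_congr_ae ?_
  have key : ∀ z, (Lp.compMeasurePreserving (T z) (hmp z) (hg.toL1 g) : 𝔼 → F)
      =ᵐ[volume] fun x => g (x + z) := fun z =>
    (Lp.coeFn_compMeasurePreserving _ (hmp z)).trans
      ((hmp z).quasiMeasurePreserving.ae_eq_comp hg.coeFn_toL1)
  filter_upwards [key z, key 0, Lp.coeFn_sub
    (Lp.compMeasurePreserving (T z) (hmp z) (hg.toL1 g))
    (Lp.compMeasurePreserving (T 0) (hmp 0) (hg.toL1 g))] with x h1 h2 h3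
  rw [h3, Pi.sub_apply, h1, h2, add_zero]

/-- The averages of a function over shrinking segments converge in `L¹`. -/
theorem tendsto_integral_norm_segment_average_sub {f : 𝔼 → ℝ} (hfm : Measurable f)
    (hf : Integrable f) (e : 𝔼) :
    Tendsto (fun h : ℝ => ∫ y, ‖(∫ t in (0:ℝ)..1, f (y + t • (h • e))) - f y‖)
      (𝓝 0) (𝓝 0) := by
  have hω := tendsto_integral_norm_translate_sub hf
  rw [Metric.tendsto_nhds] at hω ⊢
  intro ε hε
  have h1 := hω (ε / 2) (by positivity)
  obtain ⟨δ, hδ, hδω⟩ := Metric.eventually_nhds_iff.1 h1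
  rw [Metric.eventually_nhds_iff]
  refine ⟨δ / (‖e‖ + 1), by positivity, fun h hh => ?_⟩
  rw [dist_zero_right] at hh
  have hsmall : ∀ t ∈ Ioc (0:ℝ) 1, ‖t • (h • e)‖ < δ := by
    intro t ht
    rw [norm_smul, norm_smul, Real.norm_of_nonneg ht.1.le]
    have : ‖h‖ * (‖e‖ + 1) < δ := (lt_div_iff₀ (by positivity)).1 hh
    nlinarith [norm_nonneg h, norm_nonneg e, ht.1, ht.2,
      mul_nonneg (norm_nonneg h) (norm_nonneg e)]
  have hprod : Integrable (fun a : 𝔼 × ℝ => f (a.1 + a.2 • (h • e)) - f a.1)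
      ((volume : Measure 𝔼).prod (volume.restrict (Ioc (0:ℝ) 1))) :=
    (integrable_prod_comp_add_smul hfm hf (h • e)).sub (hf.comp_fst _)
  have hle : ∫ y, ‖(∫ t in (0:ℝ)..1, f (y + t • (h • e))) - f y‖
      ≤ ∫ y, ∫ t in Ioc (0:ℝ) 1, ‖f (y + t • (h • e)) - f y‖ := by
    have hint : Integrable (fun y => ∫ t in (0:ℝ)..1, f (y + t • (h • e))) := by
      simp_rw [intervalIntegral.integral_of_le zero_le_one]
      exact (integrable_prod_comp_add_smul hfm hf (h • e)).integral_prod_left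
    refine integral_mono_ae (hint.sub hf).norm hprod.norm.integral_prod_left ?_
    filter_upwards [(integrable_prod_comp_add_smul hfm hf (h • e)).prod_right_ae] with y hy
    have : (∫ t in (0:ℝ)..1, f (y + t • (h • e))) - f y
        = ∫ t in Ioc (0:ℝ) 1, (f (y + t • (h • e)) - f y) := by
      rw [intervalIntegral.integral_of_le zero_le_one, integral_sub hy (integrable_const _)]
      simp
    rw [this]
    exact norm_integral_le_integral_norm _
  rw [integral_integral_swap (f := fun y t => ‖f (y + t • (h • e)) - f y‖) hprod.norm] at hle
  have hle2 : ∫ t in Ioc (0:ℝ) 1, ∫ y, ‖f (y + t • (h • e)) - f y‖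
      ≤ ∫ t in Ioc (0:ℝ) 1, ε / 2 := by
    refine setIntegral_mono_on hprod.norm.integral_prod_right (integrable_const _)
      measurableSet_Ioc fun t ht => ?_
    have := hδω (y := t • (h • e)) (by rw [dist_zero_right]; exact hsmall t ht)
    rw [dist_zero_right, Real.norm_eq_abs] at this
    exact (le_abs_self _).trans this.le
  have hc : ∫ t in Ioc (0:ℝ) 1, ε / 2 = ε / 2 := by simp
  rw [dist_zero_right, Real.norm_of_nonneg (integral_nonneg fun _ => norm_nonneg _)]
  linarith

/-- **Chain rule** for weak gradients: `F ∘ u` has weak gradient `F'(u) ∇u` when `F` is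
differentiable with bounded derivative within a convex set containing the values of `u`. -/
theorem IsWeakGradient.comp {Ω : Set 𝔼} {u : 𝔼 → ℝ} {g : 𝔼 → 𝔼} (hΩ : IsOpen Ω)
    (hu : Integrable u) (hg : Integrable g) (hum : Measurable u) (hgm : Measurable g)
    (hu0 : ∀ x ∉ Ω, u x = 0) (hg0 : ∀ x ∉ Ω, g x = 0) (h : IsWeakGradient Ω u g)
    {S : Set ℝ} {F F' : ℝ → ℝ} {L : ℝ} (hL0 : 0 ≤ L) (hS : ∀ x ∈ Ω, u x ∈ S)
    (hSc : Convex ℝ S) (hL : ∀ a ∈ S, |F' a| ≤ L)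
    (hd : ∀ a ∈ S, HasDerivWithinAt F (F' a) S a) (hFm : Measurable F) (hF'm : Measurable F')
    (hFi : IntegrableOn (fun x => F (u x)) Ω) :
    IsWeakGradient Ω (fun x => F (u x)) (fun x => F' (u x) • g x) := by
  have hlip : ∀ a ∈ S, ∀ b ∈ S, |F b - F a| ≤ L * |b - a| := fun a ha b hb =>
    hSc.norm_image_sub_le_of_norm_hasDerivWithin_le hd hL ha hb
  intro φ hφ hc hsupp e
  set K := tsupport φ with hK
  have hφ0 : ∀ x ∉ K, φ x = 0 := fun x hx => image_eq_zero_of_notMem_tsupport hx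
  obtain ⟨δ, hδ, hδΩ⟩ := hc.exists_thickening_subset_open hΩ hsupp
  set W := Metric.thickening (δ / 2) K with hWdef
  have hWo : IsOpen W := Metric.isOpen_thickening
  have hKW : K ⊆ W := Metric.self_subset_thickening (by positivity) K
  have hWΩ : ∀ y ∈ W, ∀ z : 𝔼, ‖z‖ < δ / 2 → y + z ∈ Ω := by
    intro y hy z hz
    apply hδΩ
    rw [hWdef, Metric.mem_thickening_iff] at hy
    obtain ⟨k, hk, hyk⟩ := hy
    rw [Metric.mem_thickening_iff]
    refine ⟨k, hk, ?_⟩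
    calc dist (y + z) k ≤ dist (y + z) y + dist y k := dist_triangle _ _ _
      _ < δ / 2 + δ / 2 := by rw [dist_self_add_left]; exact add_lt_add hz hyk
      _ = δ := by ring
  obtain ⟨Cφ, hCφ⟩ := hc.exists_bound_of_continuous hφ.continuous
  have hCφ0 : 0 ≤ Cφ := (norm_nonneg _).trans (hCφ 0)
  set η := δ / (2 * (‖e‖ + 1)) with hη
  have hη0 : 0 < η := by positivity
  set s : ℕ → ℝ := fun k => η / (k + 1) with hs
  have hs0 : ∀ k, 0 < s k := fun k => by positivity
  have hsη : ∀ k, s k ≤ η := fun k => by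
    apply div_le_self hη0.le
    have : (0:ℝ) ≤ k := by positivity
    linarith
  have hslim : Tendsto s atTop (𝓝 0) := by
    have := (tendsto_one_div_add_atTop_nhds_zero_nat (𝕜 := ℝ)).const_mul η
    simpa [hs, div_eq_mul_inv] using this
  have hsmall : ∀ k, ∀ t ∈ Icc (0:ℝ) 1, ‖t • (s k • e)‖ < δ / 2 := by
    intro k t ht
    rw [norm_smul, norm_smul, Real.norm_of_nonneg ht.1, Real.norm_of_nonneg (hs0 k).le]
    have h1 : s k * ‖e‖ < δ / 2 := by
      calc s k * ‖e‖ ≤ η * ‖e‖ := mul_le_mul_of_nonneg_right (hsη k) (norm_nonneg _)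
        _ < η * (‖e‖ + 1) := by nlinarith
        _ = δ / 2 := by rw [hη]; field_simp
    have h2 : 0 ≤ s k * ‖e‖ := mul_nonneg (hs0 k).le (norm_nonneg _)
    nlinarith [ht.1, ht.2]
  set G : 𝔼 → ℝ := fun x => ⟪g x, e⟫ with hG
  have hGm : Measurable G := hgm.inner_const
  have hGi : Integrable G := hg.inner_const e
  set Gk : ℕ → 𝔼 → ℝ := fun k y => ∫ t in (0:ℝ)..1, G (y + t • (s k • e)) with hGk
  have hGki : ∀ k, Integrable (Gk k) := fun k => by
    simp only [hGk, intervalIntegral.integral_of_le zero_le_one]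
    exact (integrable_prod_comp_add_smul hGm hGi (s k • e)).integral_prod_left
  have hGlim : Tendsto (fun k => ∫ y, ‖Gk k y - G y‖) atTop (𝓝 0) :=
    (tendsto_integral_norm_segment_average_sub hGm hGi e).comp hslim
  -- pass to a subsequence along which the averages converge almost everywhere
  obtain ⟨ns, hns, hae⟩ : ∃ ns : ℕ → ℕ, StrictMono ns ∧
      ∀ᵐ x, Tendsto (fun i => Gk (ns i) x) atTop (𝓝 (G x)) := by
    have : TendstoInMeasure volume Gk atTop G := by
      apply tendstoInMeasure_of_tendsto_eLpNorm one_ne_zero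
        (fun k => (hGki k).aestronglyMeasurable) hGi.aestronglyMeasurable
      have h1 : ∀ k, eLpNorm (Gk k - G) 1 volume = ENNReal.ofReal (∫ y, ‖Gk k y - G y‖) := by
        intro k
        rw [eLpNorm_one_eq_lintegral_enorm,
          ← ofReal_integral_norm_eq_lintegral_enorm ((hGki k).sub hGi)]
        rfl
      simp_rw [h1]
      simpa using ENNReal.tendsto_ofReal hGlim
    exact this.exists_seq_tendsto_ae
  have htrans : ∀ᵐ x, ∀ k, x ∈ W → u (x + s k • e) - u x = s k * Gk k x := by
    rw [ae_all_iff]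
    intro k
    have := h.ae_translate_sub hu hg hgm hu0 hg0 hWo (z := s k • e)
      (fun y hy t ht => hWΩ y hy _ (hsmall k t ht))
    filter_upwards [this] with x hx hxW
    rw [hx hxW, hGk, ← intervalIntegral.integral_const_mul]
    congr 1
    funext t
    rw [inner_smul_right]
  set FF : 𝔼 → ℝ := Ω.indicator (fun x => F (u x)) with hFF
  have hFFi : Integrable FF := (integrable_indicator_iff hΩ.measurableSet).2 hFi
  -- difference quotients of the test function
  have stepA : Tendsto (fun k => ∫ x, FF x * ((φ (x - s k • e) - φ x) / s k)) atTop
      (𝓝 (∫ x, FF x * (- fderiv ℝ φ x e))) := by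
    obtain ⟨C, hC⟩ := (hc.fderiv (𝕜 := ℝ)).exists_bound_of_continuous
      (hφ.continuous_fderiv (by simp))
    have hlipφ : ∀ x y, ‖φ y - φ x‖ ≤ C * ‖y - x‖ := fun x y =>
      Convex.norm_image_sub_le_of_norm_fderiv_le (s := univ)
        (fun z _ => hφ.differentiable (by simp) z) (fun z _ => hC z) convex_univ
        (mem_univ x) (mem_univ y)
    refine tendsto_integral_of_dominated_convergence (fun x => ‖FF x‖ * (C * ‖e‖)) ?_ ?_ ?_ ?_
    · intro k
      refine hFFi.aestronglyMeasurable.mul (Continuous.aestronglyMeasurable ?_)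
      have : Continuous fun x => φ (x - s k • e) := hφ.continuous.comp (by fun_prop)
      exact (this.sub hφ.continuous).div_const _
    · exact hFFi.norm.mul_const _
    · intro k
      refine Eventually.of_forall fun x => ?_
      rw [norm_mul]
      refine mul_le_mul_of_nonneg_left ?_ (norm_nonneg _)
      rw [norm_div, Real.norm_of_nonneg (hs0 k).le, div_le_iff₀ (hs0 k)]
      refine (hlipφ _ _).trans (le_of_eq ?_)
      rw [sub_sub_cancel_left, norm_neg, norm_smul, Real.norm_of_nonneg (hs0 k).le]
      ring
    · refine Eventually.of_forall fun x => Tendsto.const_mul _ ?_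
      have h1 : HasDerivAt (fun t : ℝ => φ (x - t • e)) (- fderiv ℝ φ x e) 0 := by
        have h1 : HasDerivAt (fun t : ℝ => x - t • e) (-e) 0 := by
          simpa using ((hasDerivAt_id (0:ℝ)).smul_const e).const_sub x
        have h2 : HasFDerivAt φ (fderiv ℝ φ x) (x - (0:ℝ) • e) := by
          simpa using (hφ.differentiable (by simp) x).hasFDerivAt
        have h3 := h2.comp_hasDerivAt (0:ℝ) h1
        rw [map_neg] at h3
        exact h3
      rw [hasDerivAt_iff_tendsto_slope] at h1
      have h2 : Tendsto s atTop (𝓝[≠] 0) :=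
        tendsto_nhdsWithin_iff.2 ⟨hslim, Eventually.of_forall fun k => (hs0 k).ne'⟩
      refine (h1.comp h2).congr fun k => ?_
      simp [slope_def_field]
  have stepB : ∀ k, ∫ x, FF x * ((φ (x - s k • e) - φ x) / s k)
      = ∫ x, φ x * ((FF (x + s k • e) - FF x) / s k) := by
    intro k
    have i1 : Integrable fun x => φ x * FF (x + s k • e) :=
      integrable_test_mul (hFFi.comp_add_right (s k • e)) hφ hc
    have i2 : Integrable fun x => φ x * FF x := integrable_test_mul hFFi hφ hc
    have i3 : Integrable fun x => φ (x - s k • e) * FF x := by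
      have := i1.comp_sub_right (s k • e)
      simpa using this
    have e1 : ∫ x, φ x * FF (x + s k • e) = ∫ x, φ (x - s k • e) * FF x := by
      rw [← integral_add_right_eq_self (fun x => φ (x - s k • e) * FF x) (s k • e)]
      simp
    calc ∫ x, FF x * ((φ (x - s k • e) - φ x) / s k)
        = ∫ x, (φ (x - s k • e) * FF x - φ x * FF x) / s k := by
          congr 1; funext x; ring
      _ = ∫ x, (φ x * FF (x + s k • e) - φ x * FF x) / s k := by
          rw [integral_div, integral_div, integral_sub i3 i2, integral_sub i1 i2, e1]
      _ = _ := by congr 1; funext x; ring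
  set q : ℕ → 𝔼 → ℝ := fun k x =>
    Function.update (slope F (u x)) (u x) (F' (u x)) (u (x + s k • e)) with hq
  have hqm : ∀ k, Measurable (q k) := by
    intro k
    have humk : Measurable fun x => u (x + s k • e) := hum.comp (by fun_prop)
    have : q k = fun x => if u (x + s k • e) = u x then F' (u x)
        else (F (u (x + s k • e)) - F (u x)) / (u (x + s k • e) - u x) := by
      funext x
      simp only [hq, Function.update_apply, slope_def_field]
    rw [this]
    exact Measurable.ite (measurableSet_eq_fun humk hum) (hF'm.comp hum)
      (((hFm.comp humk).sub (hFm.comp hum)).div (humk.sub hum))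
  have hKΩ : ∀ x ∈ K, ∀ k, x + s k • e ∈ Ω := fun x hx k => by
    simpa using hWΩ x (hKW hx) _ (hsmall k 1 ⟨zero_le_one, le_rfl⟩)
  have hqb : ∀ k x, ‖φ x * q k x‖ ≤ Cφ * L := by
    intro k x
    by_cases hx : x ∈ K
    · rw [norm_mul]
      refine mul_le_mul (hCφ x) ?_ (norm_nonneg _) hCφ0
      simp only [hq, Function.update_apply, slope_def_field]
      split_ifs with hux
      · exact hL _ (hS x (hsupp hx))
      · rw [Real.norm_eq_abs, abs_div, div_le_iff₀ (abs_pos.2 (sub_ne_zero.2 hux))]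
        exact hlip _ (hS x (hsupp hx)) _ (hS _ (hKΩ x hx k))
    · rw [hφ0 x hx, zero_mul, norm_zero]
      positivity
  have stepC1 : ∀ k, ∫ x, φ x * ((FF (x + s k • e) - FF x) / s k)
      = (∫ x, φ x * q k x * (Gk k x - G x)) + ∫ x, φ x * q k x * G x := by
    intro k
    have hm : AEStronglyMeasurable (fun x => φ x * q k x) volume :=
      (hφ.continuous.measurable.mul (hqm k)).aestronglyMeasurable
    rw [← integral_add]
    · refine integral_congr_ae ?_
      filter_upwards [htrans] with x hx
      by_cases hxK : x ∈ K
      · have hx1 := hx k (hKW hxK)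
        have e1 : FF (x + s k • e) = F (u (x + s k • e)) := indicator_of_mem (hKΩ x hxK k) _
        have e2 : FF x = F (u x) := indicator_of_mem (hsupp hxK) _
        have e3 : F (u (x + s k • e)) - F (u x) = q k x * (u (x + s k • e) - u x) := by
          simp only [hq, Function.update_apply, slope_def_field]
          split_ifs with hux
          · simp [hux]
          · rw [div_mul_cancel₀ _ (sub_ne_zero.2 hux)]
        rw [e1, e2, e3, hx1]
        have := (hs0 k).ne'
        field_simp
        ring
      · simp [hφ0 x hxK]
    · exact ((hGki k).sub hGi).bdd_mul hm (Eventually.of_forall (hqb k))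
    · exact hGi.bdd_mul hm (Eventually.of_forall (hqb k))
  have stepC2 : Tendsto (fun k => ∫ x, φ x * q k x * (Gk k x - G x)) atTop (𝓝 0) := by
    refine squeeze_zero_norm (fun k => ?_) (by simpa using hGlim.const_mul (Cφ * L))
    rw [← integral_const_mul]
    refine norm_integral_le_of_norm_le (((hGki k).sub hGi).norm.const_mul _) ?_
    refine Eventually.of_forall fun x => ?_
    rw [norm_mul]
    exact mul_le_mul_of_nonneg_right (hqb k x) (norm_nonneg _)
  have stepC3 : Tendsto (fun i => ∫ x, φ x * q (ns i) x * G x) atTop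
      (𝓝 (∫ x, φ x * F' (u x) * G x)) := by
    refine tendsto_integral_of_dominated_convergence (fun x => Cφ * L * ‖G x‖) ?_ ?_ ?_ ?_
    · intro i
      exact ((hφ.continuous.measurable.mul (hqm _)).mul hGm).aestronglyMeasurable
    · exact hGi.norm.const_mul _
    · intro i
      refine Eventually.of_forall fun x => ?_
      rw [norm_mul]
      exact mul_le_mul_of_nonneg_right (hqb _ x) (norm_nonneg _)
    · filter_upwards [htrans, hae] with x hx hx2
      by_cases hxK : x ∈ K
      · refine Tendsto.mul_const _ (Tendsto.const_mul _ ?_)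
        have hcw := (hasDerivWithinAt_iff_tendsto_slope.1 (hd _ (hS x (hsupp hxK))))
        rw [← continuousWithinAt_update_same] at hcw
        have hlim : Tendsto (fun i => u (x + s (ns i) • e)) atTop (𝓝[S] (u x)) := by
          rw [tendsto_nhdsWithin_iff]
          refine ⟨?_, Eventually.of_forall fun i => hS _ (hKΩ x hxK _)⟩
          have h1 : Tendsto (fun i => u x + s (ns i) * Gk (ns i) x) atTop
              (𝓝 (u x + 0 * G x)) :=
            ((hslim.comp hns.tendsto_atTop).mul hx2).const_add _
          rw [zero_mul, add_zero] at h1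
          refine h1.congr fun i => ?_
          rw [← hx _ (hKW hxK)]; ring
        have := hcw.tendsto.comp hlim
        rw [Function.update_self] at this
        exact this
      · simp [hφ0 x hxK]
  have lim1 : Tendsto (fun i => ∫ x, FF x * ((φ (x - s (ns i) • e) - φ x) / s (ns i))) atTop
      (𝓝 (0 + ∫ x, φ x * F' (u x) * G x)) := by
    refine ((stepC2.comp hns.tendsto_atTop).add stepC3).congr fun i => ?_
    rw [stepB, stepC1]; rfl
  have heq := tendsto_nhds_unique (stepA.comp hns.tendsto_atTop) lim1
  have l1 : ∫ x in Ω, F (u x) * fderiv ℝ φ x e = ∫ x, FF x * fderiv ℝ φ x e := by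
    rw [← integral_indicator hΩ.measurableSet]
    congr 1; funext x
    by_cases hx : x ∈ Ω <;> simp [hFF, hx]
  have l2 : ∫ x in Ω, φ x * ⟪F' (u x) • g x, e⟫ = ∫ x, φ x * F' (u x) * G x := by
    rw [setIntegral_eq_integral_of_forall_compl_eq_zero]
    · congr 1; funext x; rw [real_inner_smul_left]; ring
    · intro x hx; simp [hg0 x hx]
  rw [l1, l2]
  simp only [mul_neg, integral_neg, zero_add] at heq
  linarith

theorem IsWeakGradient.congr_ae {Ω : Set 𝔼} {u u' : 𝔼 → ℝ} {g g' : 𝔼 → 𝔼}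
    (h : IsWeakGradient Ω u g) (hu : u =ᵐ[volume.restrict Ω] u')
    (hg : g =ᵐ[volume.restrict Ω] g') : IsWeakGradient Ω u' g' := by
  intro φ hφ hc hs e
  have h1 : ∫ x in Ω, u' x * fderiv ℝ φ x e = ∫ x in Ω, u x * fderiv ℝ φ x e := by
    refine integral_congr_ae ?_
    filter_upwards [hu] with x hx
    rw [hx]
  have h2 : ∫ x in Ω, φ x * ⟪g' x, e⟫ = ∫ x in Ω, φ x * ⟪g x, e⟫ := by
    refine integral_congr_ae ?_
    filter_upwards [hg] with x hx
    rw [hx]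
  rw [h1, h2, h φ hφ hc hs e]

theorem IsWeakGradient.add {Ω : Set 𝔼} {u v : 𝔼 → ℝ} {g k : 𝔼 → 𝔼}
    (hu : IntegrableOn u Ω) (hg : IntegrableOn g Ω) (hv : IntegrableOn v Ω)
    (hk : IntegrableOn k Ω) (h : IsWeakGradient Ω u g) (h' : IsWeakGradient Ω v k) :
    IsWeakGradient Ω (fun x => u x + v x) (fun x => g x + k x) := by
  intro φ hφ hc hs e
  simp only [add_mul, inner_add_left, mul_add]
  rw [integral_add (integrable_mul_fderiv hu hφ hc e) (integrable_mul_fderiv hv hφ hc e),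
    integral_add (integrable_test_mul (hg.inner_const e) hφ hc)
      (integrable_test_mul (hk.inner_const e) hφ hc), h φ hφ hc hs e, h' φ hφ hc hs e]
  ring

theorem IsWeakGradient.const_mul {Ω : Set 𝔼} {u : 𝔼 → ℝ} {g : 𝔼 → 𝔼}
    (h : IsWeakGradient Ω u g) (c : ℝ) :
    IsWeakGradient Ω (fun x => c * u x) (fun x => c • g x) := by
  intro φ hφ hc hs e
  have h1 : ∀ x, c * u x * fderiv ℝ φ x e = c * (u x * fderiv ℝ φ x e) := fun x => by ring
  have h2 : ∀ x, φ x * ⟪c • g x, e⟫ = c * (φ x * ⟪g x, e⟫) := fun x => by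
    rw [real_inner_smul_left]; ring
  simp only [h1, h2, integral_const_mul, h φ hφ hc hs e, mul_neg]

/-- Weak gradients are stable under `L¹` convergence. -/
theorem IsWeakGradient.of_tendsto {Ω : Set 𝔼} {u : ℕ → 𝔼 → ℝ} {g : ℕ → 𝔼 → 𝔼}
    {v : 𝔼 → ℝ} {k : 𝔼 → 𝔼} (hu : ∀ i, IntegrableOn (u i) Ω) (hg : ∀ i, IntegrableOn (g i) Ω)
    (hv : IntegrableOn v Ω) (hk : IntegrableOn k Ω) (h : ∀ i, IsWeakGradient Ω (u i) (g i))
    (huv : Tendsto (fun i => eLpNorm (u i - v) 1 (volume.restrict Ω)) atTop (𝓝 0))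
    (hgk : Tendsto (fun i => eLpNorm (g i - k) 1 (volume.restrict Ω)) atTop (𝓝 0)) :
    IsWeakGradient Ω v k := by
  intro φ hφ hc hs e
  have lim1 : Tendsto (fun i => ∫ x in Ω, u i x * fderiv ℝ φ x e) atTop
      (𝓝 (∫ x in Ω, v x * fderiv ℝ φ x e)) := by
    obtain ⟨C, hC⟩ := exists_bound_fderiv_apply hφ hc e
    refine tendsto_integral_of_L1' _ (integrable_mul_fderiv hv hφ hc e).aestronglyMeasurable
      (Eventually.of_forall fun i => integrable_mul_fderiv (hu i) hφ hc e) ?_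
    refine tendsto_of_tendsto_of_tendsto_of_le_of_le tendsto_const_nhds
      (h := fun i => ENNReal.ofReal C * eLpNorm (u i - v) 1 (volume.restrict Ω)) ?_
      (fun _ => zero_le) fun i => ?_
    · simpa using ENNReal.Tendsto.const_mul huv (Or.inr ENNReal.ofReal_ne_top)
    · refine eLpNorm_le_mul_eLpNorm_of_ae_le_mul (Eventually.of_forall fun x => ?_) 1
      simp only [Pi.sub_apply, ← sub_mul, norm_mul]
      rw [mul_comm]
      exact mul_le_mul_of_nonneg_right (hC x) (norm_nonneg _)
  have lim2 : Tendsto (fun i => ∫ x in Ω, φ x * ⟪g i x, e⟫) atTop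
      (𝓝 (∫ x in Ω, φ x * ⟪k x, e⟫)) := by
    obtain ⟨C, hC⟩ := hc.exists_bound_of_continuous hφ.continuous
    refine tendsto_integral_of_L1' _
      (integrable_test_mul (hk.inner_const e) hφ hc).aestronglyMeasurable
      (Eventually.of_forall fun i => integrable_test_mul ((hg i).inner_const e) hφ hc) ?_
    refine tendsto_of_tendsto_of_tendsto_of_le_of_le tendsto_const_nhds
      (h := fun i => ENNReal.ofReal (C * ‖e‖) * eLpNorm (g i - k) 1 (volume.restrict Ω)) ?_
      (fun _ => zero_le) fun i => ?_
    · simpa using ENNReal.Tendsto.const_mul hgk (Or.inr ENNReal.ofReal_ne_top)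
    · refine eLpNorm_le_mul_eLpNorm_of_ae_le_mul (Eventually.of_forall fun x => ?_) 1
      simp only [Pi.sub_apply, ← mul_sub, ← inner_sub_left, norm_mul]
      calc ‖φ x‖ * ‖⟪g i x - k x, e⟫‖ ≤ C * (‖g i x - k x‖ * ‖e‖) :=
            mul_le_mul (hC x) (norm_inner_le_norm _ _) (norm_nonneg _)
              ((norm_nonneg _).trans (hC x))
        _ = _ := by ring
  have : (fun i => ∫ x in Ω, u i x * fderiv ℝ φ x e)
      = fun i => - ∫ x in Ω, φ x * ⟪g i x, e⟫ := funext fun i => h i φ hφ hc hs e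
  rw [this] at lim1
  exact tendsto_nhds_unique lim1 lim2.neg

/-- Product rule for a weak gradient and a smooth function. -/
theorem IsWeakGradient.smooth_mul {Ω : Set 𝔼} {u : 𝔼 → ℝ} {g : 𝔼 → 𝔼} {ψ : 𝔼 → ℝ}
    (hu : IntegrableOn u Ω) (hg : IntegrableOn g Ω) (h : IsWeakGradient Ω u g)
    (hψ : ContDiff ℝ ∞ ψ) :
    IsWeakGradient Ω (fun x => ψ x * u x) (fun x => ψ x • g x + u x • gradient ψ x) := by
  intro φ hφ hc hs e
  have hψφ : ContDiff ℝ ∞ fun x => ψ x * φ x := hψ.mul hφ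
  have hc' : HasCompactSupport fun x => ψ x * φ x := hc.mul_left
  have hs' : tsupport (fun x => ψ x * φ x) ⊆ Ω := (tsupport_mul_subset_right).trans hs
  have hfd : ∀ x, fderiv ℝ (fun x => ψ x * φ x) x e
      = ψ x * fderiv ℝ φ x e + φ x * fderiv ℝ ψ x e := by
    intro x
    rw [fderiv_fun_mul (hψ.differentiable (by simp) x) (hφ.differentiable (by simp) x)]
    simp
  have hw := h _ hψφ hc' hs' e
  have i1 : IntegrableOn (fun x => φ x * fderiv ℝ ψ x e * u x) Ω := by
    have hcont : Continuous fun x => φ x * fderiv ℝ ψ x e :=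
      hφ.continuous.mul (continuous_fderiv_apply_const hψ e)
    obtain ⟨C, hC⟩ := (hc.mul_right (f' := fun x => fderiv ℝ ψ x e)).exists_bound_of_continuous
      hcont
    exact Integrable.bdd_mul hu hcont.aestronglyMeasurable (Eventually.of_forall hC)
  have i2 : IntegrableOn (fun x => ψ x * φ x * ⟪g x, e⟫) Ω :=
    integrable_test_mul (hg.inner_const e) hψφ hc'
  have e1 : ∫ x in Ω, ψ x * u x * fderiv ℝ φ x e
      = (∫ x in Ω, u x * fderiv ℝ (fun x => ψ x * φ x) x e)
        - ∫ x in Ω, φ x * fderiv ℝ ψ x e * u x := by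
    rw [← integral_sub (integrable_mul_fderiv hu hψφ hc' e) i1]
    congr 1; funext x; rw [hfd]; ring
  have e2 : ∫ x in Ω, φ x * ⟪ψ x • g x + u x • gradient ψ x, e⟫
      = (∫ x in Ω, ψ x * φ x * ⟪g x, e⟫) + ∫ x in Ω, φ x * fderiv ℝ ψ x e * u x := by
    rw [← integral_add i2 i1]
    congr 1; funext x
    rw [inner_add_left, real_inner_smul_left, real_inner_smul_left, inner_gradient_left]
    ring
  rw [e1, e2, hw]
  ring

theorem isWeakGradient_const (Ω : Set 𝔼) (c : ℝ) :
    IsWeakGradient Ω (fun _ => c) (fun _ => 0) := by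
  intro φ hφ hc hs e
  rw [setIntegral_eq_integral_of_forall_compl_eq_zero]
  · have hi : Integrable fun x => fderiv ℝ φ x e :=
      (continuous_fderiv_apply_const hφ e).integrable_of_hasCompactSupport
        (hc.fderiv_apply (𝕜 := ℝ) e)
    have := integral_mul_fderiv_eq_neg_fderiv_mul_of_integrable (μ := (volume : Measure 𝔼))
      (f := fun _ : 𝔼 => c) (g := φ) (v := e) (by simp) (hi.const_mul c)
      ((hφ.continuous.integrable_of_hasCompactSupport hc).const_mul c)
      (fun x _ => differentiableAt_const c)
      (fun x _ => hφ.differentiable (by simp) x)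
    simpa using this
  · intro x hx
    have : x ∉ tsupport (fderiv ℝ φ) := fun h => hx (hs (tsupport_fderiv_subset ℝ h))
    rw [image_eq_zero_of_notMem_tsupport this]
    simp

/-- A pair `(u, g)` representing a Sobolev function and its gradient by Borel functions that
vanish outside the domain. -/
structure IsSobolevRep (Ω : Set 𝔼) (p : ℝ) (u : 𝔼 → ℝ) (g : 𝔼 → 𝔼) : Prop where
  memW1p : MemW1p Ω p u g
  measurable_fun : Measurable u
  measurable_grad : Measurable g
  fun_eq_zero : ∀ x ∉ Ω, u x = 0
  grad_eq_zero : ∀ x ∉ Ω, g x = 0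

theorem MemW1p.congr_ae {Ω : Set 𝔼} {p : ℝ} {u u' : 𝔼 → ℝ} {g g' : 𝔼 → 𝔼}
    (h : MemW1p Ω p u g) (hu : u =ᵐ[volume.restrict Ω] u')
    (hg : g =ᵐ[volume.restrict Ω] g') : MemW1p Ω p u' g' :=
  ⟨h.1.ae_eq hu, h.2.1.ae_eq hg, h.2.2.congr_ae hu hg⟩

theorem MemW1p.exists_rep {Ω : Set 𝔼} {p : ℝ} {u : 𝔼 → ℝ} {g : 𝔼 → 𝔼} (hΩ : MeasurableSet Ω)
    (h : MemW1p Ω p u g) : ∃ u' g', IsSobolevRep Ω p u' g' ∧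
      u =ᵐ[volume.restrict Ω] u' ∧ g =ᵐ[volume.restrict Ω] g' := by
  obtain ⟨hu, hg, hw⟩ := id h
  have e1 : u =ᵐ[volume.restrict Ω] Ω.indicator (hu.aestronglyMeasurable.mk u) :=
    hu.aestronglyMeasurable.ae_eq_mk.trans (indicator_ae_eq_restrict hΩ).symm
  have e2 : g =ᵐ[volume.restrict Ω] Ω.indicator (hg.aestronglyMeasurable.mk g) :=
    hg.aestronglyMeasurable.ae_eq_mk.trans (indicator_ae_eq_restrict hΩ).symm
  exact ⟨_, _, ⟨h.congr_ae e1 e2, hu.aestronglyMeasurable.measurable_mk.indicator hΩ,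
    hg.aestronglyMeasurable.measurable_mk.indicator hΩ, fun x hx => indicator_of_notMem hx _,
    fun x hx => indicator_of_notMem hx _⟩, e1, e2⟩

theorem MemW1p.integrableOn_fun {Ω : Set 𝔼} {p : ℝ} {u : 𝔼 → ℝ} {g : 𝔼 → 𝔼}
    [IsFiniteMeasure (volume.restrict Ω)] (hp : 1 ≤ p) (h : MemW1p Ω p u g) :
    IntegrableOn u Ω :=
  h.1.integrable (by simpa using ENNReal.ofReal_le_ofReal hp)

theorem MemW1p.integrableOn_grad {Ω : Set 𝔼} {p : ℝ} {u : 𝔼 → ℝ} {g : 𝔼 → 𝔼}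
    [IsFiniteMeasure (volume.restrict Ω)] (hp : 1 ≤ p) (h : MemW1p Ω p u g) :
    IntegrableOn g Ω :=
  h.2.1.integrable (by simpa using ENNReal.ofReal_le_ofReal hp)

theorem MemW1p.add {Ω : Set 𝔼} {p : ℝ} {u v : 𝔼 → ℝ} {g k : 𝔼 → 𝔼}
    [IsFiniteMeasure (volume.restrict Ω)] (hp : 1 ≤ p) (h : MemW1p Ω p u g)
    (h' : MemW1p Ω p v k) : MemW1p Ω p (fun x => u x + v x) (fun x => g x + k x) :=
  ⟨h.1.add h'.1, h.2.1.add h'.2.1, h.2.2.add (h.integrableOn_fun hp) (h.integrableOn_grad hp)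
    (h'.integrableOn_fun hp) (h'.integrableOn_grad hp) h'.2.2⟩

theorem MemW1p.const_mul {Ω : Set 𝔼} {p : ℝ} {u : 𝔼 → ℝ} {g : 𝔼 → 𝔼}
    (h : MemW1p Ω p u g) (c : ℝ) : MemW1p Ω p (fun x => c * u x) (fun x => c • g x) :=
  ⟨h.1.const_mul c, h.2.1.const_smul c, h.2.2.const_mul c⟩

theorem IsSobolevRep.integrable_fun {Ω : Set 𝔼} {p : ℝ} {u : 𝔼 → ℝ} {g : 𝔼 → 𝔼}
    [IsFiniteMeasure (volume.restrict Ω)] (hp : 1 ≤ p) (h : IsSobolevRep Ω p u g) :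
    Integrable u :=
  (integrableOn_iff_integrable_of_support_subset
    (fun x hx => by_contra fun hx' => hx (h.fun_eq_zero x hx'))).1 (h.memW1p.integrableOn_fun hp)

theorem IsSobolevRep.integrable_grad {Ω : Set 𝔼} {p : ℝ} {u : 𝔼 → ℝ} {g : 𝔼 → 𝔼}
    [IsFiniteMeasure (volume.restrict Ω)] (hp : 1 ≤ p) (h : IsSobolevRep Ω p u g) :
    Integrable g :=
  (integrableOn_iff_integrable_of_support_subset
    (fun x hx => by_contra fun hx' => hx (h.grad_eq_zero x hx'))).1 (h.memW1p.integrableOn_grad hp)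

/-- Chain rule in `W^{1,p}`. -/
theorem IsSobolevRep.comp {Ω : Set 𝔼} {p : ℝ} {u : 𝔼 → ℝ} {g : 𝔼 → 𝔼} (hΩ : IsOpen Ω)
    [IsFiniteMeasure (volume.restrict Ω)] (hp : 1 ≤ p) (h : IsSobolevRep Ω p u g)
    {S : Set ℝ} {F F' : ℝ → ℝ} {L : ℝ} (hL0 : 0 ≤ L) (hS : ∀ x ∈ Ω, u x ∈ S)
    (hSc : Convex ℝ S) (hL : ∀ a ∈ S, |F' a| ≤ L)
    (hd : ∀ a ∈ S, HasDerivWithinAt F (F' a) S a) (hFm : Measurable F) (hF'm : Measurable F') :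
    MemW1p Ω p (fun x => F (u x)) (fun x => F' (u x) • g x) := by
  have hFu : MemLp (fun x => F (u x)) (ENNReal.ofReal p) (volume.restrict Ω) := by
    rcases Ω.eq_empty_or_nonempty with rfl | ⟨x₀, hx₀⟩
    · simp
    have hb : MemLp (fun x => L * |u x| + (|F (u x₀)| + L * |u x₀|)) (ENNReal.ofReal p)
        (volume.restrict Ω) :=
      (h.memW1p.1.abs.const_mul L).add (memLp_const (|F (u x₀)| + L * |u x₀|))
    refine hb.mono (hFm.comp h.measurable_fun).aestronglyMeasurable ?_
    refine (ae_restrict_iff' hΩ.measurableSet).2 (Eventually.of_forall fun x hx => ?_)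
    have h1 := hSc.norm_image_sub_le_of_norm_hasDerivWithin_le hd hL (hS x₀ hx₀) (hS x hx)
    simp only [Real.norm_eq_abs] at h1 ⊢
    have h2 : |F (u x)| ≤ |F (u x) - F (u x₀)| + |F (u x₀)| := by
      simpa using abs_add_le (F (u x) - F (u x₀)) (F (u x₀))
    have h3 : |u x - u x₀| ≤ |u x| + |u x₀| := abs_sub _ _
    refine le_trans ?_ (le_abs_self _)
    nlinarith
  refine ⟨hFu, ?_, ?_⟩
  · refine (h.memW1p.2.1.norm.const_mul L).mono
      ((hF'm.comp h.measurable_fun).smul h.measurable_grad).aestronglyMeasurable ?_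
    refine (ae_restrict_iff' hΩ.measurableSet).2 (Eventually.of_forall fun x hx => ?_)
    rw [norm_smul, norm_mul, norm_norm, Real.norm_of_nonneg hL0]
    exact mul_le_mul_of_nonneg_right (hL _ (hS x hx)) (norm_nonneg _)
  · exact h.memW1p.2.2.comp hΩ (h.integrable_fun hp) (h.integrable_grad hp) h.measurable_fun
      h.measurable_grad h.fun_eq_zero h.grad_eq_zero hL0 hS hSc hL hd hFm hF'm
      (hFu.integrable (by simpa using ENNReal.ofReal_le_ofReal hp))

/-- The absolute value of a Sobolev function is a Sobolev function. -/
theorem IsSobolevRep.abs {Ω : Set 𝔼} {p : ℝ} {u : 𝔼 → ℝ} {g : 𝔼 → 𝔼} (hΩ : IsOpen Ω)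
    [IsFiniteMeasure (volume.restrict Ω)] (hp : 1 ≤ p) (h : IsSobolevRep Ω p u g) :
    IsSobolevRep Ω p (fun x => |u x|) (fun x => (u x / |u x|) • g x) := by
  have hum := h.measurable_fun
  have hgm := h.measurable_grad
  have hquot : ∀ a : ℝ, |(a / |a|)| ≤ 1 := fun a => by
    rw [abs_div, abs_abs]; exact div_self_le_one _
  have hm : Measurable fun x => (u x / |u x|) • g x := by fun_prop
  have hmem : MemLp (fun x => (u x / |u x|) • g x) (ENNReal.ofReal p) (volume.restrict Ω) := by
    refine h.memW1p.2.1.mono hm.aestronglyMeasurable (Eventually.of_forall fun x => ?_)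
    rw [norm_smul]
    exact mul_le_of_le_one_left (norm_nonneg _) (hquot _)
  have hp1 : 1 ≤ ENNReal.ofReal p := by simpa using ENNReal.ofReal_le_ofReal hp
  refine ⟨⟨h.memW1p.1.abs, hmem, ?_⟩, by fun_prop, hm, fun x hx => by simp [h.fun_eq_zero x hx],
    fun x hx => by simp [h.grad_eq_zero x hx]⟩
  set ε : ℕ → ℝ := fun k => 1 / ((k : ℝ) + 1) with hε
  have hε0 : ∀ k, 0 < ε k := fun k => by positivity
  have hεlim : Tendsto ε atTop (𝓝 0) := tendsto_one_div_add_atTop_nhds_zero_nat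
  have hpos : ∀ k (a : ℝ), 0 < a ^ 2 + ε k ^ 2 := fun k a => by
    have := hε0 k; positivity
  have hcomp : ∀ k, MemW1p Ω p (fun x => √(u x ^ 2 + ε k ^ 2))
      (fun x => (u x / √(u x ^ 2 + ε k ^ 2)) • g x) := by
    intro k
    refine h.comp hΩ hp (S := univ) (F := fun a => √(a ^ 2 + ε k ^ 2))
      (F' := fun a => a / √(a ^ 2 + ε k ^ 2)) (L := 1) zero_le_one (fun _ _ => mem_univ _)
      convex_univ ?_ ?_ (by fun_prop) (by fun_prop)
    · intro a _
      rw [abs_div, abs_of_nonneg (Real.sqrt_nonneg _)]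
      refine div_le_one_of_le₀ (Real.abs_le_sqrt ?_) (Real.sqrt_nonneg _)
      have := sq_nonneg (ε k); linarith
    · intro a _
      have h1 : HasDerivAt (fun a : ℝ => a ^ 2 + ε k ^ 2) (2 * a) a := by
        simpa using (hasDerivAt_pow 2 a).add_const (ε k ^ 2)
      have h2 := h1.sqrt (hpos k a).ne'
      refine (h2.congr_deriv ?_).hasDerivWithinAt
      rw [mul_div_mul_left _ _ two_ne_zero]
  have hsq : ∀ k (a : ℝ), ‖√(a ^ 2 + ε k ^ 2) - |a|‖ ≤ ε k := by
    intro k a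
    have h1 : |a| ≤ √(a ^ 2 + ε k ^ 2) := Real.abs_le_sqrt (by have := sq_nonneg (ε k); linarith)
    have h2 : √(a ^ 2 + ε k ^ 2) ≤ |a| + ε k := by
      refine Real.sqrt_le_iff.2 ⟨by have := hε0 k; positivity, ?_⟩
      have := mul_nonneg (abs_nonneg a) (hε0 k).le
      nlinarith [sq_abs a]
    rw [Real.norm_eq_abs, abs_of_nonneg (by linarith)]
    linarith
  refine IsWeakGradient.of_tendsto (fun k => (hcomp k).integrableOn_fun hp)
    (fun k => (hcomp k).integrableOn_grad hp) (h.memW1p.1.abs.integrable hp1)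
    (hmem.integrable hp1) (fun k => (hcomp k).2.2) ?_ ?_
  · refine tendsto_of_tendsto_of_tendsto_of_le_of_le tendsto_const_nhds
      (h := fun k => (volume.restrict Ω) univ ^ (1 : ℝ≥0∞).toReal⁻¹ * ENNReal.ofReal (ε k)) ?_
      (fun _ => zero_le) fun k => ?_
    · have h1 := ENNReal.Tendsto.const_mul (ENNReal.tendsto_ofReal hεlim)
        (a := (volume.restrict Ω) univ ^ (1 : ℝ≥0∞).toReal⁻¹)
        (Or.inr (ENNReal.rpow_ne_top_of_nonneg (by simp) (measure_ne_top _ _)))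
      simpa using h1
    · exact eLpNorm_le_of_ae_bound (Eventually.of_forall fun x => hsq k (u x))
  · have hconv : Tendsto (fun k => ∫⁻ x in Ω,
        ‖(u x / √(u x ^ 2 + ε k ^ 2)) • g x - (u x / |u x|) • g x‖ₑ) atTop
        (𝓝 (∫⁻ x in Ω, 0)) := by
      refine tendsto_lintegral_of_dominated_convergence (fun x => 2 * ‖g x‖ₑ) ?_ ?_ ?_ ?_
      · intro k
        exact Measurable.enorm (by fun_prop)
      · intro k
        refine Eventually.of_forall fun x => ?_
        have h1 : ∀ c : ℝ, |c| ≤ 1 → ‖c • g x‖ₑ ≤ ‖g x‖ₑ := by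
          intro c hc
          rw [enorm_smul]
          refine mul_le_of_le_one_left zero_le ?_
          rw [Real.enorm_eq_ofReal_abs]
          simpa using ENNReal.ofReal_le_ofReal hc
        refine (enorm_sub_le).trans ?_
        simp only [two_mul]
        refine add_le_add (h1 _ ?_) (h1 _ (hquot _))
        rw [abs_div, abs_of_nonneg (Real.sqrt_nonneg _)]
        refine div_le_one_of_le₀ (Real.abs_le_sqrt ?_) (Real.sqrt_nonneg _)
        have := sq_nonneg (ε k); linarith
      · rw [lintegral_const_mul' _ _ (by simp)]
        exact ENNReal.mul_ne_top (by simp) (h.memW1p.integrableOn_grad hp).2.ne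
      · refine Eventually.of_forall fun x => ?_
        rw [← enorm_zero (E := 𝔼)]
        refine (continuous_enorm.tendsto _).comp ?_
        rw [← sub_self ((u x / |u x|) • g x)]
        refine Tendsto.sub_const (Tendsto.smul_const ?_ _) _
        by_cases hux : u x = 0
        · simp [hux]
        · refine Tendsto.div tendsto_const_nhds ?_ (abs_ne_zero.2 hux)
          have h1 : Tendsto (fun k => √(u x ^ 2 + ε k ^ 2)) atTop (𝓝 (√(u x ^ 2 + 0 ^ 2))) :=
            (Real.continuous_sqrt.tendsto _).comp ((hεlim.pow 2).const_add _)
          simpa [Real.sqrt_sq_eq_abs] using h1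
    simp only [lintegral_zero] at hconv
    simpa only [eLpNorm_one_eq_lintegral_enorm, Pi.sub_apply] using hconv

theorem lintegral_translate_segment (k : 𝔼 → ℝ≥0∞) (hk : Measurable k) (z : 𝔼) :
    ∫⁻ y, ∫⁻ t in Ioc (0:ℝ) 1, k (y + t • z) = ∫⁻ y, k y := by
  rw [lintegral_lintegral_swap]
  · simp_rw [lintegral_add_right_eq_self (μ := (volume : Measure 𝔼)) k]
    simp
  · exact (hk.comp (by fun_prop)).aemeasurable

/-- `L¹` bound for the increments of a Sobolev function inside a convex set. -/
theorem IsSobolevRep.lintegral_translate_sub_le {Ω W : Set 𝔼} {p : ℝ} {u : 𝔼 → ℝ} {g : 𝔼 → 𝔼}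
    [IsFiniteMeasure (volume.restrict Ω)] (hp : 1 ≤ p) (h : IsSobolevRep Ω p u g)
    (hW : IsOpen W) (hWc : Convex ℝ W) (hWΩ : W ⊆ Ω) (z : 𝔼) :
    ∫⁻ y in {y | y ∈ W ∧ y + z ∈ W}, ‖u (y + z) - u y‖ₑ ≤ ‖z‖ₑ * ∫⁻ y in W, ‖g y‖ₑ := by
  have hVo : IsOpen {y | y ∈ W ∧ y + z ∈ W} := hW.inter (hW.preimage (by fun_prop))
  have hseg : ∀ y ∈ {y | y ∈ W ∧ y + z ∈ W}, ∀ t ∈ Icc (0:ℝ) 1, y + t • z ∈ W := by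
    intro y hy t ht
    have := hWc.add_smul_sub_mem hy.1 hy.2 ht
    simpa using this
  have hid := h.memW1p.2.2.ae_translate_sub (h.integrable_fun hp) (h.integrable_grad hp)
    h.measurable_grad h.fun_eq_zero h.grad_eq_zero hVo (z := z)
    (fun y hy t ht => hWΩ (hseg y hy t ht))
  have hkm : Measurable (W.indicator fun x => ‖g x‖ₑ) :=
    h.measurable_grad.enorm.indicator hW.measurableSet
  calc ∫⁻ y in {y | y ∈ W ∧ y + z ∈ W}, ‖u (y + z) - u y‖ₑ
      ≤ ∫⁻ y in {y | y ∈ W ∧ y + z ∈ W}, ‖z‖ₑ *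
          ∫⁻ t in Ioc (0:ℝ) 1, W.indicator (fun x => ‖g x‖ₑ) (y + t • z) := by
        refine lintegral_mono_ae ?_
        filter_upwards [ae_restrict_of_ae hid, ae_restrict_mem hVo.measurableSet] with y hy hyV
        rw [hy hyV, intervalIntegral.integral_of_le zero_le_one]
        refine (enorm_integral_le_lintegral_enorm _).trans ?_
        rw [← lintegral_const_mul' _ _ enorm_ne_top]
        refine setLIntegral_mono' measurableSet_Ioc fun t ht => ?_
        rw [indicator_of_mem (hseg y hyV t ⟨ht.1.le, ht.2⟩)]
        rw [← ofReal_norm, ← ofReal_norm, ← ofReal_norm,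
          ← ENNReal.ofReal_mul (norm_nonneg _), mul_comm]
        exact ENNReal.ofReal_le_ofReal (norm_inner_le_norm _ _)
    _ ≤ ∫⁻ y, ‖z‖ₑ * ∫⁻ t in Ioc (0:ℝ) 1, W.indicator (fun x => ‖g x‖ₑ) (y + t • z) :=
        setLIntegral_le_lintegral _ _
    _ = ‖z‖ₑ * ∫⁻ y in W, ‖g y‖ₑ := by
        rw [lintegral_const_mul', lintegral_translate_segment _ hkm,
          lintegral_indicator hW.measurableSet]
        simp

/-- A Poincaré inequality for functions vanishing on a subset of a ball. -/
theorem IsSobolevRep.measure_mul_lintegral_le {Ω Z : Set 𝔼} {p r : ℝ} {u : 𝔼 → ℝ} {g : 𝔼 → 𝔼}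
    [IsFiniteMeasure (volume.restrict Ω)] (hp : 1 ≤ p) (h : IsSobolevRep Ω p u g)
    {x₀ : 𝔼} (hW : Metric.ball x₀ r ⊆ Ω) (hZm : MeasurableSet Z)
    (hZW : Z ⊆ Metric.ball x₀ r) (hZ : ∀ x ∈ Z, u x = 0) :
    volume Z * ∫⁻ x in Metric.ball x₀ r, ‖u x‖ₑ ≤
      volume (Metric.ball (0 : 𝔼) (2 * r)) *
        (ENNReal.ofReal (2 * r) * ∫⁻ x in Metric.ball x₀ r, ‖g x‖ₑ) := by
  set W := Metric.ball x₀ r with hWdef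
  have hWm : MeasurableSet W := Metric.isOpen_ball.measurableSet
  set U : 𝔼 → ℝ≥0∞ := W.indicator fun x => ‖u x‖ₑ with hU
  have hUm : Measurable U := h.measurable_fun.enorm.indicator hWm
  have hbig : ∀ y z : 𝔼, y ∈ W → y + z ∈ W → z ∈ Metric.ball (0 : 𝔼) (2 * r) := by
    intro y z hy hz
    rw [hWdef, Metric.mem_ball] at hy hz
    rw [mem_ball_zero_iff]
    have : ‖z‖ = dist (y + z) y := by simp
    rw [this]
    calc dist (y + z) y ≤ dist (y + z) x₀ + dist x₀ y := dist_triangle _ _ _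
      _ < r + r := add_lt_add hz (by rwa [dist_comm])
      _ = 2 * r := by ring
  calc volume Z * ∫⁻ x in W, ‖u x‖ₑ
      = ∫⁻ y in Z, ∫⁻ z, U (y + z) := by
        simp_rw [lintegral_add_left_eq_self (μ := (volume : Measure 𝔼)) U]
        rw [setLIntegral_const, hU, lintegral_indicator hWm, mul_comm]
    _ = ∫⁻ z, ∫⁻ y in Z, U (y + z) := by
        rw [lintegral_lintegral_swap]
        exact (hUm.comp (by fun_prop)).aemeasurable
    _ ≤ ∫⁻ z, (Metric.ball (0 : 𝔼) (2 * r)).indicator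
          (fun _ => ENNReal.ofReal (2 * r) * ∫⁻ x in W, ‖g x‖ₑ) z := by
        refine lintegral_mono fun z => ?_
        by_cases hz : z ∈ Metric.ball (0 : 𝔼) (2 * r)
        · rw [indicator_of_mem hz]
          have hVm : MeasurableSet {y | y ∈ W ∧ y + z ∈ W} :=
            hWm.inter ((measurable_add_const z) hWm)
          calc ∫⁻ y in Z, U (y + z)
              ≤ ∫⁻ y in {y | y ∈ W ∧ y + z ∈ W}, ‖u (y + z) - u y‖ₑ := by
                rw [← lintegral_indicator hZm, ← lintegral_indicator hVm]
                refine lintegral_mono fun y => ?_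
                by_cases hy : y ∈ Z
                · rw [indicator_of_mem hy]
                  by_cases hyz : y + z ∈ W
                  · rw [indicator_of_mem (show y ∈ {y | y ∈ W ∧ y + z ∈ W} from ⟨hZW hy, hyz⟩),
                      hU, indicator_of_mem hyz, hZ y hy, sub_zero]
                  · rw [hU, indicator_of_notMem hyz]; exact zero_le
                · rw [indicator_of_notMem hy]; exact zero_le
            _ ≤ ‖z‖ₑ * ∫⁻ y in W, ‖g y‖ₑ :=
                h.lintegral_translate_sub_le hp Metric.isOpen_ball (convex_ball x₀ r) hW z
            _ ≤ _ := by
                refine mul_le_mul_left ?_ _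
                rw [← ofReal_norm]
                exact ENNReal.ofReal_le_ofReal (mem_ball_zero_iff.1 hz).le
        · rw [indicator_of_notMem hz]
          refine le_of_eq (setLIntegral_eq_zero hZm fun y hy => ?_)
          exact indicator_of_notMem (fun hyz => hz (hbig y z (hZW hy) hyz)) _
    _ = _ := by
        rw [lintegral_indicator Metric.isOpen_ball.measurableSet, setLIntegral_const, mul_comm]

/-- Multiplication by a test function in `W^{1,p}`. -/
theorem MemW1p.smooth_mul {Ω : Set 𝔼} {p : ℝ} {u : 𝔼 → ℝ} {g : 𝔼 → 𝔼} {ψ : 𝔼 → ℝ}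
    [IsFiniteMeasure (volume.restrict Ω)] (hp : 1 ≤ p) (h : MemW1p Ω p u g)
    (hψ : ContDiff ℝ ∞ ψ) (hc : HasCompactSupport ψ) :
    MemW1p Ω p (fun x => ψ x * u x) (fun x => ψ x • g x + u x • gradient ψ x) := by
  obtain ⟨C, hC⟩ := hc.exists_bound_of_continuous hψ.continuous
  obtain ⟨C', hC'⟩ := (hc.fderiv (𝕜 := ℝ)).exists_bound_of_continuous
    (hψ.continuous_fderiv (by simp))
  have hgn : ∀ x, ‖gradient ψ x‖ ≤ C' := fun x => by
    rw [gradient, LinearIsometryEquiv.norm_map]; exact hC' x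
  have hgc : Continuous (gradient ψ) :=
    (InnerProductSpace.toDual ℝ 𝔼).symm.continuous.comp (hψ.continuous_fderiv (by simp))
  refine ⟨?_, MemLp.add ?_ ?_, h.2.2.smooth_mul (h.integrableOn_fun hp) (h.integrableOn_grad hp) hψ⟩
  · refine (h.1.norm.const_mul C).mono
      (hψ.continuous.aestronglyMeasurable.mul h.1.aestronglyMeasurable)
      (Eventually.of_forall fun x => ?_)
    rw [norm_mul, norm_mul, norm_norm]
    exact mul_le_mul_of_nonneg_right ((hC x).trans (Real.le_norm_self C)) (norm_nonneg _)
  · refine (h.2.1.norm.const_mul C).mono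
      (hψ.continuous.aestronglyMeasurable.smul h.2.1.aestronglyMeasurable)
      (Eventually.of_forall fun x => ?_)
    rw [norm_smul, norm_mul, norm_norm]
    exact mul_le_mul_of_nonneg_right ((hC x).trans (Real.le_norm_self C)) (norm_nonneg _)
  · refine (h.1.norm.const_mul C').mono
      (h.1.aestronglyMeasurable.smul hgc.aestronglyMeasurable)
      (Eventually.of_forall fun x => ?_)
    rw [norm_smul, norm_mul, norm_norm, mul_comm]
    exact mul_le_mul_of_nonneg_right ((hgn x).trans (Real.le_norm_self C')) (norm_nonneg _)

theorem rpow_le_rpow_add_mul {p v w : ℝ} (hp : 1 ≤ p) (hv : 0 ≤ v) (hvw : v ≤ w) :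
    w ^ p ≤ v ^ p + p * (w - v) * w ^ (p - 1) := by
  rcases (hv.trans hvw).eq_or_lt with hw | hw
  · have hv0 : v = 0 := le_antisymm (hw ▸ hvw) hv
    simp [← hw, hv0]
  · have h1 := one_add_mul_self_le_rpow_one_add (s := v / w - 1) (by
      have : 0 ≤ v / w := by positivity
      linarith) hp
    rw [add_sub_cancel, Real.div_rpow hv hw.le, le_div_iff₀ (by positivity)] at h1
    have h2 : w ^ p = w * w ^ (p - 1) := by
      rw [← Real.rpow_one_add' hw.le (by linarith)]; congr 1; ring
    have h3 : (1 + p * (v / w - 1)) * w ^ p = w ^ p + p * (v - w) * w ^ (p - 1) := by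
      rw [h2]; field_simp
    rw [h3] at h1
    linarith

theorem norm_convex_combination_rpow_le {F : Type*} [NormedAddCommGroup F] [NormedSpace ℝ F]
    {p θ : ℝ} (hp : 1 ≤ p) (h0 : 0 ≤ θ) (h1 : θ ≤ 1) (a b : F) :
    ‖(1 - θ) • a + θ • b‖ ^ p ≤ (1 - θ) * ‖a‖ ^ p + θ * ‖b‖ ^ p := by
  have h2 : ‖(1 - θ) • a + θ • b‖ ≤ (1 - θ) * ‖a‖ + θ * ‖b‖ := by
    refine (norm_add_le _ _).trans (le_of_eq ?_)
    rw [norm_smul, norm_smul, Real.norm_of_nonneg h0, Real.norm_of_nonneg (by linarith)]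
  refine (Real.rpow_le_rpow (norm_nonneg _) h2 (by linarith)).trans ?_
  exact (convexOn_rpow hp).2 (norm_nonneg a) (norm_nonneg b) (by linarith) h0 (by ring)

/-- Pointwise estimate behind the logarithmic energy inequality. -/
theorem log_competitor_pointwise {F : Type*} [NormedAddCommGroup F] [NormedSpace ℝ F]
    {p δ D v ψ : ℝ} (hp : 1 < p) (hD : 0 ≤ D) (hδ : 0 < δ) (hv : 0 ≤ v) (hψ0 : 0 ≤ ψ) (hψ1 : ψ ≤ 1)
    (g k : F) (hk : ‖k‖ ^ p ≤ D * ψ ^ (p - 1)) :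
    ‖g + (δ ^ p / p) • (ψ • (((1 - p) * (v + δ) ^ (-p)) • g) + (v + δ) ^ (1 - p) • k)‖ ^ p
      + (v + δ ^ p / p * (ψ * (v + δ) ^ (1 - p))) ^ p
      ≤ ‖g‖ ^ p + v ^ p - (δ ^ p / p) * (p - 1) * (ψ * (v + δ) ^ (-p) * ‖g‖ ^ p)
        + (δ ^ p / p) * ((p - 1) ^ (1 - p) * D + p) := by
  have hp0 : 0 < p := by linarith
  have hp1 : 0 < p - 1 := by linarith
  have hvδ : 0 < v + δ := by linarith
  set ε := δ ^ p / p with hε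
  have hε0 : 0 < ε := by positivity
  have hεδ : ε ≤ δ ^ p := div_le_self (by positivity) hp.le
  have hφ0 : 0 ≤ ψ * (v + δ) ^ (1 - p) := by positivity
  have hneg : (v + δ) ^ (-p) ≤ δ ^ (-p) :=
    Real.rpow_le_rpow_of_nonpos hδ (by linarith) (by linarith)
  have hε1 : ε * δ ^ (-p) = 1 / p := by
    rw [hε, div_mul_eq_mul_div, ← Real.rpow_add hδ, add_neg_cancel, Real.rpow_zero]
  set θ := ε * (p - 1) * (ψ * (v + δ) ^ (-p)) with hθ
  have hθ0 : 0 ≤ θ := by positivity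
  have hθ1 : θ ≤ 1 := by
    calc θ ≤ ε * (p - 1) * (1 * δ ^ (-p)) := by
          rw [hθ]; gcongr
      _ = (p - 1) * (ε * δ ^ (-p)) := by ring
      _ = (p - 1) / p := by rw [hε1]; ring
      _ ≤ 1 := by rw [div_le_one hp0]; linarith
  -- the gradient part
  have hgrad : ‖g + ε • (ψ • (((1 - p) * (v + δ) ^ (-p)) • g) + (v + δ) ^ (1 - p) • k)‖ ^ p
      ≤ (1 - θ) * ‖g‖ ^ p + ε * ((p - 1) ^ (1 - p) * D) := by
    rcases hψ0.eq_or_lt with h0 | h0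
    · have hk0 : k = 0 := by
        rw [← h0, Real.zero_rpow hp1.ne', mul_zero] at hk
        by_contra hne
        have : 0 < ‖k‖ ^ p := Real.rpow_pos_of_pos (norm_pos_iff.2 hne) p
        linarith
      simp only [hk0, ← h0, hθ, zero_smul, smul_zero, add_zero, zero_mul, mul_zero, sub_zero,
        one_mul]
      have : 0 ≤ ε * ((p - 1) ^ (1 - p) * D) := by positivity
      linarith
    · set b : F := ((v + δ) / ((p - 1) * ψ)) • k with hb
      have hsplit : g + ε • (ψ • (((1 - p) * (v + δ) ^ (-p)) • g) + (v + δ) ^ (1 - p) • k)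
          = (1 - θ) • g + θ • b := by
        have h1 : (v + δ) ^ (1 - p) = (v + δ) * (v + δ) ^ (-p) := by
          rw [sub_eq_add_neg, Real.rpow_add hvδ, Real.rpow_one]
        have h2 : θ * ((v + δ) / ((p - 1) * ψ)) = ε * (v + δ) ^ (1 - p) := by
          rw [hθ, h1]; field_simp
        rw [hb, smul_smul θ, h2, hθ]
        module
      rw [hsplit]
      refine (norm_convex_combination_rpow_le hp.le hθ0 hθ1 g b).trans ?_
      refine add_le_add le_rfl ?_
      have hnb : ‖b‖ ^ p = (v + δ) ^ p * ((p - 1) ^ (-p) * ψ ^ (-p)) * ‖k‖ ^ p := by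
        rw [hb, norm_smul, Real.norm_of_nonneg (by positivity),
          Real.mul_rpow (by positivity) (norm_nonneg _), Real.div_rpow hvδ.le (by positivity),
          Real.mul_rpow hp1.le h0.le, Real.rpow_neg hp1.le, Real.rpow_neg h0.le]
        field_simp
      have e1 : (v + δ) ^ (-p) * (v + δ) ^ p = 1 := by
        rw [← Real.rpow_add hvδ, neg_add_cancel, Real.rpow_zero]
      have e2 : (p - 1) * (p - 1) ^ (-p) = (p - 1) ^ (1 - p) := by
        rw [sub_eq_add_neg 1 p, Real.rpow_add hp1, Real.rpow_one]
      have e3 : ψ * ψ ^ (-p) * ψ ^ (p - 1) = 1 := by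
        have h1 : ψ * ψ ^ (-p) = ψ ^ (1 - p) := by
          rw [sub_eq_add_neg 1 p, Real.rpow_add h0, Real.rpow_one]
        rw [h1, ← Real.rpow_add h0]
        simp
      calc θ * ‖b‖ ^ p
          = ε * ((p - 1) * (p - 1) ^ (-p)) * ((v + δ) ^ (-p) * (v + δ) ^ p)
              * (ψ * ψ ^ (-p)) * ‖k‖ ^ p := by rw [hnb, hθ]; ring
        _ = ε * (p - 1) ^ (1 - p) * (ψ * ψ ^ (-p)) * ‖k‖ ^ p := by rw [e1, e2]; ring
        _ ≤ ε * (p - 1) ^ (1 - p) * (ψ * ψ ^ (-p)) * (D * ψ ^ (p - 1)) := by gcongr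
        _ = ε * ((p - 1) ^ (1 - p) * D) * (ψ * ψ ^ (-p) * ψ ^ (p - 1)) := by ring
        _ = _ := by rw [e3, mul_one]
  -- the zeroth order part
  have hzero : (v + ε * (ψ * (v + δ) ^ (1 - p))) ^ p ≤ v ^ p + ε * p := by
    have hle : ε * (ψ * (v + δ) ^ (1 - p)) ≤ δ := by
      have h1 : (v + δ) ^ (1 - p) ≤ δ ^ (1 - p) :=
        Real.rpow_le_rpow_of_nonpos hδ (by linarith) (by linarith)
      calc ε * (ψ * (v + δ) ^ (1 - p)) ≤ δ ^ p * (1 * δ ^ (1 - p)) := by gcongr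
        _ = δ := by rw [one_mul, ← Real.rpow_add hδ]; simp
    refine (rpow_le_rpow_add_mul hp.le hv (by
      have := mul_nonneg hε0.le hφ0; linarith)).trans (add_le_add le_rfl ?_)
    have h1 : (v + ε * (ψ * (v + δ) ^ (1 - p))) ^ (p - 1) ≤ (v + δ) ^ (p - 1) := by
      refine Real.rpow_le_rpow ?_ (by linarith) hp1.le
      have := mul_nonneg hε0.le hφ0; linarith
    have h2 : (v + δ) ^ (1 - p) * (v + δ) ^ (p - 1) = 1 := by
      rw [← Real.rpow_add hvδ]; simp
    calc p * (v + ε * (ψ * (v + δ) ^ (1 - p)) - v) * (v + ε * (ψ * (v + δ) ^ (1 - p))) ^ (p - 1)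
        ≤ p * (ε * (ψ * (v + δ) ^ (1 - p))) * (v + δ) ^ (p - 1) := by
          rw [add_sub_cancel_left]; gcongr
      _ = p * ε * ψ * ((v + δ) ^ (1 - p) * (v + δ) ^ (p - 1)) := by ring
      _ = p * ε * ψ := by rw [h2, mul_one]
      _ ≤ p * ε * 1 := by gcongr
      _ = ε * p := by ring
  have : (1 - θ) * ‖g‖ ^ p
      = ‖g‖ ^ p - ε * (p - 1) * (ψ * (v + δ) ^ (-p) * ‖g‖ ^ p) := by rw [hθ]; ring
  linarith

theorem integrable_norm_rpow_of_memLp {α F : Type*} [MeasurableSpace α] {μ : Measure α}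
    [NormedAddCommGroup F] {f : α → F} {p : ℝ} (hp : 0 < p) (hf : MemLp f (ENNReal.ofReal p) μ) :
    Integrable (fun x => ‖f x‖ ^ p) μ := by
  have := hf.integrable_norm_rpow (by simpa using hp) (by simp)
  rwa [ENNReal.toReal_ofReal hp.le] at this

theorem MemW1p.integrable_energy {Ω : Set 𝔼} {p : ℝ} {u : 𝔼 → ℝ} {g : 𝔼 → 𝔼} (hp : 0 < p)
    (h : MemW1p Ω p u g) : IntegrableOn (fun x => ‖g x‖ ^ p + |u x| ^ p) Ω :=
  (integrable_norm_rpow_of_memLp hp h.2.1).add (integrable_norm_rpow_of_memLp hp h.1)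

/-- `v` does not lose energy when it is increased on `B` by a bounded amount. -/
def IsUpwardMinimizerOn (Ω : Set 𝔼) (p : ℝ) (v : 𝔼 → ℝ) (g : 𝔼 → 𝔼) (B : Set 𝔼) : Prop :=
  ∀ w k, MemW1p Ω p w k → (∀ x ∈ Ω, v x ≤ w x) → (∀ x ∉ B, w x = v x) →
    (∃ C, ∀ x ∈ Ω, w x ≤ v x + C) → sobolevEnergy Ω p v g ≤ sobolevEnergy Ω p w k

/-- **Logarithmic energy estimate** for nonnegative upward minimizers. -/
theorem IsUpwardMinimizerOn.log_energy_le {Ω B : Set 𝔼} {p : ℝ} {v : 𝔼 → ℝ} {g : 𝔼 → 𝔼}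
    (hmin : IsUpwardMinimizerOn Ω p v g B) (hΩ : IsOpen Ω)
    [IsFiniteMeasure (volume.restrict Ω)] (hp : 1 < p) (h : IsSobolevRep Ω p v g)
    (hv : ∀ x, 0 ≤ v x) {ψ : 𝔼 → ℝ} (hψ : ContDiff ℝ ∞ ψ) (hc : HasCompactSupport ψ)
    (hψ0 : ∀ x, 0 ≤ ψ x) (hψ1 : ∀ x, ψ x ≤ 1) (hψB : ∀ x ∉ B, ψ x = 0) {D : ℝ} (hD : 0 ≤ D)
    (hgrad : ∀ x, ‖gradient ψ x‖ ^ p ≤ D * ψ x ^ (p - 1)) {δ : ℝ} (hδ : 0 < δ) :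
    IntegrableOn (fun x => ψ x * (v x + δ) ^ (-p) * ‖g x‖ ^ p) Ω ∧
    ∫ x in Ω, ψ x * (v x + δ) ^ (-p) * ‖g x‖ ^ p
      ≤ ((p - 1) ^ (1 - p) * D + p) * volume.real Ω / (p - 1) := by
  have hp0 : 0 < p := by linarith
  have hp1 : 0 < p - 1 := by linarith
  set ε := δ ^ p / p with hε
  have hε0 : 0 < ε := by positivity
  have hpos : ∀ a ∈ Ici (0:ℝ), 0 < a + δ := fun a ha => by
    have : (0:ℝ) ≤ a := ha
    linarith
  have hneg : ∀ a ∈ Ici (0:ℝ), (a + δ) ^ (-p) ≤ δ ^ (-p) := fun a ha =>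
    Real.rpow_le_rpow_of_nonpos hδ (by have : (0:ℝ) ≤ a := ha; linarith) (by linarith)
  have hcomp := h.comp hΩ hp.le (S := Ici 0) (F := fun a => (a + δ) ^ (1 - p))
    (F' := fun a => (1 - p) * (a + δ) ^ (-p)) (L := (p - 1) * δ ^ (-p)) (by positivity)
    (fun x _ => hv x) (convex_Ici 0)
    (fun a ha => by
      have := hpos a ha
      rw [abs_mul, abs_of_neg (by linarith : 1 - p < 0), abs_of_nonneg (by positivity), neg_sub]
      exact mul_le_mul_of_nonneg_left (hneg a ha) hp1.le)
    (fun a ha => by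
      have h1 := ((hasDerivAt_id a).add_const δ).rpow_const (p := 1 - p) (Or.inl (hpos a ha).ne')
      refine (h1.congr_deriv ?_).hasDerivWithinAt
      simp only [id]
      rw [show 1 - p - 1 = -p by ring]; ring)
    (by fun_prop) (by fun_prop)
  have hw := h.memW1p.add hp.le ((hcomp.smooth_mul hp.le hψ hc).const_mul ε)
  have hle := hmin _ _ hw (fun x _ => by
      have : 0 < v x + δ := hpos _ (hv x)
      have h1 := hψ0 x
      have : 0 ≤ ε * (ψ x * (v x + δ) ^ (1 - p)) := by positivity
      linarith) (fun x hx => by simp [hψB x hx]) ⟨ε * δ ^ (1 - p), fun x _ => by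
      have h0 : 0 < v x + δ := hpos _ (hv x)
      have h1 : (v x + δ) ^ (1 - p) ≤ δ ^ (1 - p) :=
        Real.rpow_le_rpow_of_nonpos hδ (by have := hv x; linarith) (by linarith)
      have h2 : ψ x * (v x + δ) ^ (1 - p) ≤ 1 * δ ^ (1 - p) :=
        mul_le_mul (hψ1 x) h1 (by positivity) zero_le_one
      have := mul_le_mul_of_nonneg_left h2 hε0.le
      rw [one_mul] at this
      linarith⟩
  have iv := h.memW1p.integrable_energy hp0
  have iw := hw.integrable_energy hp0
  have hum := h.measurable_fun
  have hgm := h.measurable_grad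
  have hψm := hψ.continuous.measurable
  have il : IntegrableOn (fun x => ψ x * (v x + δ) ^ (-p) * ‖g x‖ ^ p) Ω := by
    refine ((integrable_norm_rpow_of_memLp hp0 h.memW1p.2.1).const_mul (δ ^ (-p))).mono'
      (by fun_prop) (Eventually.of_forall fun x => ?_)
    have h0 : 0 < v x + δ := hpos _ (hv x)
    have h1 := hψ0 x
    rw [Real.norm_of_nonneg (by positivity)]
    refine mul_le_mul_of_nonneg_right ?_ (by positivity)
    have := mul_le_mul (hψ1 x) (hneg _ (hv x)) (by positivity) zero_le_one
    rwa [one_mul] at this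
  refine ⟨il, ?_⟩
  have hpt : ∀ x, ‖g x + ε • (ψ x • (((1 - p) * (v x + δ) ^ (-p)) • g x)
        + (v x + δ) ^ (1 - p) • gradient ψ x)‖ ^ p
      + |v x + ε * (ψ x * (v x + δ) ^ (1 - p))| ^ p
      ≤ (‖g x‖ ^ p + |v x| ^ p) - ε * (p - 1) * (ψ x * (v x + δ) ^ (-p) * ‖g x‖ ^ p)
        + ε * ((p - 1) ^ (1 - p) * D + p) := by
    intro x
    have h0 : 0 < v x + δ := hpos _ (hv x)
    have h1 := hψ0 x
    have h2 := hv x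
    rw [abs_of_nonneg h2, abs_of_nonneg (by positivity)]
    exact log_competitor_pointwise hp hD hδ h2 h1 (hψ1 x) (g x) (gradient ψ x) (hgrad x)
  have hint : sobolevEnergy Ω p v g ≤ sobolevEnergy Ω p v g
      - ε * (p - 1) * (∫ x in Ω, ψ x * (v x + δ) ^ (-p) * ‖g x‖ ^ p)
      + ε * ((p - 1) ^ (1 - p) * D + p) * volume.real Ω := by
    refine hle.trans ?_
    have i1 : IntegrableOn (fun x => (‖g x‖ ^ p + |v x| ^ p)
        - ε * (p - 1) * (ψ x * (v x + δ) ^ (-p) * ‖g x‖ ^ p)) Ω := iv.sub (il.const_mul _)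
    have i2 : IntegrableOn (fun _ : 𝔼 => ε * ((p - 1) ^ (1 - p) * D + p)) Ω :=
      integrable_const _
    refine (integral_mono iw (i1.add i2) hpt).trans (le_of_eq ?_)
    change ∫ x in Ω, ((‖g x‖ ^ p + |v x| ^ p)
        - ε * (p - 1) * (ψ x * (v x + δ) ^ (-p) * ‖g x‖ ^ p))
        + ε * ((p - 1) ^ (1 - p) * D + p) = _
    rw [integral_add i1 i2, integral_sub iv (il.const_mul _), integral_const_mul,
      integral_const, measureReal_restrict_apply_univ, smul_eq_mul, sobolevEnergy]
    ring
  rw [le_div_iff₀ hp1]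
  have h3 : ε * ((∫ x in Ω, ψ x * (v x + δ) ^ (-p) * ‖g x‖ ^ p) * (p - 1))
      ≤ ε * (((p - 1) ^ (1 - p) * D + p) * volume.real Ω) := by linarith
  exact le_of_mul_le_mul_left h3 hε0

/-- Dichotomy on small balls for nonnegative upward minimizers: if the zero set has positive
measure in the ball then the function vanishes there. -/
theorem IsUpwardMinimizerOn.ball_dichotomy {Ω : Set 𝔼} {p r : ℝ} {v : 𝔼 → ℝ} {g : 𝔼 → 𝔼} {x₀ : 𝔼}
    (hr : 0 < r)
    (hmin : IsUpwardMinimizerOn Ω p v g (Metric.closedBall x₀ (2 * r))) (hΩ : IsOpen Ω)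
    [IsFiniteMeasure (volume.restrict Ω)] (hp : 1 < p) (h : IsSobolevRep Ω p v g)
    (hv : ∀ x, 0 ≤ v x) (hB : Metric.ball x₀ r ⊆ Ω) :
    volume ({x | v x = 0} ∩ Metric.ball x₀ r) = 0 ∨
      volume ({x | v x ≠ 0} ∩ Metric.ball x₀ r) = 0 := by
  rw [or_iff_not_imp_left]
  intro hZpos
  have hp0 : 0 < p := by linarith
  have hum := h.measurable_fun
  have hgm := h.measurable_grad
  set W := Metric.ball x₀ r with hW
  have hWm : MeasurableSet W := Metric.isOpen_ball.measurableSet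
  have hWfin : volume W ≠ ⊤ := Metric.isBounded_ball.measure_lt_top.ne
  -- the cutoff function
  let η : ContDiffBump x₀ := ⟨r, 2 * r, hr, by linarith⟩
  set m := ⌈p⌉₊ with hm
  have hmp : p ≤ m := Nat.le_ceil p
  set ψ : 𝔼 → ℝ := fun x => η x ^ m with hψdef
  have hηs : ContDiff ℝ ∞ η := η.contDiff
  have hψs : ContDiff ℝ ∞ ψ := hηs.pow m
  have hm0 : m ≠ 0 := by
    intro h0
    rw [h0] at hmp
    simp at hmp
    linarith
  have hψc : HasCompactSupport ψ := η.hasCompactSupport.comp_left (g := fun a : ℝ => a ^ m)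
    (zero_pow hm0)
  have hψ0 : ∀ x, 0 ≤ ψ x := fun x => pow_nonneg η.nonneg _
  have hψ1 : ∀ x, ψ x ≤ 1 := fun x => pow_le_one₀ η.nonneg η.le_one
  have hψB : ∀ x ∉ Metric.closedBall x₀ (2 * r), ψ x = 0 := by
    intro x hx
    have : η x = 0 := η.zero_of_le_dist (by
      rw [Metric.mem_closedBall, not_le] at hx; exact hx.le)
    simp [hψdef, this, hm0]
  obtain ⟨C, hC⟩ := (η.hasCompactSupport.fderiv (𝕜 := ℝ)).exists_bound_of_continuous
    (hηs.continuous_fderiv (by simp))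
  have hC0 : 0 ≤ C := (norm_nonneg _).trans (hC 0)
  set D := (m * C) ^ p with hDdef
  have hD : 0 ≤ D := by positivity
  have hgrad : ∀ x, ‖gradient ψ x‖ ^ p ≤ D * ψ x ^ (p - 1) := by
    intro x
    have h1 : ‖gradient ψ x‖ ≤ m * C * η x ^ (m - 1) := by
      rw [gradient, LinearIsometryEquiv.norm_map, hψdef]
      rw [fderiv_fun_pow _ (hηs.differentiable (by simp) x), norm_smul]
      rw [nsmul_eq_mul, norm_mul, norm_pow, Real.norm_of_nonneg η.nonneg, Real.norm_natCast]
      have := mul_le_mul_of_nonneg_left (hC x)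
        (by have := η.nonneg (x := x); positivity : (0:ℝ) ≤ m * η x ^ (m - 1))
      refine this.trans (le_of_eq (by ring))
    have hη0 : 0 ≤ η x := η.nonneg
    refine (Real.rpow_le_rpow (norm_nonneg _) h1 hp0.le).trans ?_
    rw [Real.mul_rpow (by positivity) (by positivity)]
    refine mul_le_mul_of_nonneg_left ?_ hD
    rw [← Real.rpow_natCast, ← Real.rpow_mul hη0]
    simp only [hψdef]
    rw [← Real.rpow_natCast, ← Real.rpow_mul hη0]
    rcases hη0.eq_or_lt with h0 | h0
    · rw [← h0, Real.zero_rpow, Real.zero_rpow]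
      · have : (0:ℝ) < m := by positivity
        have : 0 < (m:ℝ) * (p - 1) := mul_pos this (by linarith)
        exact this.ne'
      · have h1 : 1 < m := by
          have : (1:ℝ) < m := by linarith
          exact_mod_cast this
        have : (0:ℝ) < ((m - 1 : ℕ) : ℝ) := by
          have : 0 < m - 1 := by omega
          exact_mod_cast this
        positivity
    · refine Real.rpow_le_rpow_of_exponent_ge h0 η.le_one ?_
      rw [Nat.cast_sub (Nat.one_le_iff_ne_zero.2 hm0)]
      push_cast
      nlinarith
  set C₀ := ((p - 1) ^ (1 - p) * D + p) * volume.real Ω / (p - 1) with hC₀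
  -- the bound for the logarithm, uniform in `δ`
  set M : ℝ≥0∞ := volume (Metric.ball (0 : 𝔼) (2 * r)) *
        (ENNReal.ofReal (2 * r) * (volume W + ENNReal.ofReal C₀)) with hM
  have hMfin : M ≠ ⊤ := by
    refine ENNReal.mul_ne_top Metric.isBounded_ball.measure_lt_top.ne
      (ENNReal.mul_ne_top ENNReal.ofReal_ne_top (ENNReal.add_ne_top.2 ⟨hWfin, by simp⟩))
  have hlog : ∀ δ > 0, volume ({x | v x = 0} ∩ W) * ∫⁻ x in W, ‖Real.log (1 + v x / δ)‖ₑ ≤ M := by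
    intro δ hδ
    obtain ⟨il, hl⟩ := hmin.log_energy_le hΩ hp h hv hψs hψc hψ0 hψ1 hψB hD hgrad hδ
    have hpos : ∀ a ∈ Ici (0:ℝ), 0 < a + δ := fun a ha => by
      have : (0:ℝ) ≤ a := ha
      linarith
    have hcomp := h.comp hΩ hp.le (S := Ici 0) (F := fun a => Real.log (1 + a / δ))
      (F' := fun a => (a + δ)⁻¹) (L := δ⁻¹) (by positivity)
      (fun x _ => hv x) (convex_Ici 0)
      (fun a ha => by
        have := hpos a ha
        rw [abs_of_pos (by positivity)]
        exact inv_anti₀ hδ (by have : (0:ℝ) ≤ a := ha; linarith))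
      (fun a ha => by
        have ha' : (0:ℝ) ≤ a := ha
        have h1 := (((hasDerivAt_id a).div_const δ).const_add 1).log
          (by simp only [id]; positivity)
        refine (h1.congr_deriv ?_).hasDerivWithinAt
        have := hpos a ha
        simp only [id]
        field_simp
        ring)
      (by fun_prop) (by fun_prop)
    have hrep : IsSobolevRep Ω p (fun x => Real.log (1 + v x / δ))
        (fun x => (v x + δ)⁻¹ • g x) :=
      ⟨hcomp, by fun_prop, by fun_prop, fun x hx => by simp [h.fun_eq_zero x hx],
        fun x hx => by simp [h.grad_eq_zero x hx]⟩
    have hZm : MeasurableSet ({x | v x = 0} ∩ W) :=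
      (hum (measurableSet_singleton 0)).inter hWm
    refine (hrep.measure_mul_lintegral_le hp.le hB hZm inter_subset_right
      (fun x hx => by
        have : v x = 0 := hx.1
        simp [this])).trans ?_
    refine mul_le_mul_right (mul_le_mul_right ?_ _) _
    have hk : ∀ x ∈ W, ‖(v x + δ)⁻¹ • g x‖ₑ
        ≤ 1 + ENNReal.ofReal (ψ x * (v x + δ) ^ (-p) * ‖g x‖ ^ p) := by
      intro x hx
      have hψx : ψ x = 1 := by
        have : η x = 1 := η.one_of_mem_closedBall (Metric.ball_subset_closedBall hx)
        simp [hψdef, this]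
      have h0 := hpos _ (hv x)
      rw [hψx, one_mul, Real.rpow_neg h0.le, ← Real.inv_rpow h0.le,
        ← Real.mul_rpow (by positivity) (norm_nonneg _), ← ofReal_norm, norm_smul,
        Real.norm_of_nonneg (by positivity), ← ENNReal.ofReal_one,
        ← ENNReal.ofReal_add zero_le_one (by positivity)]
      refine ENNReal.ofReal_le_ofReal ?_
      set a := (v x + δ)⁻¹ * ‖g x‖ with ha
      have ha0 : 0 ≤ a := by positivity
      rcases le_total a 1 with h1 | h1
      · have : 0 ≤ a ^ p := by positivity
        linarith
      · have : a ≤ a ^ p := Real.self_le_rpow_of_one_le h1 hp.le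
        linarith
    calc ∫⁻ x in W, ‖(v x + δ)⁻¹ • g x‖ₑ
        ≤ ∫⁻ x in W, (1 + ENNReal.ofReal (ψ x * (v x + δ) ^ (-p) * ‖g x‖ ^ p)) :=
          setLIntegral_mono' hWm hk
      _ = volume W + ∫⁻ x in W, ENNReal.ofReal (ψ x * (v x + δ) ^ (-p) * ‖g x‖ ^ p) := by
          rw [lintegral_add_left measurable_const, setLIntegral_const, one_mul]
      _ ≤ volume W + ∫⁻ x in Ω, ENNReal.ofReal (ψ x * (v x + δ) ^ (-p) * ‖g x‖ ^ p) := by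
          gcongr
      _ = volume W + ENNReal.ofReal (∫ x in Ω, ψ x * (v x + δ) ^ (-p) * ‖g x‖ ^ p) := by
          rw [ofReal_integral_eq_lintegral_ofReal il]
          refine Eventually.of_forall fun x => ?_
          have h0 := hpos _ (hv x)
          have h1 := hψ0 x
          simp only [Pi.zero_apply]
          positivity
      _ ≤ _ := by gcongr
  -- let `δ` tend to zero
  have hlevel : ∀ c > 0, volume ({x | c ≤ v x} ∩ W) = 0 := by
    intro c hc
    set A := {x | c ≤ v x} ∩ W with hA
    have hAm : MeasurableSet A := (measurableSet_le measurable_const hum).inter hWm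
    have hbound : ∀ N : ℕ, (N : ℝ≥0∞) * (volume ({x | v x = 0} ∩ W) * volume A) ≤ M := by
      intro N
      rcases Nat.eq_zero_or_pos N with rfl | hN
      · simp
      have hN1 : 0 < Real.exp N - 1 := by
        have : (0:ℝ) < N := by exact_mod_cast hN
        have := Real.one_lt_exp_iff.2 this
        linarith
      refine le_trans ?_ (hlog (c / (Real.exp N - 1)) (by positivity))
      have hle : (N : ℝ≥0∞) * volume A
          ≤ ∫⁻ x in W, ‖Real.log (1 + v x / (c / (Real.exp N - 1)))‖ₑ := by
        rw [← setLIntegral_const]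
        refine (setLIntegral_mono' hAm fun x hx => ?_).trans
          (lintegral_mono_set (inter_subset_right))
        have hcv : c ≤ v x := hx.1
        have h1 : Real.exp N ≤ 1 + v x / (c / (Real.exp N - 1)) := by
          rw [div_div_eq_mul_div]
          have : Real.exp N - 1 ≤ v x * (Real.exp N - 1) / c := by
            rw [le_div_iff₀ hc]; nlinarith
          linarith
        have h2 : (N:ℝ) ≤ Real.log (1 + v x / (c / (Real.exp N - 1))) :=
          (Real.le_log_iff_exp_le ((Real.exp_pos _).trans_le h1)).2 h1
        rw [← ofReal_norm, ← ENNReal.ofReal_natCast]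
        exact ENNReal.ofReal_le_ofReal (h2.trans (Real.le_norm_self _))
      calc (N : ℝ≥0∞) * (volume ({x | v x = 0} ∩ W) * volume A)
          = volume ({x | v x = 0} ∩ W) * ((N : ℝ≥0∞) * volume A) := by ring
        _ ≤ _ := mul_le_mul_right hle _
    by_contra hne
    have hX : volume ({x | v x = 0} ∩ W) * volume A ≠ 0 := mul_ne_zero hZpos hne
    obtain ⟨N, hN⟩ := ENNReal.exists_nat_mul_gt hX hMfin
    exact absurd (hbound N) (not_le.2 hN)
  have hsub : {x | v x ≠ 0} ∩ W ⊆ ⋃ k : ℕ, {x | 1 / ((k:ℝ) + 1) ≤ v x} ∩ W := by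
    intro x hx
    have h1 : 0 < v x := lt_of_le_of_ne (hv x) (Ne.symm hx.1)
    obtain ⟨k, hk⟩ := exists_nat_one_div_lt h1
    exact mem_iUnion.2 ⟨k, hk.le, hx.2⟩
  exact measure_mono_null hsub (measure_iUnion_null fun k => hlevel _ (by positivity))

/-- On a connected set, a local zero-one law for the zero set is a global one. -/
theorem measure_zero_set_dichotomy {Ω : Set 𝔼} (hc : IsConnected Ω) {v : 𝔼 → ℝ}
    (h : ∀ x ∈ Ω, ∃ r > 0, volume ({x | v x = 0} ∩ Metric.ball x r) = 0 ∨
      volume ({x | v x ≠ 0} ∩ Metric.ball x r) = 0) :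
    volume ({x | v x = 0} ∩ Ω) = 0 ∨ volume ({x | v x ≠ 0} ∩ Ω) = 0 := by
  have hopen : ∀ s : Set 𝔼, IsOpen {x | ∃ r > 0, volume (s ∩ Metric.ball x r) = 0} := by
    intro s
    rw [Metric.isOpen_iff]
    rintro x ⟨r, hr, hx⟩
    refine ⟨r / 2, by positivity, fun y hy => ⟨r / 2, by positivity, ?_⟩⟩
    refine measure_mono_null (inter_subset_inter_right _ ?_) hx
    refine Metric.ball_subset_ball' ?_
    rw [Metric.mem_ball] at hy
    linarith
  have hloc : ∀ s : Set 𝔼, Ω ⊆ {x | ∃ r > 0, volume (s ∩ Metric.ball x r) = 0} →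
      volume (s ∩ Ω) = 0 := by
    intro s hs
    refine measure_null_of_locally_null _ fun x hx => ?_
    obtain ⟨r, hr, h0⟩ := hs hx.2
    refine ⟨s ∩ Metric.ball x r, ?_, h0⟩
    exact mem_nhdsWithin.2 ⟨Metric.ball x r, Metric.isOpen_ball, Metric.mem_ball_self hr,
      fun y hy => ⟨hy.2.1, hy.1⟩⟩
  have hdisj : Ω ∩ ({x | ∃ r > 0, volume ({x | v x = 0} ∩ Metric.ball x r) = 0} ∩
      {x | ∃ r > 0, volume ({x | v x ≠ 0} ∩ Metric.ball x r) = 0}) = ∅ := by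
    rw [eq_empty_iff_forall_notMem]
    rintro x ⟨-, ⟨r, hr, h1⟩, ⟨r', hr', h2⟩⟩
    have : Metric.ball x (min r r') ⊆ ({x | v x = 0} ∩ Metric.ball x r) ∪
        ({x | v x ≠ 0} ∩ Metric.ball x r') := by
      intro y hy
      by_cases hvy : v y = 0
      · exact Or.inl ⟨hvy, Metric.ball_subset_ball (min_le_left _ _) hy⟩
      · exact Or.inr ⟨hvy, Metric.ball_subset_ball (min_le_right _ _) hy⟩
    have h0 := measure_mono_null this (measure_union_null h1 h2)
    exact (Metric.measure_ball_pos volume x (lt_min hr hr')).ne' h0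
  have hcover : Ω ⊆ {x | ∃ r > 0, volume ({x | v x = 0} ∩ Metric.ball x r) = 0} ∪
      {x | ∃ r > 0, volume ({x | v x ≠ 0} ∩ Metric.ball x r) = 0} := by
    intro x hx
    obtain ⟨r, hr, h1 | h1⟩ := h x hx
    · exact Or.inl ⟨r, hr, h1⟩
    · exact Or.inr ⟨r, hr, h1⟩
  rcases (isPreconnected_iff_subset_of_disjoint.1 hc.isPreconnected) _ _ (hopen _) (hopen _)
    hcover hdisj with h1 | h1
  · exact Or.inl (hloc _ h1)
  · exact Or.inr (hloc _ h1)

theorem sobolevEnergy_nonneg (Ω : Set 𝔼) (p : ℝ) (u : 𝔼 → ℝ) (g : 𝔼 → 𝔼) :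
    0 ≤ sobolevEnergy Ω p u g :=
  integral_nonneg fun _ => by positivity

theorem intLqPow_nonneg (Ω : Set 𝔼) (q : ℝ) (u : 𝔼 → ℝ) : 0 ≤ intLqPow Ω q u :=
  integral_nonneg fun _ => by positivity

theorem sobolevQuotient_nonneg (Ω : Set 𝔼) (p q : ℝ) (u : 𝔼 → ℝ) (g : 𝔼 → 𝔼) :
    0 ≤ sobolevQuotient Ω p q u g :=
  div_nonneg (sobolevEnergy_nonneg _ _ _ _) (Real.rpow_nonneg (intLqPow_nonneg _ _ _) _)

theorem interiorConst_le {Ω : Set 𝔼} {p q α : ℝ} {v : 𝔼 → ℝ} {g : 𝔼 → 𝔼} (h : MemW1p Ω p v g)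
    (hq : 0 < intLqPow Ω q v)
    (hz : ENNReal.ofReal α * volume Ω ≤ volume {x ∈ Ω | v x = 0}) :
    interiorConst Ω p q α ≤ sobolevQuotient Ω p q v g := by
  refine csInf_le ⟨0, ?_⟩ ⟨v, g, h, hq, hz, rfl⟩
  rintro r ⟨w, k, -, -, -, rfl⟩
  exact sobolevQuotient_nonneg _ _ _ _ _

theorem measure_zero_set_congr {Ω : Set 𝔼} (hΩ : MeasurableSet Ω) {u v : 𝔼 → ℝ}
    (h : u =ᵐ[volume.restrict Ω] v) :
    volume {x ∈ Ω | u x = 0} = volume {x ∈ Ω | v x = 0} := by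
  refine measure_congr ?_
  filter_upwards [(ae_restrict_iff' hΩ).1 h] with x hx
  refine propext (and_congr_right fun hxΩ => ?_)
  rw [hx hxΩ]

theorem memLp_of_intLqPow_pos {Ω : Set 𝔼} {q : ℝ} (hq : 1 ≤ q) {u : 𝔼 → ℝ}
    (hm : AEStronglyMeasurable u (volume.restrict Ω)) (h : 0 < intLqPow Ω q u) :
    MemLp u (ENNReal.ofReal q) (volume.restrict Ω) := by
  have hi : IntegrableOn (fun x => |u x| ^ q) Ω := by
    by_contra hni
    rw [intLqPow, integral_undef hni] at h
    exact lt_irrefl _ h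
  rw [← integrable_norm_rpow_iff hm (by simp; linarith) (by simp)]
  rw [ENNReal.toReal_ofReal (by linarith)]
  exact hi

theorem exists_closedBall_volume_le (hn : 1 ≤ n) (x : 𝔼) {ε : ℝ≥0∞} (hε : 0 < ε) {R : ℝ}
    (hR : 0 < R) : ∃ r, 0 < r ∧ r ≤ R ∧ volume (Metric.closedBall x (2 * r)) ≤ ε := by
  have hlim : Tendsto (fun r : ℝ => volume (Metric.closedBall x (2 * r))) (𝓝[>] 0) (𝓝 0) := by
    have h1 : Tendsto (fun r : ℝ => ENNReal.ofReal ((2 * r) ^ n) * volume (Metric.ball (0 : 𝔼) 1))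
        (𝓝[>] 0) (𝓝 (ENNReal.ofReal ((2 * 0) ^ n) * volume (Metric.ball (0 : 𝔼) 1))) := by
      refine ENNReal.Tendsto.mul_const (ENNReal.tendsto_ofReal ?_)
        (Or.inr Metric.isBounded_ball.measure_lt_top.ne)
      exact ((by fun_prop : Continuous fun r : ℝ => (2 * r) ^ n).tendsto 0).mono_left
        nhdsWithin_le_nhds
    rw [mul_zero, zero_pow (by omega), ENNReal.ofReal_zero, zero_mul] at h1
    refine h1.congr' ?_
    filter_upwards [self_mem_nhdsWithin] with r hr
    have hr' : (0:ℝ) < r := hr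
    rw [Measure.addHaar_closedBall volume x (by positivity : (0:ℝ) ≤ 2 * r)]
    simp
  have h1 := hlim.eventually (gt_mem_nhds hε)
  have h2 : ∀ᶠ r in 𝓝[>] (0:ℝ), r ≤ R := nhdsWithin_le_nhds (Iic_mem_nhds hR)
  obtain ⟨r, hr1, hr2, hr3⟩ := (h1.and (h2.and self_mem_nhdsWithin)).exists
  exact ⟨r, hr3, hr2, hr1.le⟩

/-- **Exactness of the constraint**: the zero set of a minimizer has the least measure allowed. -/
theorem measure_zero_set_eq_of_minimizer (hn : 1 ≤ n) {Ω : Set 𝔼} (hΩ : IsOpen Ω)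
    (hΩc : IsConnected Ω) [IsFiniteMeasure (volume.restrict Ω)] {p q α : ℝ} (hp : 1 < p)
    (hq : 1 ≤ q) {v : 𝔼 → ℝ} {g : 𝔼 → 𝔼} (h : MemW1p Ω p v g) (hN : 0 < intLqPow Ω q v)
    (hz : ENNReal.ofReal α * volume Ω ≤ volume {x ∈ Ω | v x = 0})
    (hmin : sobolevQuotient Ω p q v g ≤ interiorConst Ω p q α) :
    volume {x ∈ Ω | v x = 0} = ENNReal.ofReal α * volume Ω := by
  by_contra hne
  have hlt : ENNReal.ofReal α * volume Ω < volume {x ∈ Ω | v x = 0} :=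
    lt_of_le_of_ne hz (Ne.symm hne)
  have hΩm := hΩ.measurableSet
  have hp0 : 0 < p := by linarith
  have hq0 : 0 < q := by linarith
  obtain ⟨u, k, hu, hvu, hgk⟩ := h.exists_rep hΩm
  set a : 𝔼 → ℝ := fun x => |u x| with ha
  set b : 𝔼 → 𝔼 := fun x => (u x / |u x|) • k x with hb
  have hrep : IsSobolevRep Ω p a b := hu.abs hΩ hp.le
  have ha0 : ∀ x, 0 ≤ a x := fun x => abs_nonneg _
  have hNa : intLqPow Ω q a = intLqPow Ω q v := by
    refine integral_congr_ae ?_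
    filter_upwards [hvu] with x hx
    simp only [ha]
    rw [hx, abs_abs]
  have hEa : sobolevEnergy Ω p a b ≤ sobolevEnergy Ω p v g := by
    refine integral_mono_ae (hrep.memW1p.integrable_energy hp0) (h.integrable_energy hp0) ?_
    filter_upwards [hvu, hgk] with x hx hx'
    simp only [ha, hb]
    rw [hx, hx', abs_abs, norm_smul]
    refine add_le_add (Real.rpow_le_rpow (by positivity) ?_ hp0.le) le_rfl
    refine mul_le_of_le_one_left (norm_nonneg _) ?_
    rw [Real.norm_eq_abs, abs_div, abs_abs]
    exact div_self_le_one _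
  have hZ : volume {x ∈ Ω | v x = 0} = volume ({x | a x = 0} ∩ Ω) := by
    rw [measure_zero_set_congr hΩm hvu]
    congr 1
    ext x
    simp [ha, and_comm]
  have hNa0 : 0 < intLqPow Ω q a := hNa ▸ hN
  have haLq := memLp_of_intLqPow_pos hq hrep.measurable_fun.aestronglyMeasurable hNa0
  have hΩfin : volume Ω ≠ ⊤ := by
    have := measure_ne_top (volume.restrict Ω) univ
    simpa using this
  rw [hZ] at hlt
  -- `|v|` is an upward minimizer on every set of small measure
  have hup : ∀ B : Set 𝔼, volume B ≤ volume ({x | a x = 0} ∩ Ω) - ENNReal.ofReal α * volume Ω →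
      IsUpwardMinimizerOn Ω p a b B := by
    intro B hB w κ hw hle hoff ⟨C, hC⟩
    have hwz : ENNReal.ofReal α * volume Ω ≤ volume {x ∈ Ω | w x = 0} := by
      have h1 : volume ({x | a x = 0} ∩ Ω) ≤ volume {x ∈ Ω | w x = 0} + volume B := by
        refine (measure_mono ?_).trans (measure_union_le _ _)
        intro x hx
        by_cases hxB : x ∈ B
        · exact Or.inr hxB
        · exact Or.inl ⟨hx.2, (hoff x hxB).trans hx.1⟩
      have h2 := h1.trans (add_le_add_right hB _)
      have h3 := add_le_add_left h2 (ENNReal.ofReal α * volume Ω)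
      rw [add_assoc, tsub_add_cancel_of_le hlt.le, add_comm] at h3
      have hfin : volume ({x | a x = 0} ∩ Ω) ≠ ⊤ := measure_inter_ne_top_of_right_ne_top hΩfin
      exact (ENNReal.add_le_add_iff_right hfin).1 h3
    have hwLq : MemLp w (ENNReal.ofReal q) (volume.restrict Ω) := by
      refine (haLq.add (memLp_const C)).mono hw.1.aestronglyMeasurable ?_
      refine (ae_restrict_iff' hΩm).2 (Eventually.of_forall fun x hx => ?_)
      have h1 := hle x hx
      have h2 := ha0 x
      rw [Real.norm_of_nonneg (by linarith)]
      exact (hC x hx).trans (Real.le_norm_self _)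
    have hNle : intLqPow Ω q a ≤ intLqPow Ω q w := by
      refine setIntegral_mono_on (integrable_norm_rpow_of_memLp hq0 haLq)
        (integrable_norm_rpow_of_memLp hq0 hwLq) hΩm fun x hx => ?_
      have h1 := hle x hx
      have h2 := ha0 x
      rw [abs_of_nonneg h2, abs_of_nonneg (by linarith)]
      exact Real.rpow_le_rpow h2 h1 hq0.le
    have hS := hmin.trans (interiorConst_le hw (hNa0.trans_le hNle) hwz)
    rw [sobolevQuotient, sobolevQuotient, ← hNa] at hS
    have hpos : 0 < intLqPow Ω q a ^ (p / q) := Real.rpow_pos_of_pos hNa0 _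
    have hpow : intLqPow Ω q a ^ (p / q) ≤ intLqPow Ω q w ^ (p / q) :=
      Real.rpow_le_rpow hNa0.le hNle (by positivity)
    have h5 : sobolevEnergy Ω p w κ / intLqPow Ω q w ^ (p / q)
        ≤ sobolevEnergy Ω p w κ / intLqPow Ω q a ^ (p / q) :=
      div_le_div_of_nonneg_left (sobolevEnergy_nonneg _ _ _ _) hpos hpow
    exact hEa.trans ((div_le_div_iff_of_pos_right hpos).1 (hS.trans h5))
  have hdich := measure_zero_set_dichotomy (v := a) hΩc fun x hx => by
    obtain ⟨R, hR, hRΩ⟩ := Metric.isOpen_iff.1 hΩ x hx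
    obtain ⟨r, hr, hrR, hrv⟩ := exists_closedBall_volume_le hn x (tsub_pos_of_lt hlt) hR
    exact ⟨r, hr, (hup _ hrv).ball_dichotomy hr hΩ hp hrep ha0
      ((Metric.ball_subset_ball hrR).trans hRΩ)⟩
  rcases hdich with h0 | h0
  · rw [h0] at hlt
    exact not_lt_zero hlt
  · have : intLqPow Ω q a = 0 := by
      refine integral_eq_zero_of_ae ((ae_restrict_iff' hΩm).2 ?_)
      have : ∀ᵐ x, x ∉ {x | a x ≠ 0} ∩ Ω := measure_eq_zero_iff_ae_notMem.1 h0
      filter_upwards [this] with x hx hxΩ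
      have : a x = 0 := by_contra fun hne => hx ⟨hne, hxΩ⟩
      simp [this, hq0.ne']
    linarith

/-- A domain with smooth boundary satisfies a uniform cone condition near each point of its
closure. -/
theorem HasSmoothBoundary.exists_cone {Ω : Set 𝔼} (hΩ : IsOpen Ω) (h : HasSmoothBoundary Ω) {x : 𝔼}
    (hx : x ∈ closure Ω) : ∃ (V : Set 𝔼) (ν : 𝔼) (ρ : ℝ), IsOpen V ∧ x ∈ V ∧ 0 < ρ ∧
      ∀ y ∈ V ∩ Ω, ∀ z ∈ Metric.ball ν ρ, ∀ t ∈ Icc (0:ℝ) 1, y + t • z ∈ Ω := by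
  by_cases hxΩ : x ∈ Ω
  · obtain ⟨r, hr, hrΩ⟩ := Metric.isOpen_iff.1 hΩ x hxΩ
    refine ⟨Metric.ball x (r / 2), 0, r / 2, Metric.isOpen_ball, Metric.mem_ball_self (by positivity),
      by positivity, fun y hy z hz t ht => hrΩ ?_⟩
    have hy1 : dist y x < r / 2 := hy.1
    rw [mem_ball_zero_iff] at hz
    rw [Metric.mem_ball]
    have h1 : ‖t • z‖ ≤ ‖z‖ := by
      rw [norm_smul, Real.norm_of_nonneg ht.1]
      exact mul_le_of_le_one_left (norm_nonneg _) ht.2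
    calc dist (y + t • z) x ≤ dist (y + t • z) y + dist y x := dist_triangle _ _ _
      _ < r := by rw [dist_self_add_left]; linarith
  · have hfr : x ∈ frontier Ω := ⟨hx, by rwa [hΩ.interior_eq]⟩
    obtain ⟨U, f, hU, hxU, hf, hfd, hUΩ⟩ := h x hfr
    obtain ⟨e, he⟩ : ∃ e, fderiv ℝ f x e < 0 := by
      obtain ⟨e, he⟩ : ∃ e, fderiv ℝ f x e ≠ 0 := by
        by_contra hcon
        push Not at hcon
        exact hfd (ContinuousLinearMap.ext hcon)
      rcases lt_or_gt_of_ne he with h1 | h1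
      · exact ⟨e, h1⟩
      · exact ⟨-e, by rw [map_neg]; linarith⟩
    have hcont : ContinuousAt (fun a : 𝔼 × 𝔼 => fderiv ℝ f a.1 a.2) (x, e) := by
      have h1 : ContinuousAt (fun y => fderiv ℝ f y) x :=
        (hf.continuousOn_fderiv_of_isOpen hU (by simp)).continuousAt (hU.mem_nhds hxU)
      have h2 : ContinuousAt (fun a : 𝔼 × 𝔼 => fderiv ℝ f a.1) (x, e) :=
        ContinuousAt.comp (f := Prod.fst) h1 continuousAt_fst
      exact h2.clm_apply continuousAt_snd
    have hev := (hcont.eventually (gt_mem_nhds he))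
    rw [nhds_prod_eq, Filter.eventually_prod_iff] at hev
    obtain ⟨pa, hpa, pb, hpb, hab⟩ := hev
    obtain ⟨r₁, hr₁, hr₁U⟩ := Metric.mem_nhds_iff.1 (Filter.inter_mem hpa (hU.mem_nhds hxU))
    obtain ⟨r₂, hr₂, hr₂U⟩ := Metric.mem_nhds_iff.1 hpb
    set s := r₁ / (2 * (‖e‖ + r₂)) with hs
    have hs0 : 0 < s := by positivity
    refine ⟨Metric.ball x (r₁ / 2), s • e, s * r₂, Metric.isOpen_ball,
      Metric.mem_ball_self (by positivity), by positivity, fun y hy z hz t ht => ?_⟩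
    have hz' : s⁻¹ • z ∈ Metric.ball e r₂ := by
      rw [Metric.mem_ball, dist_eq_norm] at hz ⊢
      have : s⁻¹ • z - e = s⁻¹ • (z - s • e) := by
        rw [smul_sub, smul_smul, inv_mul_cancel₀ hs0.ne', one_smul]
      rw [this, norm_smul, Real.norm_of_nonneg (by positivity), inv_mul_lt_iff₀ hs0]
      exact hz
    have hznorm : ‖z‖ < r₁ / 2 := by
      rw [Metric.mem_ball, dist_eq_norm] at hz
      calc ‖z‖ = ‖(z - s • e) + s • e‖ := by rw [sub_add_cancel]
        _ ≤ ‖z - s • e‖ + ‖s • e‖ := norm_add_le _ _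
        _ < s * r₂ + s * ‖e‖ := by
            rw [norm_smul, Real.norm_of_nonneg hs0.le]; linarith
        _ = r₁ / 2 := by rw [hs]; field_simp; ring
    have hball : ∀ τ ∈ Icc (0:ℝ) 1, y + τ • z ∈ Metric.ball x r₁ := by
      intro τ hτ
      have hy1 : dist y x < r₁ / 2 := hy.1
      rw [Metric.mem_ball]
      have h1 : ‖τ • z‖ ≤ ‖z‖ := by
        rw [norm_smul, Real.norm_of_nonneg hτ.1]
        exact mul_le_of_le_one_left (norm_nonneg _) hτ.2
      calc dist (y + τ • z) x ≤ dist (y + τ • z) y + dist y x := dist_triangle _ _ _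
        _ < r₁ := by rw [dist_self_add_left]; linarith
    have hderiv : ∀ τ ∈ Icc (0:ℝ) 1, HasDerivAt (fun τ : ℝ => f (y + τ • z))
        (fderiv ℝ f (y + τ • z) z) τ := by
      intro τ hτ
      have hmem := (hr₁U (hball τ hτ)).2
      have h1 : DifferentiableAt ℝ f (y + τ • z) :=
        (hf.differentiableOn (by simp)).differentiableAt (hU.mem_nhds hmem)
      have h2 : HasDerivAt (fun τ : ℝ => y + τ • z) z τ := by
        simpa using ((hasDerivAt_id τ).smul_const z).const_add y
      exact h1.hasFDerivAt.comp_hasDerivAt τ h2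
    have hneg : ∀ τ ∈ Icc (0:ℝ) 1, fderiv ℝ f (y + τ • z) z ≤ 0 := by
      intro τ hτ
      have h1 := hab (hr₁U (hball τ hτ)).1 (hr₂U hz')
      have h2 : fderiv ℝ f (y + τ • z) z = s * fderiv ℝ f (y + τ • z) (s⁻¹ • z) := by
        rw [map_smul, smul_eq_mul, ← mul_assoc, mul_inv_cancel₀ hs0.ne', one_mul]
      rw [h2]
      exact mul_nonpos_of_nonneg_of_nonpos hs0.le h1.le
    have hanti : AntitoneOn (fun τ : ℝ => f (y + τ • z)) (Icc 0 1) := by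
      refine antitoneOn_of_deriv_nonpos (convex_Icc 0 1)
        (fun τ hτ => (hderiv τ hτ).continuousAt.continuousWithinAt)
        (fun τ hτ => (hderiv τ (interior_subset hτ)).differentiableAt.differentiableWithinAt)
        (fun τ hτ => ?_)
      rw [(hderiv τ (interior_subset hτ)).deriv]
      exact hneg τ (interior_subset hτ)
    have hyU : y ∈ Ω ∩ U := ⟨hy.2, by
      have := (hr₁U (hball 0 ⟨le_rfl, zero_le_one⟩)).2
      simpa using this⟩
    rw [hUΩ] at hyU
    have hfy : f y < 0 := hyU.2
    have h1 := hanti ⟨le_rfl, zero_le_one⟩ ht ht.1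
    simp only [zero_smul, add_zero] at h1
    have h2 : y + t • z ∈ {y ∈ U | f y < 0} := ⟨(hr₁U (hball t ht)).2, h1.trans_lt hfy⟩
    rw [← hUΩ] at h2
    exact h2.1

theorem lintegral_comp_add_smul (f : 𝔼 → ℝ≥0∞) (hf : Measurable f) (y : 𝔼) {t : ℝ} (ht : 0 < t) :
    ∫⁻ z, f (y + t • z) = ENNReal.ofReal t ^ (-(n : ℝ)) * ∫⁻ z, f z := by
  have h1 : ∫⁻ z, f (y + t • z) = ∫⁻ z, f (y + z) ∂(Measure.map (fun z => t • z) volume) := by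
    rw [lintegral_map (by fun_prop) (by fun_prop)]
  rw [h1, Measure.map_addHaar_smul _ ht.ne', lintegral_smul_measure,
    lintegral_add_left_eq_self (μ := (volume : Measure 𝔼)) f, smul_eq_mul]
  congr 1
  rw [abs_of_pos (by positivity), finrank_euclideanSpace_fin, ENNReal.ofReal_inv_of_pos (by positivity),
    ENNReal.ofReal_pow ht.le, ENNReal.rpow_neg, ENNReal.rpow_natCast]

/-- `∫₀¹ t ^ (τ - 1) dt`. -/
noncomputable def rpowMass (τ : ℝ) : ℝ≥0∞ := ∫⁻ t in Ioc (0:ℝ) 1, ENNReal.ofReal t ^ (τ - 1)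

theorem rpowMass_ne_top {τ : ℝ} (hτ : 0 < τ) : rpowMass τ ≠ ⊤ := by
  have h1 : IntegrableOn (fun t : ℝ => t ^ (τ - 1)) (Ioc 0 1) :=
    (intervalIntegrable_iff_integrableOn_Ioc_of_le zero_le_one).1
      (intervalIntegral.intervalIntegrable_rpow' (by linarith))
  have h2 : rpowMass τ = ∫⁻ t in Ioc (0:ℝ) 1, ENNReal.ofReal (t ^ (τ - 1)) :=
    setLIntegral_congr_fun measurableSet_Ioc fun t ht => ENNReal.ofReal_rpow_of_pos ht.1
  rw [h2]
  exact h1.lintegral_lt_top.ne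

/-- An `L^p → L^q` bound, in the subcritical range, for the integral of a function over the cone
with vertex `y` generated by `B`. -/
theorem lintegral_cone_rpow_le {p q τ : ℝ} (hp : 1 ≤ p) (hpq : p ≤ q)
    (hτ : τ = 1 - n * (1 / p - 1 / q)) {f : 𝔼 → ℝ≥0∞} (hf : Measurable f)
    {B : Set 𝔼} (hB : MeasurableSet B) :
    ∫⁻ y, (∫⁻ z in B, ∫⁻ t in Ioc (0:ℝ) 1, f (y + t • z)) ^ q ≤
      (volume B * (rpowMass τ * ∫⁻ x, f x ^ p)) * (rpowMass τ * ∫⁻ x, f x ^ p) ^ (q / p - 1)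
        * (volume B * rpowMass τ) ^ (q - q / p) := by
  have hp0 : 0 < p := by linarith
  have hq0 : 0 < q := by linarith
  set K := rpowMass τ with hK
  set A := ∫⁻ x, f x ^ p with hA
  set μ : Measure (𝔼 × ℝ) := (volume.restrict B).prod (volume.restrict (Ioc (0:ℝ) 1)) with hμ
  have hfp : Measurable fun x => f x ^ p := hf.pow_const p
  have hTm : ∀ c : ℝ, Measurable fun a : 𝔼 × ℝ => ENNReal.ofReal a.2 ^ c := fun c => by fun_prop
  have hmap : ∀ y : 𝔼, Measurable fun a : 𝔼 × ℝ => y + a.2 • a.1 := fun y => by fun_prop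
  let F : 𝔼 → Fin 3 → 𝔼 × ℝ → ℝ≥0∞ := fun y => ![
    fun a => f (y + a.2 • a.1) ^ p * ENNReal.ofReal a.2 ^ (τ - 1),
    fun a => f (y + a.2 • a.1) ^ p * ENNReal.ofReal a.2 ^ (n + τ - 1),
    fun a => ENNReal.ofReal a.2 ^ (τ - 1)]
  let c : Fin 3 → ℝ := ![1 / q, 1 / p - 1 / q, 1 - 1 / p]
  have hFm0 : ∀ y, Measurable (F y 0) := fun y => (hfp.comp (hmap y)).mul (hTm _)
  have hFm1 : ∀ y, Measurable (F y 1) := fun y => (hfp.comp (hmap y)).mul (hTm _)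
  have hFm2 : ∀ y, Measurable (F y 2) := fun y => hTm _
  have hinv : 1 / q ≤ 1 / p := one_div_le_one_div_of_le hp0 hpq
  have hinv1 : 1 / p ≤ 1 := by rw [div_le_one hp0]; exact hp
  have hc0 : 0 ≤ 1 / q := by positivity
  have hc1 : 0 ≤ 1 / p - 1 / q := by linarith
  have hc2 : 0 ≤ 1 - 1 / p := by linarith
  -- Hölder's inequality with three factors
  have hHolder : ∀ y, ∫⁻ z in B, ∫⁻ t in Ioc (0:ℝ) 1, f (y + t • z)
      ≤ (∫⁻ a, F y 0 a ∂μ) ^ (1 / q) * (∫⁻ a, F y 1 a ∂μ) ^ (1 / p - 1 / q)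
        * (∫⁻ a, F y 2 a ∂μ) ^ (1 - 1 / p) := by
    intro y
    have h1 := ENNReal.lintegral_prod_norm_pow_le (μ := μ) (Finset.univ : Finset (Fin 3))
      (f := F y) (p := c) (fun i _ => by
        fin_cases i
        · exact (hFm0 y).aemeasurable
        · exact (hFm1 y).aemeasurable
        · exact (hFm2 y).aemeasurable)
      (by simp [c, Fin.sum_univ_three])
      (fun i _ => by
        fin_cases i
        · exact hc0
        · exact hc1
        · exact hc2)
    simp only [Fin.prod_univ_three] at h1
    refine le_trans (le_of_eq ?_) h1
    rw [lintegral_lintegral (f := fun z t => f (y + t • z)) (hf.comp (hmap y)).aemeasurable]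
    refine lintegral_congr_ae ?_
    have hae : ∀ᵐ a ∂μ, a.2 ∈ Ioc (0:ℝ) 1 := by
      rw [hμ, Measure.prod_restrict]
      filter_upwards [ae_restrict_mem (hB.prod measurableSet_Ioc)] with a ha
      exact ha.2
    filter_upwards [hae] with a ha
    have ht0 : ENNReal.ofReal a.2 ≠ 0 := by simpa using ha.1
    have htop : ENNReal.ofReal a.2 ≠ ⊤ := ENNReal.ofReal_ne_top
    change f (y + a.2 • a.1) =
      (f (y + a.2 • a.1) ^ p * ENNReal.ofReal a.2 ^ (τ - 1)) ^ (1 / q) *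
      (f (y + a.2 • a.1) ^ p * ENNReal.ofReal a.2 ^ (n + τ - 1)) ^ (1 / p - 1 / q) *
      (ENNReal.ofReal a.2 ^ (τ - 1)) ^ (1 - 1 / p)
    set X := f (y + a.2 • a.1) with hX
    set T := ENNReal.ofReal a.2 with hT
    rw [ENNReal.mul_rpow_of_nonneg _ _ hc0, ENNReal.mul_rpow_of_nonneg _ _ hc1]
    simp only [← ENNReal.rpow_mul]
    calc X = X ^ (p * (1 / q) + p * (1 / p - 1 / q)) *
          T ^ ((τ - 1) * (1 / q) + (n + τ - 1) * (1 / p - 1 / q) + (τ - 1) * (1 - 1 / p)) := by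
          have e1 : p * (1 / q) + p * (1 / p - 1 / q) = 1 := by field_simp; ring
          have e2 : (τ - 1) * (1 / q) + (n + τ - 1) * (1 / p - 1 / q) + (τ - 1) * (1 - 1 / p) = 0 := by
            rw [hτ]; ring
          rw [e1, e2, ENNReal.rpow_one, ENNReal.rpow_zero, mul_one]
      _ = _ := by
          rw [ENNReal.rpow_add_of_nonneg _ _ (by positivity) (mul_nonneg hp0.le hc1),
            ENNReal.rpow_add _ _ ht0 htop, ENNReal.rpow_add _ _ ht0 htop]
          ring
  have hint2 : ∀ y, ∫⁻ a, F y 2 a ∂μ = volume B * K := by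
    intro y
    change ∫⁻ a, ENNReal.ofReal a.2 ^ (τ - 1) ∂μ = _
    rw [hμ, lintegral_prod _ (hTm _).aemeasurable]
    simp only [lintegral_const, Measure.restrict_apply_univ]
    rw [mul_comm]; rfl
  have hint1 : ∀ y, ∫⁻ a, F y 1 a ∂μ ≤ K * A := by
    intro y
    rw [hμ, lintegral_prod_symm _ (hFm1 y).aemeasurable, hK, rpowMass,
      ← lintegral_mul_const _ (by fun_prop)]
    refine setLIntegral_mono' measurableSet_Ioc fun t ht => ?_
    change ∫⁻ z in B, f (y + t • z) ^ p * ENNReal.ofReal t ^ (n + τ - 1) ≤ _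
    have hm : Measurable fun z => f (y + t • z) ^ p := hfp.comp (by fun_prop)
    rw [lintegral_mul_const _ hm]
    refine (mul_le_mul_left (setLIntegral_le_lintegral B _) _).trans ?_
    rw [lintegral_comp_add_smul (fun x => f x ^ p) hfp y ht.1, mul_right_comm,
      ← ENNReal.rpow_add _ _ (by simpa using ht.1) ENNReal.ofReal_ne_top]
    rw [show -(n:ℝ) + (n + τ - 1) = τ - 1 by ring]
  have hint0 : ∫⁻ y, ∫⁻ a, F y 0 a ∂μ = volume B * (K * A) := by
    have hm : Measurable (fun b : 𝔼 × (𝔼 × ℝ) => F b.1 0 b.2) := by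
      change Measurable fun b : 𝔼 × (𝔼 × ℝ) =>
        f (b.1 + b.2.2 • b.2.1) ^ p * ENNReal.ofReal b.2.2 ^ (τ - 1)
      exact (hfp.comp (by fun_prop)).mul (by fun_prop)
    rw [lintegral_lintegral_swap hm.aemeasurable]
    have h1 : ∀ a : 𝔼 × ℝ, ∫⁻ y, F y 0 a = A * ENNReal.ofReal a.2 ^ (τ - 1) := by
      intro a
      change ∫⁻ y, f (y + a.2 • a.1) ^ p * ENNReal.ofReal a.2 ^ (τ - 1) = _
      have hm' : Measurable fun y => f (y + a.2 • a.1) ^ p := hfp.comp (by fun_prop)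
      rw [lintegral_mul_const _ hm',
        lintegral_add_right_eq_self (μ := (volume : Measure 𝔼)) (fun x => f x ^ p)]
    simp_rw [h1]
    rw [lintegral_const_mul _ (hTm _)]
    have := hint2 0
    change ∫⁻ a, ENNReal.ofReal a.2 ^ (τ - 1) ∂μ = _ at this
    rw [this]; ring
  have hq1 : 0 ≤ q / p - 1 := by
    rw [sub_nonneg, le_div_iff₀ hp0]; linarith
  calc ∫⁻ y, (∫⁻ z in B, ∫⁻ t in Ioc (0:ℝ) 1, f (y + t • z)) ^ q
      ≤ ∫⁻ y, (∫⁻ a, F y 0 a ∂μ) * ((K * A) ^ (q / p - 1) * (volume B * K) ^ (q - q / p)) := by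
        refine lintegral_mono fun y => ?_
        refine (ENNReal.rpow_le_rpow (hHolder y) hq0.le).trans ?_
        rw [ENNReal.mul_rpow_of_nonneg _ _ hq0.le, ENNReal.mul_rpow_of_nonneg _ _ hq0.le, hint2]
        simp only [← ENNReal.rpow_mul]
        rw [show 1 / q * q = 1 by field_simp, ENNReal.rpow_one,
          show (1 / p - 1 / q) * q = q / p - 1 by field_simp,
          show (1 - 1 / p) * q = q - q / p by ring, mul_assoc]
        gcongr
        exact hint1 y
    _ = _ := by
        have hm : Measurable fun y => ∫⁻ a, F y 0 a ∂μ := by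
          have : Measurable (fun b : 𝔼 × (𝔼 × ℝ) => F b.1 0 b.2) := by
            change Measurable fun b : 𝔼 × (𝔼 × ℝ) =>
              f (b.1 + b.2.2 • b.2.1) ^ p * ENNReal.ofReal b.2.2 ^ (τ - 1)
            exact (hfp.comp (by fun_prop)).mul (by fun_prop)
          exact this.lintegral_prod_right'
        rw [lintegral_mul_const _ hm, hint0, ← mul_assoc]

/-- Difference between a Sobolev function and its averages over translates of a set `B` that stay
inside the domain. -/
theorem IsSobolevRep.lintegral_sub_average_le {Ω W B : Set 𝔼} {p q τ R : ℝ} {u : 𝔼 → ℝ} {g : 𝔼 → 𝔼}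
    [IsFiniteMeasure (volume.restrict Ω)] (hp : 1 ≤ p) (hpq : p ≤ q)
    (hτ : τ = 1 - n * (1 / p - 1 / q)) (h : IsSobolevRep Ω p u g) (hW : IsOpen W)
    (hB : MeasurableSet B) (hB0 : volume B ≠ 0) (hBtop : volume B ≠ ⊤) (hR : ∀ z ∈ B, ‖z‖ ≤ R)
    (hcone : ∀ y ∈ W, ∀ z ∈ B, ∀ t ∈ Icc (0:ℝ) 1, y + t • z ∈ Ω) :
    ∫⁻ y in W, ‖u y - ⨍ z in B, u (y + z)‖ₑ ^ q ≤ (ENNReal.ofReal R / volume B) ^ q *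
      ((volume B * (rpowMass τ * ∫⁻ x, ‖g x‖ₑ ^ p)) *
        (rpowMass τ * ∫⁻ x, ‖g x‖ₑ ^ p) ^ (q / p - 1)
        * (volume B * rpowMass τ) ^ (q - q / p)) := by
  have hq0 : 0 < q := by linarith
  have hum := h.measurable_fun
  have hgm : Measurable fun x => ‖g x‖ₑ := h.measurable_grad.enorm
  have hui := h.integrable_fun hp
  -- joint measurability of both sides of the increment bound
  have hm1 : Measurable fun a : 𝔼 × 𝔼 => ‖u (a.1 + a.2) - u a.1‖ₑ :=
    ((hum.comp (by fun_prop)).sub (hum.comp measurable_fst)).enorm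
  have hm2 : Measurable fun a : 𝔼 × 𝔼 => ∫⁻ t in Ioc (0:ℝ) 1, ‖g (a.1 + t • a.2)‖ₑ := by
    have : Measurable fun b : (𝔼 × 𝔼) × ℝ => ‖g (b.1.1 + b.2 • b.1.2)‖ₑ := hgm.comp (by fun_prop)
    exact this.lintegral_prod_right'
  have hpt : ∀ z ∈ B, ∀ᵐ y ∂(volume.restrict W), ‖u (y + z) - u y‖ₑ
      ≤ ENNReal.ofReal R * ∫⁻ t in Ioc (0:ℝ) 1, ‖g (y + t • z)‖ₑ := by
    intro z hz
    have hid := h.memW1p.2.2.ae_translate_sub hui (h.integrable_grad hp)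
      h.measurable_grad h.fun_eq_zero h.grad_eq_zero hW (z := z)
      (fun y hy t ht => hcone y hy z hz t ht)
    filter_upwards [ae_restrict_of_ae hid, ae_restrict_mem hW.measurableSet] with y hy hyW
    rw [hy hyW, intervalIntegral.integral_of_le zero_le_one]
    refine (enorm_integral_le_lintegral_enorm _).trans ?_
    rw [← lintegral_const_mul' _ _ ENNReal.ofReal_ne_top]
    refine lintegral_mono fun t => ?_
    rw [← ofReal_norm, ← ofReal_norm, ← ENNReal.ofReal_mul ((norm_nonneg z).trans (hR z hz)),
      mul_comm R]
    refine ENNReal.ofReal_le_ofReal ((norm_inner_le_norm _ _).trans ?_)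
    exact mul_le_mul_of_nonneg_left (hR z hz) (norm_nonneg _)
  have hpt2 : ∀ᵐ y ∂(volume.restrict W), ∀ᵐ z ∂(volume.restrict B), ‖u (y + z) - u y‖ₑ
      ≤ ENNReal.ofReal R * ∫⁻ t in Ioc (0:ℝ) 1, ‖g (y + t • z)‖ₑ := by
    refine (Measure.ae_ae_comm (p := fun y z => ‖u (y + z) - u y‖ₑ
      ≤ ENNReal.ofReal R * ∫⁻ t in Ioc (0:ℝ) 1, ‖g (y + t • z)‖ₑ)
      (measurableSet_le hm1 (hm2.const_mul _))).2 ?_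
    exact (ae_restrict_iff' hB).2 (Eventually.of_forall hpt)
  have hBr : volume.real B ≠ 0 := by
    rw [measureReal_def]; exact (ENNReal.toReal_pos hB0 hBtop).ne'
  have : IsFiniteMeasure (volume.restrict B) := ⟨by simpa using hBtop.lt_top⟩
  have hdiff : ∀ᵐ y ∂(volume.restrict W), ‖u y - ⨍ z in B, u (y + z)‖ₑ ≤
      ENNReal.ofReal R / volume B * ∫⁻ z in B, ∫⁻ t in Ioc (0:ℝ) 1, ‖g (y + t • z)‖ₑ := by
    filter_upwards [hpt2] with y hy
    have hi : IntegrableOn (fun z => u (y + z)) B := (hui.comp_add_left y).integrableOn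
    have e1 : (⨍ z in B, u (y + z)) - u y = (volume.real B)⁻¹ * ∫ z in B, (u (y + z) - u y) := by
      rw [setAverage_eq, integral_sub hi (integrable_const _), integral_const,
        measureReal_restrict_apply_univ, smul_eq_mul, smul_eq_mul]
      field_simp
    rw [← enorm_neg, neg_sub, e1, enorm_mul]
    have e2 : ‖(volume.real B)⁻¹‖ₑ = (volume B)⁻¹ := by
      rw [← ofReal_norm, Real.norm_of_nonneg (by positivity), measureReal_def,
        ENNReal.ofReal_inv_of_pos (ENNReal.toReal_pos hB0 hBtop), ENNReal.ofReal_toReal hBtop]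
    rw [e2, div_eq_mul_inv, mul_comm (ENNReal.ofReal R), mul_assoc]
    refine mul_le_mul_right ((enorm_integral_le_lintegral_enorm _).trans ?_) _
    rw [← lintegral_const_mul' _ _ ENNReal.ofReal_ne_top]
    exact lintegral_mono_ae hy
  calc ∫⁻ y in W, ‖u y - ⨍ z in B, u (y + z)‖ₑ ^ q
      ≤ ∫⁻ y in W, (ENNReal.ofReal R / volume B) ^ q *
          (∫⁻ z in B, ∫⁻ t in Ioc (0:ℝ) 1, ‖g (y + t • z)‖ₑ) ^ q := by
        refine lintegral_mono_ae ?_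
        filter_upwards [hdiff] with y hy
        rw [← ENNReal.mul_rpow_of_nonneg _ _ hq0.le]
        exact ENNReal.rpow_le_rpow hy hq0.le
    _ ≤ ∫⁻ y, (ENNReal.ofReal R / volume B) ^ q *
          (∫⁻ z in B, ∫⁻ t in Ioc (0:ℝ) 1, ‖g (y + t • z)‖ₑ) ^ q :=
        setLIntegral_le_lintegral _ _
    _ = (ENNReal.ofReal R / volume B) ^ q *
          ∫⁻ y, (∫⁻ z in B, ∫⁻ t in Ioc (0:ℝ) 1, ‖g (y + t • z)‖ₑ) ^ q := by
        rw [lintegral_const_mul']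
        exact ENNReal.rpow_ne_top_of_nonneg hq0.le
          (ENNReal.div_ne_top ENNReal.ofReal_ne_top hB0)
    _ ≤ _ := mul_le_mul_right (lintegral_cone_rpow_le hp hpq hτ hgm hB) _

/-- Averages over small cone sections approximate Sobolev functions in `L^q`, uniformly on bounded
sets of `W^{1,p}`. -/
theorem exists_lintegral_sub_average_le {Ω W : Set 𝔼} {p q τ ρ : ℝ} {ν : 𝔼}
    [IsFiniteMeasure (volume.restrict Ω)] (hp : 1 ≤ p) (hpq : p ≤ q)
    (hτ : τ = 1 - n * (1 / p - 1 / q)) (hτ0 : 0 < τ) (hW : IsOpen W) (hρ : 0 < ρ)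
    (hcone : ∀ y ∈ W, ∀ z ∈ Metric.ball ν ρ, ∀ t ∈ Icc (0:ℝ) 1, y + t • z ∈ Ω) :
    ∃ C : ℝ≥0∞, C ≠ ⊤ ∧ ∀ s ∈ Ioc (0:ℝ) 1, ∀ u g, IsSobolevRep Ω p u g →
      ∫⁻ y in W, ‖u y - ⨍ z in Metric.ball (s • ν) (s * ρ), u (y + z)‖ₑ ^ q ≤
        C * ENNReal.ofReal s ^ (q * τ) * (∫⁻ x, ‖g x‖ₑ ^ p) ^ (q / p) := by
  have hp0 : 0 < p := by linarith
  have hq0 : 0 < q := by linarith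
  have hq1 : 0 ≤ q / p - 1 := by
    rw [sub_nonneg, le_div_iff₀ hp0]; linarith
  have hq2 : 0 ≤ q - q / p := by
    rw [sub_nonneg, div_le_iff₀ hp0]; nlinarith
  set m := volume (Metric.ball (0 : 𝔼) ρ) with hm
  have hm0 : m ≠ 0 := (Metric.measure_ball_pos volume _ hρ).ne'
  have hmtop : m ≠ ⊤ := Metric.isBounded_ball.measure_lt_top.ne
  set K := rpowMass τ with hK
  have hKtop : K ≠ ⊤ := rpowMass_ne_top hτ0
  set R := ENNReal.ofReal (‖ν‖ + ρ) with hR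
  refine ⟨(R / m) ^ q * (m * (K * K ^ (q / p - 1)) * (m * K) ^ (q - q / p)), ?_, ?_⟩
  · refine ENNReal.mul_ne_top (ENNReal.rpow_ne_top_of_nonneg hq0.le
      (ENNReal.div_ne_top ENNReal.ofReal_ne_top hm0)) (ENNReal.mul_ne_top (ENNReal.mul_ne_top hmtop
        (ENNReal.mul_ne_top hKtop (ENNReal.rpow_ne_top_of_nonneg hq1 hKtop)))
        (ENNReal.rpow_ne_top_of_nonneg hq2 (ENNReal.mul_ne_top hmtop hKtop)))
  intro s hs u g h
  set σ := ENNReal.ofReal s with hσ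
  have hσ0 : σ ≠ 0 := by simpa [hσ] using hs.1
  have hσtop : σ ≠ ⊤ := ENNReal.ofReal_ne_top
  set A := ∫⁻ x, ‖g x‖ₑ ^ p with hA
  have hvol : volume (Metric.ball (s • ν) (s * ρ)) = σ ^ (n : ℝ) * m := by
    rw [Measure.addHaar_ball_mul_of_pos volume _ hs.1, finrank_euclideanSpace_fin,
      ENNReal.ofReal_pow hs.1.le, ENNReal.rpow_natCast]
  have hσn0 : σ ^ (n : ℝ) ≠ 0 := by simp [hσ0]
  have hσntop : σ ^ (n : ℝ) ≠ ⊤ := ENNReal.rpow_ne_top_of_nonneg (by positivity) hσtop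
  have hmain := h.lintegral_sub_average_le hp hpq hτ hW
    (B := Metric.ball (s • ν) (s * ρ)) (R := s * (‖ν‖ + ρ)) Metric.isOpen_ball.measurableSet
    (Metric.measure_ball_pos volume _ (mul_pos hs.1 hρ)).ne'
    Metric.isBounded_ball.measure_lt_top.ne
    (fun z hz => by
      rw [Metric.mem_ball, dist_eq_norm] at hz
      calc ‖z‖ = ‖(z - s • ν) + s • ν‖ := by rw [sub_add_cancel]
        _ ≤ ‖z - s • ν‖ + ‖s • ν‖ := norm_add_le _ _
        _ ≤ s * ρ + s * ‖ν‖ := by rw [norm_smul, Real.norm_of_nonneg hs.1.le]; linarith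
        _ = s * (‖ν‖ + ρ) := by ring)
    (fun y hy z hz t ht => by
      have hz' : s⁻¹ • z ∈ Metric.ball ν ρ := by
        rw [Metric.mem_ball, dist_eq_norm] at hz ⊢
        have : s⁻¹ • z - ν = s⁻¹ • (z - s • ν) := by
          rw [smul_sub, smul_smul, inv_mul_cancel₀ hs.1.ne', one_smul]
        rw [this, norm_smul, Real.norm_of_nonneg (by have := hs.1; positivity),
          inv_mul_lt_iff₀ hs.1]
        exact hz
      have := hcone y hy _ hz' (t * s)
        ⟨mul_nonneg ht.1 hs.1.le, mul_le_one₀ ht.2 hs.1.le hs.2⟩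
      rwa [smul_smul, mul_assoc, mul_inv_cancel₀ hs.1.ne', mul_one] at this)
  refine hmain.trans (le_of_eq ?_)
  have e1 : ENNReal.ofReal (s * (‖ν‖ + ρ)) / (σ ^ (n : ℝ) * m) = σ ^ (1 - (n : ℝ)) * (R / m) := by
    rw [ENNReal.ofReal_mul hs.1.le, div_eq_mul_inv, ENNReal.mul_inv (Or.inl hσn0) (Or.inl hσntop),
      ENNReal.rpow_sub _ _ hσ0 hσtop, ENNReal.rpow_one, div_eq_mul_inv, div_eq_mul_inv]
    ring
  have e2 : A ^ (q / p) = A * A ^ (q / p - 1) := by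
    nth_rewrite 2 [← ENNReal.rpow_one A]
    rw [← ENNReal.rpow_add_of_nonneg _ _ zero_le_one hq1]
    congr 1; ring
  have e3 : σ ^ (q * τ) = σ ^ ((1 - (n:ℝ)) * q) * σ ^ (n:ℝ) * σ ^ ((n:ℝ) * (q - q / p)) := by
    rw [← ENNReal.rpow_add _ _ hσ0 hσtop, ← ENNReal.rpow_add _ _ hσ0 hσtop]
    congr 1
    rw [hτ]; field_simp; ring
  rw [hvol, e1, e2, e3, ENNReal.mul_rpow_of_nonneg _ _ hq0.le, ENNReal.mul_rpow_of_nonneg K A hq1,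
    mul_assoc (σ ^ (n:ℝ)) m K, ENNReal.mul_rpow_of_nonneg (σ ^ (n:ℝ)) (m * K) hq2,
    ← ENNReal.rpow_mul, ← ENNReal.rpow_mul]
  ring

/-- A bounded sequence in `L^p`, `p > 1`, on a finite measure space has a subsequence whose
integrals over every measurable set converge. -/
theorem exists_subseq_tendsto_setIntegral {μ : Measure 𝔼} [IsFiniteMeasure μ] {p : ℝ} (hp : 1 < p)
    {u : ℕ → 𝔼 → ℝ} (hu : ∀ k, MemLp (u k) (ENNReal.ofReal p) μ) {M : ℝ}
    (hM : ∀ k, eLpNorm (u k) (ENNReal.ofReal p) μ ≤ ENNReal.ofReal M) :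
    ∃ φ : ℕ → ℕ, StrictMono φ ∧ ∀ A, MeasurableSet A →
      ∃ l, Tendsto (fun k => ∫ x in A, u (φ k) x ∂μ) atTop (𝓝 l) := by
  have hconj : p.HolderConjugate p.conjExponent := Real.HolderConjugate.conjExponent hp
  set p' := p.conjExponent with hp'
  have hp'1 : 1 < p' := hconj.symm.lt
  have : (ENNReal.ofReal p).HolderConjugate (ENNReal.ofReal p') := hconj.ennrealOfReal
  have : Fact (1 ≤ ENNReal.ofReal p) := ⟨by simpa using ENNReal.ofReal_le_ofReal hp.le⟩
  have : Fact (1 ≤ ENNReal.ofReal p') := ⟨by simpa using ENNReal.ofReal_le_ofReal hp'1.le⟩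
  have : Fact (ENNReal.ofReal p' ≠ ⊤) := ⟨ENNReal.ofReal_ne_top⟩
  let P := (ContinuousLinearMap.mul ℝ ℝ).lpPairing μ (ENNReal.ofReal p) (ENNReal.ofReal p')
  let T : ℕ → WeakDual ℝ (Lp ℝ (ENNReal.ofReal p') μ) := fun k =>
    StrongDual.toWeakDual (P ((hu k).toLp (u k)))
  have hT : ∀ k, T k ∈ WeakDual.toStrongDual ⁻¹'
      Metric.closedBall (0 : StrongDual ℝ (Lp ℝ (ENNReal.ofReal p') μ)) (‖P‖ * max M 0) := by
    intro k
    change P ((hu k).toLp (u k)) ∈ Metric.closedBall _ _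
    rw [mem_closedBall_zero_iff]
    refine (P.le_opNorm _).trans (mul_le_mul_of_nonneg_left ?_ (norm_nonneg _))
    rw [Lp.norm_toLp]
    refine (ENNReal.toReal_mono ENNReal.ofReal_ne_top (hM k)).trans ?_
    rw [ENNReal.toReal_ofReal']
  obtain ⟨Λ, -, φ, hφ, hlim⟩ := WeakDual.isSeqCompact_closedBall ℝ _ _ _ hT
  refine ⟨φ, hφ, fun A hA => ?_⟩
  set χ := indicatorConstLp (ENNReal.ofReal p') hA (measure_ne_top μ A) (1 : ℝ) with hχ
  refine ⟨Λ χ, ?_⟩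
  have h1 := ((WeakDual.eval_continuous χ).tendsto Λ).comp hlim
  refine h1.congr fun k => ?_
  change P ((hu (φ k)).toLp (u (φ k))) χ = _
  rw [ContinuousLinearMap.lpPairing_eq_integral, ← integral_indicator hA]
  refine integral_congr_ae ?_
  filter_upwards [(hu (φ k)).coeFn_toLp, indicatorConstLp_coeFn (p := ENNReal.ofReal p') (hs := hA)
    (hμs := measure_ne_top μ A) (c := (1:ℝ))] with x h1 h2
  rw [ContinuousLinearMap.mul_apply', h1, hχ, h2]
  by_cases hx : x ∈ A <;> simp [hx]

theorem setIntegral_translate_eq {Ω B : Set 𝔼} (hB : MeasurableSet B) {u : 𝔼 → ℝ}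
    (hu0 : ∀ x ∉ Ω, u x = 0) (y : 𝔼) :
    ∫ z in B, u (y + z) = ∫ x in {x | x - y ∈ B}, u x ∂(volume.restrict Ω) := by
  have hA : MeasurableSet {x : 𝔼 | x - y ∈ B} := (measurable_sub_const y) hB
  rw [Measure.restrict_restrict hA, ← setIntegral_eq_of_subset_of_forall_sdiff_eq_zero hA
    inter_subset_left (fun x hx => hu0 x fun hxΩ => hx.2 ⟨hx.1, hxΩ⟩)]
  rw [← integral_indicator hB, ← integral_indicator hA,
    ← integral_add_left_eq_self (indicator {x | x - y ∈ B} u) y]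
  congr 1
  funext z
  by_cases hz : z ∈ B <;> simp [hz]

/-- Averages of a weakly convergent bounded sequence converge in `L^q` of a bounded set. -/
theorem exists_tendsto_eLpNorm_average {Ω W B : Set 𝔼} [IsFiniteMeasure (volume.restrict Ω)]
    [IsFiniteMeasure (volume.restrict W)] {q : ℝ} (hq : 0 < q) (hB : MeasurableSet B)
    {u : ℕ → 𝔼 → ℝ} (hum : ∀ k, Measurable (u k)) (hui : ∀ k, Integrable (u k))
    (hu0 : ∀ k, ∀ x ∉ Ω, u k x = 0) {C : ℝ} (hC : ∀ k, ∫ x, ‖u k x‖ ≤ C)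
    (hlim : ∀ A, MeasurableSet A →
      ∃ l, Tendsto (fun k => ∫ x in A, u k x ∂(volume.restrict Ω)) atTop (𝓝 l)) :
    ∃ T : 𝔼 → ℝ, AEStronglyMeasurable T (volume.restrict W) ∧
      Tendsto (fun k => eLpNorm ((fun y => ⨍ z in B, u k (y + z)) - T) (ENNReal.ofReal q)
        (volume.restrict W)) atTop (𝓝 0) := by
  set Tk : ℕ → 𝔼 → ℝ := fun k y => ⨍ z in B, u k (y + z) with hTk
  have hconv : ∀ y, ∃ l, Tendsto (fun k => Tk k y) atTop (𝓝 l) := by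
    intro y
    obtain ⟨l, hl⟩ := hlim {x | x - y ∈ B} ((measurable_sub_const y) hB)
    refine ⟨(volume.real B)⁻¹ * l, (hl.const_mul _).congr fun k => ?_⟩
    rw [hTk]
    simp only [setAverage_eq, smul_eq_mul]
    rw [setIntegral_translate_eq hB (hu0 k) y]
  choose T hT using hconv
  have hTkm : ∀ k, Measurable (Tk k) := by
    intro k
    have h1 : Measurable fun a : 𝔼 × 𝔼 => u k (a.1 + a.2) := (hum k).comp (by fun_prop)
    have h2 := (h1.stronglyMeasurable.integral_prod_right' (ν := volume.restrict B)).measurable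
    simp only [hTk, setAverage_eq, smul_eq_mul]
    exact h2.const_mul _
  have hTm : Measurable T := measurable_of_tendsto_metrizable hTkm (tendsto_pi_nhds.2 hT)
  have hbd : ∀ k y, ‖Tk k y‖ ≤ (volume.real B)⁻¹ * C := by
    intro k y
    simp only [hTk, setAverage_eq, smul_eq_mul]
    rw [norm_mul, Real.norm_of_nonneg (by positivity)]
    refine mul_le_mul_of_nonneg_left ?_ (by positivity)
    refine (norm_integral_le_integral_norm _).trans (le_trans ?_ (hC k))
    rw [← integral_add_left_eq_self (fun x => ‖u k x‖) y]
    exact setIntegral_le_integral ((hui k).comp_add_left y).norm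
      (Eventually.of_forall fun _ => norm_nonneg _)
  set C' := (volume.real B)⁻¹ * C with hC'
  have hbdT : ∀ y, ‖T y‖ ≤ C' := fun y =>
    le_of_tendsto (hT y).norm (Eventually.of_forall fun k => hbd k y)
  refine ⟨T, hTm.aestronglyMeasurable, ?_⟩
  have hI : Tendsto (fun k => ∫⁻ y in W, ‖Tk k y - T y‖ₑ ^ q) atTop (𝓝 (∫⁻ _ in W, 0)) := by
    refine tendsto_lintegral_of_dominated_convergence (fun _ => ENNReal.ofReal (C' + C') ^ q)
      (fun k => (((hTkm k).sub hTm).enorm).pow_const q) ?_ ?_ ?_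
    · intro k
      refine Eventually.of_forall fun y => ENNReal.rpow_le_rpow ?_ hq.le
      rw [← ofReal_norm]
      exact ENNReal.ofReal_le_ofReal ((norm_sub_le _ _).trans (add_le_add (hbd k y) (hbdT y)))
    · rw [lintegral_const]
      exact ENNReal.mul_ne_top (ENNReal.rpow_ne_top_of_nonneg hq.le ENNReal.ofReal_ne_top)
        (measure_ne_top _ _)
    · refine Eventually.of_forall fun y => ?_
      have h1 : Tendsto (fun k => ‖Tk k y - T y‖ₑ) atTop (𝓝 0) := by
        rw [← enorm_zero (E := ℝ), ← sub_self (T y)]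
        exact (continuous_enorm.tendsto _).comp ((hT y).sub_const _)
      have h2 := h1.ennrpow_const q
      rwa [ENNReal.zero_rpow_of_pos hq] at h2
  rw [lintegral_zero] at hI
  have h3 := hI.ennrpow_const (1 / q)
  rw [ENNReal.zero_rpow_of_pos (by positivity)] at h3
  refine h3.congr fun k => ?_
  rw [eLpNorm_eq_lintegral_rpow_enorm_toReal (by simpa using hq) ENNReal.ofReal_ne_top,
    ENNReal.toReal_ofReal hq.le]
  rfl

/-- **Rellich–Kondrachov compactness** in a bounded domain with smooth boundary, for exponents
`p ≤ q` with `1 / p - 1 / q < 1 / n`. -/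
theorem exists_subseq_tendsto_eLpNorm {Ω : Set 𝔼} (hΩ : IsOpen Ω) (hΩb : IsBounded Ω)
    (hΩs : HasSmoothBoundary Ω) [IsFiniteMeasure (volume.restrict Ω)] {p q : ℝ} (hp : 1 < p)
    (hpq : p ≤ q) (hsub : 0 < 1 - n * (1 / p - 1 / q)) {u : ℕ → 𝔼 → ℝ} {g : ℕ → 𝔼 → 𝔼}
    (h : ∀ k, IsSobolevRep Ω p (u k) (g k))
    (hq : ∀ k, MemLp (u k) (ENNReal.ofReal q) (volume.restrict Ω)) {M : ℝ}
    (hu : ∀ k, eLpNorm (u k) (ENNReal.ofReal p) (volume.restrict Ω) ≤ ENNReal.ofReal M)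
    (hg : ∀ k, ∫⁻ x, ‖g k x‖ₑ ^ p ≤ ENNReal.ofReal M) :
    ∃ φ : ℕ → ℕ, StrictMono φ ∧ ∃ v, MemLp v (ENNReal.ofReal q) (volume.restrict Ω) ∧
      Tendsto (fun k => eLpNorm (u (φ k) - v) (ENNReal.ofReal q) (volume.restrict Ω))
        atTop (𝓝 0) := by
  have hp0 : 0 < p := by linarith
  have hq0 : 0 < q := by linarith
  have hq1 : 1 ≤ ENNReal.ofReal q := by
    simpa using ENNReal.ofReal_le_ofReal (hp.le.trans hpq)
  have hqne : ENNReal.ofReal q ≠ 0 := by simpa using hq0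
  have hp1 : 1 ≤ ENNReal.ofReal p := by simpa using ENNReal.ofReal_le_ofReal hp.le
  obtain ⟨φ, hφ, hlim⟩ := exists_subseq_tendsto_setIntegral hp (fun k => (h k).memW1p.1) hu
  obtain ⟨C₁, hC₁⟩ : ∃ C, ∀ k, ∫ x, ‖u k x‖ ≤ C := by
    set c := ENNReal.ofReal M * (volume.restrict Ω) univ ^
      (1 / (1 : ℝ≥0∞).toReal - 1 / (ENNReal.ofReal p).toReal) with hc
    have hctop : c ≠ ⊤ := by
      refine ENNReal.mul_ne_top ENNReal.ofReal_ne_top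
        (ENNReal.rpow_ne_top_of_nonneg ?_ (measure_ne_top _ _))
      rw [ENNReal.toReal_ofReal hp0.le, ENNReal.toReal_one, sub_nonneg]
      exact one_div_le_one_div_of_le one_pos hp.le
    refine ⟨c.toReal, fun k => ?_⟩
    have h1 : ∫ x, ‖u k x‖ = ∫ x in Ω, ‖u k x‖ := by
      rw [setIntegral_eq_integral_of_forall_compl_eq_zero]
      intro x hx
      rw [(h k).fun_eq_zero x hx, norm_zero]
    rw [h1, integral_norm_eq_lintegral_enorm (h k).memW1p.1.aestronglyMeasurable,
      ← eLpNorm_one_eq_lintegral_enorm]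
    refine ENNReal.toReal_mono hctop ?_
    refine (eLpNorm_le_eLpNorm_mul_rpow_measure_univ hp1
      (h k).memW1p.1.aestronglyMeasurable).trans ?_
    exact mul_le_mul_left (hu k) _
  set w : ℕ → 𝔼 → ℝ := fun k => u (φ k) with hw
  -- local Cauchy estimate
  have hlocal : ∀ x ∈ closure Ω, ∃ V : Set 𝔼, IsOpen V ∧ x ∈ V ∧ ∀ ε : ℝ≥0∞, 0 < ε →
      ∃ N, ∀ j ≥ N, ∀ k ≥ N, ∫⁻ y in V ∩ Ω, ‖w j y - w k y‖ₑ ^ q ≤ ε := by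
    intro x hx
    obtain ⟨V, ν, ρ, hV, hxV, hρ, hcone⟩ := hΩs.exists_cone hΩ hx
    refine ⟨V, hV, hxV, ?_⟩
    set W := V ∩ Ω with hWdef
    have hWo : IsOpen W := hV.inter hΩ
    have hWfin : IsFiniteMeasure (volume.restrict W) :=
      isFiniteMeasure_of_le _ (Measure.restrict_mono inter_subset_right le_rfl)
    obtain ⟨C, hCtop, hC⟩ := exists_lintegral_sub_average_le hp.le hpq rfl hsub hWo hρ hcone
    set τ := 1 - n * (1 / p - 1 / q) with hτ
    have key : ∀ ε : ℝ≥0∞, 0 < ε → ∃ N, ∀ j ≥ N, ∀ k ≥ N,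
        eLpNorm (w j - w k) (ENNReal.ofReal q) (volume.restrict W) ≤ ε := by
      intro ε hε
      have hε4 : 0 < ε / 4 := ENNReal.div_pos hε.ne' (by simp)
      obtain ⟨s, hs, hsε⟩ : ∃ s ∈ Ioc (0:ℝ) 1,
          C * ENNReal.ofReal s ^ (q * τ) * ENNReal.ofReal M ^ (q / p) ≤ (ε / 4) ^ q := by
        have h1 : Tendsto (fun s : ℝ => C * ENNReal.ofReal s ^ (q * τ)
            * ENNReal.ofReal M ^ (q / p)) (𝓝[>] 0) (𝓝 0) := by
          have h2 : Tendsto (fun s : ℝ => ENNReal.ofReal s ^ (q * τ)) (𝓝[>] 0) (𝓝 0) := by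
            have h3 : Tendsto (fun s : ℝ => ENNReal.ofReal s) (𝓝[>] 0) (𝓝 0) := by
              have := (ENNReal.continuous_ofReal.tendsto 0).mono_left
                (nhdsWithin_le_nhds (s := Ioi 0))
              simpa using this
            have h4 := h3.ennrpow_const (q * τ)
            rwa [ENNReal.zero_rpow_of_pos (by positivity)] at h4
          have h5 := ENNReal.Tendsto.mul_const (ENNReal.Tendsto.const_mul h2 (Or.inr hCtop))
            (b := ENNReal.ofReal M ^ (q / p))
            (Or.inr (ENNReal.rpow_ne_top_of_nonneg (by positivity) ENNReal.ofReal_ne_top))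
          simpa using h5
        have h6 := h1.eventually (gt_mem_nhds (ENNReal.rpow_pos_of_nonneg hε4 hq0.le))
        have h7 : ∀ᶠ s in 𝓝[>] (0:ℝ), s ∈ Ioc (0:ℝ) 1 := Ioc_mem_nhdsGT one_pos
        obtain ⟨s, hs1, hs2⟩ := (h6.and h7).exists
        exact ⟨s, hs2, hs1.le⟩
      set B := Metric.ball (s • ν) (s * ρ) with hB
      obtain ⟨T, hTm, hT⟩ := exists_tendsto_eLpNorm_average (W := W) (B := B) hq0
        Metric.isOpen_ball.measurableSet (fun k => (h (φ k)).measurable_fun)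
        (fun k => (h (φ k)).integrable_fun hp.le) (fun k => (h (φ k)).fun_eq_zero)
        (fun k => hC₁ (φ k)) hlim
      set Tk : ℕ → 𝔼 → ℝ := fun k y => ⨍ z in B, u (φ k) (y + z) with hTk
      have hTkm : ∀ k, Measurable (Tk k) := by
        intro k
        have h1 : Measurable fun a : 𝔼 × 𝔼 => u (φ k) (a.1 + a.2) :=
          (h (φ k)).measurable_fun.comp (by fun_prop)
        have h2 := (h1.stronglyMeasurable.integral_prod_right' (ν := volume.restrict B)).measurable
        simp only [hTk, setAverage_eq, smul_eq_mul]
        exact h2.const_mul _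
      have hclose : ∀ k, eLpNorm (w k - Tk k) (ENNReal.ofReal q) (volume.restrict W) ≤ ε / 4 := by
        intro k
        rw [eLpNorm_eq_lintegral_rpow_enorm_toReal hqne ENNReal.ofReal_ne_top,
          ENNReal.toReal_ofReal hq0.le, one_div, ENNReal.rpow_inv_le_iff hq0]
        refine (hC s hs _ _ (h (φ k))).trans (le_trans ?_ hsε)
        gcongr
        exact hg _
      obtain ⟨N, hN⟩ := eventually_atTop.1 (hT.eventually (gt_mem_nhds hε4))
      refine ⟨N, fun j hj k hk => ?_⟩
      have hwm : ∀ k, AEStronglyMeasurable (w k) (volume.restrict W) := fun k =>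
        (h (φ k)).measurable_fun.aestronglyMeasurable
      have hTkm' : ∀ k, AEStronglyMeasurable (Tk k) (volume.restrict W) := fun k =>
        (hTkm k).aestronglyMeasurable
      have hsplit : w j - w k
          = ((w j - Tk j) + (Tk j - T)) - ((w k - Tk k) + (Tk k - T)) := by
        funext y; simp only [Pi.sub_apply, Pi.add_apply]; ring
      have hone : ∀ i ≥ N, eLpNorm ((w i - Tk i) + (Tk i - T)) (ENNReal.ofReal q)
          (volume.restrict W) ≤ ε / 4 + ε / 4 := fun i hi =>
        (eLpNorm_add_le ((hwm i).sub (hTkm' i)) ((hTkm' i).sub hTm) hq1).trans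
          (add_le_add (hclose i) (hN i hi).le)
      rw [hsplit]
      refine (eLpNorm_sub_le (((hwm j).sub (hTkm' j)).add ((hTkm' j).sub hTm))
        (((hwm k).sub (hTkm' k)).add ((hTkm' k).sub hTm)) hq1).trans ?_
      refine (add_le_add (hone j hj) (hone k hk)).trans (le_of_eq ?_)
      have : ε / 4 + ε / 4 + (ε / 4 + ε / 4) = 4 * (ε / 4) := by ring
      rw [this, ENNReal.mul_div_cancel (by simp) (by simp)]
    intro ε hε
    obtain ⟨N, hN⟩ := key (ε ^ (1 / q)) (by
      rcases eq_or_ne ε ⊤ with rfl | hne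
      · rw [ENNReal.top_rpow_of_pos (by positivity)]; simp
      · exact ENNReal.rpow_pos hε hne)
    refine ⟨N, fun j hj k hk => ?_⟩
    have h1 := hN j hj k hk
    rw [eLpNorm_eq_lintegral_rpow_enorm_toReal hqne ENNReal.ofReal_ne_top,
      ENNReal.toReal_ofReal hq0.le, ENNReal.rpow_le_rpow_iff (by positivity)] at h1
    exact h1
  have hglobal : ∀ ε : ℝ≥0∞, 0 < ε →
      ∃ N, ∀ j ≥ N, ∀ k ≥ N, ∫⁻ y in closure Ω ∩ Ω, ‖w j y - w k y‖ₑ ^ q ≤ ε := by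
    refine (hΩb.isCompact_closure).induction_on (p := fun S => ∀ ε : ℝ≥0∞, 0 < ε →
      ∃ N, ∀ j ≥ N, ∀ k ≥ N, ∫⁻ y in S ∩ Ω, ‖w j y - w k y‖ₑ ^ q ≤ ε) ?_ ?_ ?_ ?_
    · intro ε _
      exact ⟨0, fun j _ k _ => by simp⟩
    · intro S S' hSS' hS' ε hε
      obtain ⟨N, hN⟩ := hS' ε hε
      exact ⟨N, fun j hj k hk =>
        (lintegral_mono_set (inter_subset_inter_left _ hSS')).trans (hN j hj k hk)⟩
    · intro S S' hS hS' ε hε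
      obtain ⟨N, hN⟩ := hS (ε / 2) (ENNReal.half_pos hε.ne')
      obtain ⟨N', hN'⟩ := hS' (ε / 2) (ENNReal.half_pos hε.ne')
      refine ⟨max N N', fun j hj k hk => ?_⟩
      rw [union_inter_distrib_right]
      refine (lintegral_union_le _ _ _).trans ?_
      rw [← ENNReal.add_halves ε]
      exact add_le_add (hN j (le_of_max_le_left hj) k (le_of_max_le_left hk))
        (hN' j (le_of_max_le_right hj) k (le_of_max_le_right hk))
    · intro x hx
      obtain ⟨V, hV, hxV, hVc⟩ := hlocal x hx
      exact ⟨V, mem_nhdsWithin_of_mem_nhds (hV.mem_nhds hxV), hVc⟩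
  rw [inter_eq_right.2 subset_closure] at hglobal
  have : Fact (1 ≤ ENNReal.ofReal q) := ⟨hq1⟩
  have hcauchy : CauchySeq fun k => (hq (φ k)).toLp (w k) := by
    rw [EMetric.cauchySeq_iff]
    intro ε hε
    obtain ⟨δ, hδ0, hδε⟩ := exists_between hε
    obtain ⟨N, hN⟩ := hglobal (δ ^ q) (ENNReal.rpow_pos_of_nonneg hδ0 hq0.le)
    refine ⟨N, fun j hj k hk => lt_of_le_of_lt ?_ hδε⟩
    rw [Lp.edist_toLp_toLp, eLpNorm_eq_lintegral_rpow_enorm_toReal hqne ENNReal.ofReal_ne_top,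
      ENNReal.toReal_ofReal hq0.le, one_div, ENNReal.rpow_inv_le_iff hq0]
    exact hN j hj k hk
  obtain ⟨v, hv⟩ := cauchySeq_tendsto_of_complete hcauchy
  refine ⟨φ, hφ, v, Lp.memLp v, ?_⟩
  rw [Lp.tendsto_Lp_iff_tendsto_eLpNorm'] at hv
  refine hv.congr fun k => ?_
  refine eLpNorm_congr_ae ?_
  filter_upwards [(hq (φ k)).coeFn_toLp] with x hx
  rw [Pi.sub_apply, Pi.sub_apply, hx]

theorem norm_half_add_rpow_le {p : ℝ} (hp : 1 ≤ p) (a b : 𝔼) :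
    ‖(1 / 2 : ℝ) • (a + b)‖ ^ p ≤ (‖a‖ ^ p + ‖b‖ ^ p) / 2 := by
  have := norm_convex_combination_rpow_le hp (θ := 1 / 2) (by norm_num) (by norm_num) a b
  rw [show (1 - 1 / 2 : ℝ) = 1 / 2 by norm_num, ← smul_add] at this
  linarith

theorem norm_half_add_rpow_lt {p : ℝ} (hp : 1 < p) {a b : 𝔼} (hab : a ≠ b) :
    ‖(1 / 2 : ℝ) • (a + b)‖ ^ p < (‖a‖ ^ p + ‖b‖ ^ p) / 2 := by
  have hp0 : 0 < p := by linarith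
  have hle : ‖(1 / 2 : ℝ) • (a + b)‖ ≤ (‖a‖ + ‖b‖) / 2 := by
    rw [norm_smul, Real.norm_of_nonneg (by norm_num)]
    have := norm_add_le a b
    linarith
  by_cases h : ‖a‖ = ‖b‖
  · have h1 : ‖(1 / 2 : ℝ) • (a + b)‖ < ‖a‖ := (norm_midpoint_lt_iff h).2 hab
    have h2 := Real.rpow_lt_rpow (norm_nonneg _) h1 hp0
    rw [← h]; linarith
  · have h1 := (strictConvexOn_rpow hp).2 (norm_nonneg a) (norm_nonneg b) h
      (show (0:ℝ) < 1 / 2 by norm_num) (show (0:ℝ) < 1 / 2 by norm_num) (by norm_num)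
    simp only [smul_eq_mul] at h1
    have h2 := Real.rpow_le_rpow (norm_nonneg _) hle hp0.le
    rw [show (‖a‖ + ‖b‖) / 2 = 1 / 2 * ‖a‖ + 1 / 2 * ‖b‖ by ring] at h2
    linarith

/-- Quantitative uniform convexity of `‖·‖ ^ p`. -/
theorem exists_norm_sub_rpow_le {p : ℝ} (hp : 1 < p) {η : ℝ} (hη : 0 < η) :
    ∃ C : ℝ, 0 ≤ C ∧ ∀ a b : 𝔼, ‖a - b‖ ^ p ≤ η * (‖a‖ ^ p + ‖b‖ ^ p)
      + C * ((‖a‖ ^ p + ‖b‖ ^ p) / 2 - ‖(1 / 2 : ℝ) • (a + b)‖ ^ p) := by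
  have hp0 : 0 < p := by linarith
  set Φ : 𝔼 × 𝔼 → ℝ := fun x => (‖x.1‖ ^ p + ‖x.2‖ ^ p) / 2 - ‖(1 / 2 : ℝ) • (x.1 + x.2)‖ ^ p
    with hΦ
  have hΦ0 : ∀ x, 0 ≤ Φ x := fun x => sub_nonneg.2 (norm_half_add_rpow_le hp.le _ _)
  have hcn : ∀ f : 𝔼 × 𝔼 → 𝔼, Continuous f → Continuous fun x => ‖f x‖ ^ p := fun f hf =>
    hf.norm.rpow_const fun _ => Or.inr hp0.le
  have hΦc : Continuous Φ :=
    (((hcn _ continuous_fst).add (hcn _ continuous_snd)).div_const 2).sub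
      (hcn _ ((continuous_fst.add continuous_snd).const_smul (1 / 2 : ℝ)))
  set S : Set (𝔼 × 𝔼) := Metric.sphere 0 1 ∩ {x | η ≤ ‖x.1 - x.2‖ ^ p} with hS
  have hScomp : IsCompact S := (isCompact_sphere 0 1).inter_right
    (isClosed_le continuous_const (hcn _ (continuous_fst.sub continuous_snd)))
  obtain ⟨d, hd0, hd⟩ : ∃ d > 0, ∀ x ∈ S, d ≤ Φ x := by
    rcases S.eq_empty_or_nonempty with h | h
    · exact ⟨1, one_pos, by simp [h]⟩
    · obtain ⟨x, hx, hmin⟩ := hScomp.exists_isMinOn h hΦc.continuousOn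
      refine ⟨Φ x, ?_, fun y hy => hmin hy⟩
      have hne : x.1 ≠ x.2 := by
        intro heq
        have := hx.2
        simp only [mem_ofPred_eq, heq, sub_self, norm_zero, Real.zero_rpow hp0.ne'] at this
        linarith
      exact sub_pos.2 (norm_half_add_rpow_lt hp hne)
  refine ⟨2 ^ p / d, by positivity, fun a b => ?_⟩
  -- the estimate on the unit sphere
  have hsphere : ∀ x : 𝔼 × 𝔼, ‖x‖ = 1 →
      ‖x.1 - x.2‖ ^ p ≤ η * (‖x.1‖ ^ p + ‖x.2‖ ^ p) + 2 ^ p / d * Φ x := by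
    intro x hx
    have hx' : max ‖x.1‖ ‖x.2‖ = 1 := hx
    have h1 : ‖x.1‖ ≤ 1 := hx' ▸ le_max_left _ _
    have h2 : ‖x.2‖ ≤ 1 := hx' ▸ le_max_right _ _
    have hsum : 1 ≤ ‖x.1‖ ^ p + ‖x.2‖ ^ p := by
      have e1 : 0 ≤ ‖x.1‖ ^ p := by positivity
      have e2 : 0 ≤ ‖x.2‖ ^ p := by positivity
      rcases max_choice ‖x.1‖ ‖x.2‖ with h | h
      · rw [h] at hx'; rw [hx', Real.one_rpow] at *; linarith
      · rw [h] at hx'; rw [hx', Real.one_rpow] at *; linarith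
    by_cases hxS : η ≤ ‖x.1 - x.2‖ ^ p
    · have h3 := hd x ⟨by simpa using hx, hxS⟩
      have h4 : ‖x.1 - x.2‖ ^ p ≤ 2 ^ p := by
        refine Real.rpow_le_rpow (norm_nonneg _) ?_ hp0.le
        have := norm_sub_le x.1 x.2
        linarith
      have h5 : 2 ^ p ≤ 2 ^ p / d * Φ x := by
        rw [div_mul_eq_mul_div, le_div_iff₀ hd0]
        exact mul_le_mul_of_nonneg_left h3 (by positivity)
      have h6 : 0 ≤ η * (‖x.1‖ ^ p + ‖x.2‖ ^ p) := by positivity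
      linarith
    · have h3 : 0 ≤ 2 ^ p / d * Φ x := mul_nonneg (by positivity) (hΦ0 x)
      nlinarith
  set r := ‖(a, b)‖ with hr
  rcases (norm_nonneg (a, b)).eq_or_lt with h0 | h0
  · have : (a, b) = 0 := norm_eq_zero.1 h0.symm
    have ha : a = 0 := congrArg Prod.fst this
    have hb : b = 0 := congrArg Prod.snd this
    simp [ha, hb, Real.zero_rpow hp0.ne']
  · rw [← hr] at h0
    have h1 := hsphere (r⁻¹ • (a, b)) (by
      rw [norm_smul, Real.norm_of_nonneg (by positivity), ← hr, inv_mul_cancel₀ h0.ne'])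
    have hsc : ∀ x : 𝔼, ‖r⁻¹ • x‖ ^ p = (r⁻¹) ^ p * ‖x‖ ^ p := fun x => by
      rw [norm_smul, Real.norm_of_nonneg (by positivity),
        Real.mul_rpow (by positivity) (norm_nonneg _)]
    simp only [hΦ, Prod.smul_fst, Prod.smul_snd, ← smul_sub, ← smul_add,
      smul_comm (1 / 2 : ℝ) r⁻¹, hsc] at h1
    have hpos : 0 < (r⁻¹) ^ p := by positivity
    refine le_of_mul_le_mul_left ?_ hpos
    refine h1.trans (le_of_eq ?_)
    ring

theorem norm_toLp_rpow {α F : Type*} [MeasurableSpace α] {μ : Measure α} [NormedAddCommGroup F]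
    {p : ℝ} (hp : 0 < p) {f : α → F} (hf : MemLp f (ENNReal.ofReal p) μ) :
    ‖hf.toLp f‖ ^ p = ∫ x, ‖f x‖ ^ p ∂μ := by
  have h0 : 0 ≤ ∫ x, ‖f x‖ ^ p ∂μ := integral_nonneg fun x => by positivity
  rw [Lp.norm_toLp, hf.eLpNorm_eq_integral_rpow_norm (by simpa using hp) ENNReal.ofReal_ne_top,
    ENNReal.toReal_ofReal hp.le, ENNReal.toReal_ofReal (by positivity),
    Real.rpow_inv_rpow h0 (ne_of_gt hp)]

/-- Convergence in `L^p` implies convergence of `∫ ‖f‖ ^ p`. -/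
theorem tendsto_integral_norm_rpow {α F : Type*} [MeasurableSpace α] {μ : Measure α}
    [NormedAddCommGroup F] {p : ℝ} (hp : 1 ≤ p) {f : ℕ → α → F} {g : α → F}
    (hf : ∀ k, MemLp (f k) (ENNReal.ofReal p) μ) (hg : MemLp g (ENNReal.ofReal p) μ)
    (h : Tendsto (fun k => eLpNorm (f k - g) (ENNReal.ofReal p) μ) atTop (𝓝 0)) :
    Tendsto (fun k => ∫ x, ‖f k x‖ ^ p ∂μ) atTop (𝓝 (∫ x, ‖g x‖ ^ p ∂μ)) := by
  have hp0 : 0 < p := by linarith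
  have : Fact (1 ≤ ENNReal.ofReal p) := ⟨by simpa using ENNReal.ofReal_le_ofReal hp⟩
  have h1 := (Lp.tendsto_Lp_iff_tendsto_eLpNorm'' f hf g hg).2 h
  have h2 := h1.norm.rpow_const (p := p) (Or.inr hp0.le)
  simpa only [norm_toLp_rpow hp0] using h2

theorem tendsto_eLpNorm_of_exponent_le {α F : Type*} [MeasurableSpace α] {μ : Measure α}
    [IsFiniteMeasure μ] [NormedAddCommGroup F] {p q : ℝ≥0∞} (hpq : p ≤ q) (hp : 1 ≤ p)
    {f : ℕ → α → F} (hf : ∀ k, AEStronglyMeasurable (f k) μ)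
    (h : Tendsto (fun k => eLpNorm (f k) q μ) atTop (𝓝 0)) :
    Tendsto (fun k => eLpNorm (f k) p μ) atTop (𝓝 0) := by
  have hnn : 0 ≤ 1 / p.toReal - 1 / q.toReal := by
    rcases eq_or_ne q ⊤ with rfl | hq
    · simp
    · have hp0 : 0 < p.toReal := ENNReal.toReal_pos (one_pos.trans_le hp).ne' (ne_top_of_le_ne_top hq hpq)
      exact sub_nonneg.2 (one_div_le_one_div_of_le hp0 (ENNReal.toReal_mono hq hpq))
  refine tendsto_of_tendsto_of_tendsto_of_le_of_le tendsto_const_nhds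
    (h := fun k => eLpNorm (f k) q μ * μ univ ^ (1 / p.toReal - 1 / q.toReal)) ?_
    (fun _ => zero_le) fun k => eLpNorm_le_eLpNorm_mul_rpow_measure_univ hpq (hf k)
  have := ENNReal.Tendsto.mul_const h (b := μ univ ^ (1 / p.toReal - 1 / q.toReal))
    (Or.inr (ENNReal.rpow_ne_top_of_nonneg hnn (measure_ne_top _ _)))
  simpa using this

/-- **Lower semicontinuity of the Dirichlet energy**: if Sobolev functions converge in `L^p` and
the `L^p` norms of their gradients converge, then the limit is a Sobolev function whose gradient
is not larger. -/
theorem exists_gradient_of_tendsto {Ω : Set 𝔼} [IsFiniteMeasure (volume.restrict Ω)] {p ℓ : ℝ}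
    (hp : 1 < p) {u : ℕ → 𝔼 → ℝ} {g : ℕ → 𝔼 → 𝔼} {v : 𝔼 → ℝ}
    (h : ∀ k, MemW1p Ω p (u k) (g k)) (hv : MemLp v (ENNReal.ofReal p) (volume.restrict Ω))
    (huv : Tendsto (fun k => eLpNorm (u k - v) (ENNReal.ofReal p) (volume.restrict Ω))
      atTop (𝓝 0))
    (hg : Tendsto (fun k => ∫ x in Ω, ‖g k x‖ ^ p) atTop (𝓝 ℓ)) :
    ∃ k, MemW1p Ω p v k ∧ ∫ x in Ω, ‖k x‖ ^ p ≤ ℓ := by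
  have hp0 : 0 < p := by linarith
  have hp1 : 1 ≤ ENNReal.ofReal p := by simpa using ENNReal.ofReal_le_ofReal hp.le
  have : Fact (1 ≤ ENNReal.ofReal p) := ⟨hp1⟩
  set ε : ℕ → ℝ := fun k => 1 / ((k : ℝ) + 1) with hε
  have hε0 : ∀ k, 0 < ε k := fun k => by positivity
  have hεanti : Antitone ε := fun i j hij => by
    refine one_div_le_one_div_of_le (by positivity) ?_
    have : (i : ℝ) ≤ j := by exact_mod_cast hij
    linarith
  have hεlim : Tendsto ε atTop (𝓝 0) := tendsto_one_div_add_atTop_nhds_zero_nat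
  set 𝒞 : ℕ → Set ((𝔼 → ℝ) × (𝔼 → 𝔼)) := fun k => {a | MemW1p Ω p a.1 a.2 ∧
    eLpNorm (a.1 - v) (ENNReal.ofReal p) (volume.restrict Ω) ≤ ENNReal.ofReal (ε k)} with h𝒞
  have h𝒞anti : ∀ i j, i ≤ j → 𝒞 j ⊆ 𝒞 i := fun i j hij a ha =>
    ⟨ha.1, ha.2.trans (ENNReal.ofReal_le_ofReal (hεanti hij))⟩
  set J : (𝔼 → 𝔼) → ℝ := fun k => ∫ x in Ω, ‖k x‖ ^ p with hJ
  have hJ0 : ∀ k, 0 ≤ J k := fun k => integral_nonneg fun x => by positivity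
  set d : ℕ → ℝ := fun k => sInf ((fun a => J a.2) '' 𝒞 k) with hd
  have hbdd : ∀ k, BddBelow ((fun a => J a.2) '' 𝒞 k) := fun k =>
    ⟨0, by rintro _ ⟨a, -, rfl⟩; exact hJ0 _⟩
  have hev : ∀ k, ∀ᶠ i in atTop, (u i, g i) ∈ 𝒞 k := fun k => by
    filter_upwards [huv.eventually (gt_mem_nhds (ENNReal.ofReal_pos.2 (hε0 k)))] with i hi
    exact ⟨h i, hi.le⟩
  have hne : ∀ k, ((fun a => J a.2) '' 𝒞 k).Nonempty := fun k => by
    obtain ⟨i, hi⟩ := (hev k).exists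
    exact ⟨_, _, hi, rfl⟩
  have hdℓ : ∀ k, d k ≤ ℓ := fun k => by
    refine ge_of_tendsto hg ?_
    filter_upwards [hev k] with i hi
    exact csInf_le (hbdd k) ⟨_, hi, rfl⟩
  have hdmono : Monotone d := fun i j hij =>
    csInf_le_csInf (hbdd i) (hne j) (image_mono (h𝒞anti i j hij))
  have hdlim : Tendsto d atTop (𝓝 (⨆ k, d k)) :=
    tendsto_atTop_ciSup hdmono ⟨ℓ, by rintro _ ⟨k, rfl⟩; exact hdℓ k⟩
  set dinf := ⨆ k, d k with hdinf
  have hdle : ∀ k, d k ≤ dinf := fun k => hdmono.ge_of_tendsto hdlim k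
  have hchoose : ∀ k, ∃ a ∈ 𝒞 k, J a.2 < d k + ε k := fun k => by
    obtain ⟨_, ⟨a, ha, rfl⟩, hlt⟩ := exists_lt_of_csInf_lt (hne k)
      (show sInf ((fun a => J a.2) '' 𝒞 k) < d k + ε k from lt_add_of_pos_right _ (hε0 k))
    exact ⟨a, ha, hlt⟩
  choose a ha haJ using hchoose
  have hmid : ∀ N, ∀ i ≥ N, ∀ j ≥ N,
      d N ≤ J (fun x => (1 / 2 : ℝ) • ((a i).2 x + (a j).2 x)) := by
    intro N i hi j hj
    have hi' := h𝒞anti N i hi (ha i)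
    have hj' := h𝒞anti N j hj (ha j)
    refine csInf_le (hbdd N) ⟨(fun x => 1 / 2 * ((a i).1 x + (a j).1 x), _),
      ⟨(hi'.1.add hp.le hj'.1).const_mul (1 / 2), ?_⟩, rfl⟩
    have e1 : (fun x => 1 / 2 * ((a i).1 x + (a j).1 x)) - v
        = (1 / 2 : ℝ) • (((a i).1 - v) + ((a j).1 - v)) := by
      funext x; simp only [Pi.sub_apply, Pi.smul_apply, Pi.add_apply, smul_eq_mul]; ring
    change eLpNorm ((fun x => 1 / 2 * ((a i).1 x + (a j).1 x)) - v) _ _ ≤ _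
    rw [e1, eLpNorm_const_smul]
    have hm := eLpNorm_add_le (hi'.1.1.sub hv).aestronglyMeasurable
      (hj'.1.1.sub hv).aestronglyMeasurable hp1
    refine (mul_le_mul_right (hm.trans (add_le_add hi'.2 hj'.2)) _).trans (le_of_eq ?_)
    rw [← ofReal_norm, Real.norm_of_nonneg (by norm_num),
      ← ENNReal.ofReal_add (hε0 N).le (hε0 N).le, ← ENNReal.ofReal_mul (by norm_num)]
    congr 1; ring
  have hJi : ∀ i, IntegrableOn (fun x => ‖(a i).2 x‖ ^ p) Ω := fun i =>
    integrable_norm_rpow_of_memLp hp0 (ha i).1.2.1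
  have hcauchy : CauchySeq fun k => (ha k).1.2.1.toLp (a k).2 := by
    rw [Metric.cauchySeq_iff]
    intro r hr
    have hrp : 0 < r ^ p := by positivity
    set L := 2 * (ℓ + 1) + 1 with hL
    have hℓ0 : 0 ≤ ℓ := ge_of_tendsto' hg fun k => hJ0 _
    have hL0 : 0 < L := by positivity
    obtain ⟨C, hC0, hC⟩ := exists_norm_sub_rpow_le (n := n) hp
      (show 0 < r ^ p / (2 * L) by positivity)
    have hdef : Tendsto (fun N => C * (dinf + ε N - d N)) atTop (𝓝 0) := by
      have h1 := ((hεlim.const_add dinf).sub hdlim).const_mul C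
      simpa using h1
    obtain ⟨N, hN⟩ := (hdef.eventually (gt_mem_nhds (show 0 < r ^ p / 2 by positivity))).exists
    refine ⟨N, fun i hi j hj => ?_⟩
    have hbound : ∀ i ≥ N, J (a i).2 ≤ dinf + ε N := fun i hi => by
      have h1 := haJ i
      have h2 := hdle i
      have h3 := hεanti hi
      linarith
    have hdℓ' : dinf ≤ ℓ := le_of_tendsto' hdlim hdℓ
    have hε1 : ε N ≤ 1 := by
      simp only [hε]
      rw [div_le_one (by positivity)]
      have : (0:ℝ) ≤ N := by positivity
      linarith
    have im : IntegrableOn (fun x => ‖(1 / 2 : ℝ) • ((a i).2 x + (a j).2 x)‖ ^ p) Ω :=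
      integrable_norm_rpow_of_memLp hp0 (((ha i).1.2.1.add (ha j).1.2.1).const_smul (1 / 2 : ℝ))
    have isum : IntegrableOn (fun x => ‖(a i).2 x‖ ^ p + ‖(a j).2 x‖ ^ p) Ω := (hJi i).add (hJi j)
    have hint : ∫ x in Ω, ‖(a i).2 x - (a j).2 x‖ ^ p ≤
        r ^ p / (2 * L) * (J (a i).2 + J (a j).2)
        + C * ((J (a i).2 + J (a j).2) / 2
          - J (fun x => (1 / 2 : ℝ) • ((a i).2 x + (a j).2 x))) := by
      have i1 : IntegrableOn (fun x => r ^ p / (2 * L) * (‖(a i).2 x‖ ^ p + ‖(a j).2 x‖ ^ p)) Ω :=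
        isum.const_mul _
      have i2 : IntegrableOn (fun x => C * ((‖(a i).2 x‖ ^ p + ‖(a j).2 x‖ ^ p) / 2
          - ‖(1 / 2 : ℝ) • ((a i).2 x + (a j).2 x)‖ ^ p)) Ω :=
        ((isum.div_const 2).sub im).const_mul C
      refine (integral_mono (integrable_norm_rpow_of_memLp hp0
        ((ha i).1.2.1.sub (ha j).1.2.1)) (i1.add i2) fun x => hC _ _).trans (le_of_eq ?_)
      simp only [Pi.add_apply]
      rw [integral_add i1 i2, integral_const_mul, integral_const_mul,
        integral_sub (isum.div_const 2) im, integral_div, integral_add (hJi i) (hJi j)]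
    have hlt : ∫ x in Ω, ‖(a i).2 x - (a j).2 x‖ ^ p < r ^ p := by
      have h1 := hbound i hi
      have h2 := hbound j hj
      have h3 := hmid N i hi j hj
      have h4 : C * ((J (a i).2 + J (a j).2) / 2
          - J (fun x => (1 / 2 : ℝ) • ((a i).2 x + (a j).2 x))) ≤ C * (dinf + ε N - d N) :=
        mul_le_mul_of_nonneg_left (by linarith) hC0
      have h5 : r ^ p / (2 * L) * (J (a i).2 + J (a j).2) ≤ r ^ p / (2 * L) * L :=
        mul_le_mul_of_nonneg_left (by rw [hL]; linarith) (by positivity)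
      have h6 : r ^ p / (2 * L) * L = r ^ p / 2 := by field_simp
      linarith
    rw [dist_eq_norm, ← MemLp.toLp_sub]
    have h7 : ‖((ha i).1.2.1.sub (ha j).1.2.1).toLp ((a i).2 - (a j).2)‖ ^ p < r ^ p := by
      rw [norm_toLp_rpow hp0]
      exact hlt
    exact lt_of_not_ge fun hge => absurd (Real.rpow_le_rpow hr.le hge hp0.le) (not_le.2 h7)
  obtain ⟨k, hk⟩ := cauchySeq_tendsto_of_complete hcauchy
  have hkmem := Lp.memLp k
  have hklim : Tendsto (fun i => eLpNorm ((a i).2 - (k : 𝔼 → 𝔼)) (ENNReal.ofReal p) (volume.restrict Ω))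
      atTop (𝓝 0) := by
    rw [Lp.tendsto_Lp_iff_tendsto_eLpNorm'] at hk
    refine hk.congr fun i => eLpNorm_congr_ae ?_
    filter_upwards [(ha i).1.2.1.coeFn_toLp] with x hx
    rw [Pi.sub_apply, Pi.sub_apply, hx]
  have halim : Tendsto (fun i => eLpNorm ((a i).1 - v) (ENNReal.ofReal p) (volume.restrict Ω))
      atTop (𝓝 0) := by
    refine tendsto_of_tendsto_of_tendsto_of_le_of_le tendsto_const_nhds
      (h := fun i => ENNReal.ofReal (ε i)) ?_ (fun _ => zero_le) fun i => (ha i).2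
    simpa using ENNReal.tendsto_ofReal hεlim
  refine ⟨k, ⟨hv, hkmem, ?_⟩, ?_⟩
  · exact IsWeakGradient.of_tendsto (fun i => (ha i).1.integrableOn_fun hp.le)
      (fun i => (ha i).1.integrableOn_grad hp.le) (hv.integrable hp1) (hkmem.integrable hp1)
      (fun i => (ha i).1.2.2)
      (tendsto_eLpNorm_of_exponent_le hp1 le_rfl
        (fun i => ((ha i).1.1.sub hv).aestronglyMeasurable) halim)
      (tendsto_eLpNorm_of_exponent_le hp1 le_rfl
        (fun i => ((ha i).1.2.1.sub hkmem).aestronglyMeasurable) hklim)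
  · have h1 := tendsto_integral_norm_rpow hp.le (fun i => (ha i).1.2.1) hkmem hklim
    have h2 : Tendsto (fun i => ℓ + ε i) atTop (𝓝 (ℓ + 0)) := hεlim.const_add ℓ
    rw [add_zero] at h2
    refine le_of_tendsto_of_tendsto' h1 h2 fun i => ?_
    have h3 := haJ i
    have h4 := hdℓ i
    exact (h3.le).trans (by linarith)

/-- The set of competitors in the definition of `interiorConst` is nonempty. -/
theorem exists_admissible (hn : 1 ≤ n) {Ω : Set 𝔼} (hΩ : IsOpen Ω) (hne : Ω.Nonempty)
    [IsFiniteMeasure (volume.restrict Ω)] {p q α : ℝ} (hp : 1 ≤ p) (hq : 1 ≤ q) (hα : 0 ≤ α)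
    (hα1 : α < 1) :
    ∃ v g, MemW1p Ω p v g ∧ 0 < intLqPow Ω q v ∧
      ENNReal.ofReal α * volume Ω ≤ volume {x ∈ Ω | v x = 0} := by
  obtain ⟨x, hx⟩ := hne
  have hvol : 0 < volume Ω := hΩ.measure_pos volume ⟨x, hx⟩
  have hfin : volume Ω ≠ ⊤ := by
    have := measure_ne_top (volume.restrict Ω) univ
    rwa [Measure.restrict_apply_univ] at this
  have hε : 0 < ENNReal.ofReal (1 - α) * volume Ω :=
    ENNReal.mul_pos (by simpa using hα1) hvol.ne'
  obtain ⟨r, hr, -, hrv⟩ := exists_closedBall_volume_le hn x hε one_pos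
  let f : ContDiffBump x := ⟨r, 2 * r, hr, by linarith⟩
  have hone : MemW1p Ω p (fun _ => (1 : ℝ)) (fun _ => (0 : 𝔼)) :=
    ⟨memLp_const 1, memLp_const 0, isWeakGradient_const Ω 1⟩
  have hmem := hone.smooth_mul hp f.contDiff f.hasCompactSupport
  refine ⟨_, _, hmem, ?_, ?_⟩
  · have hcont : Continuous fun y => |f y * 1| ^ q :=
      ((f.continuous.mul continuous_const).abs).rpow_const fun _ => Or.inr (by linarith)
    have hq0 : 0 < q := by linarith
    have hint : IntegrableOn (fun y => |f y * 1| ^ q) Ω := by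
      refine (hcont.integrable_of_hasCompactSupport ?_).integrableOn
      refine f.hasCompactSupport.mono' ?_
      refine Function.support_subset_iff'.2 (fun y hy => ?_)
      rw [image_eq_zero_of_notMem_tsupport hy, zero_mul, abs_zero, Real.zero_rpow hq0.ne']
    unfold intLqPow
    rw [integral_pos_iff_support_of_nonneg (fun y => by positivity) hint,
      Measure.restrict_apply₀' hΩ.measurableSet.nullMeasurableSet]
    refine (hΩ.inter Metric.isOpen_ball).measure_pos volume
      ⟨x, hx, Metric.mem_ball_self (show (0 : ℝ) < 2 * r by linarith)⟩ |>.trans_le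
      (measure_mono ?_)
    rintro y ⟨hy, hyb⟩
    refine ⟨?_, hy⟩
    have : 0 < f y := f.pos_of_mem_ball hyb
    rw [Function.mem_support, mul_one]
    positivity
  · have hsub : Ω \ Metric.closedBall x (2 * r) ⊆ {y ∈ Ω | f y * 1 = 0} := by
      rintro y ⟨hy, hyb⟩
      refine ⟨hy, ?_⟩
      rw [mul_one]
      refine f.zero_of_le_dist (le_of_lt ?_)
      simpa using hyb
    refine le_trans ?_ ((le_measure_sdiff).trans (measure_mono hsub))
    refine ENNReal.le_sub_of_add_le_right (ne_top_of_le_ne_top ?_ hrv) ?_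
    · exact ENNReal.mul_ne_top ENNReal.ofReal_ne_top hfin
    · calc ENNReal.ofReal α * volume Ω + volume (Metric.closedBall x (2 * r))
          ≤ ENNReal.ofReal α * volume Ω + ENNReal.ofReal (1 - α) * volume Ω := by gcongr
        _ = volume Ω := by
          rw [← add_mul, ← ENNReal.ofReal_add hα (by linarith)]
          simp

/-- The measure of the zero set is upper semicontinuous under `L^r` convergence. -/
theorem le_measure_zero_set_of_tendsto {Ω : Set 𝔼} (hΩ : MeasurableSet Ω)
    [IsFiniteMeasure (volume.restrict Ω)] {r : ℝ≥0∞} (hr : r ≠ 0) {u : ℕ → 𝔼 → ℝ} {v : 𝔼 → ℝ}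
    (hu : ∀ k, Measurable (u k)) (hv : AEStronglyMeasurable v (volume.restrict Ω))
    (huv : Tendsto (fun k => eLpNorm (u k - v) r (volume.restrict Ω)) atTop (𝓝 0))
    {c : ℝ≥0∞} (hc : ∀ k, c ≤ volume {x ∈ Ω | u k x = 0}) :
    c ≤ volume {x ∈ Ω | v x = 0} := by
  obtain ⟨φ, hφ, hlim⟩ := (tendstoInMeasure_of_tendsto_eLpNorm hr
    (fun k => (hu k).aestronglyMeasurable) hv huv).exists_seq_tendsto_ae
  have hfin : volume Ω ≠ ⊤ := by
    have := measure_ne_top (volume.restrict Ω) univ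
    rwa [Measure.restrict_apply_univ] at this
  have hZ : ∀ k, MeasurableSet {x ∈ Ω | u k x = 0} := fun k =>
    hΩ.inter (measurableSet_eq_fun (hu k) measurable_const)
  have hU : ∀ m, MeasurableSet (⋃ k ≥ m, {x ∈ Ω | u (φ k) x = 0}) := fun m =>
    MeasurableSet.iUnion fun k => MeasurableSet.iUnion fun _ => hZ _
  have htend := tendsto_measure_iInter_atTop (μ := volume)
    (s := fun m => ⋃ k ≥ m, {x ∈ Ω | u (φ k) x = 0}) (fun m => (hU m).nullMeasurableSet)
    (fun a b hab => biUnion_subset_biUnion_left fun k hk => le_trans hab hk)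
    ⟨0, ne_top_of_le_ne_top hfin (measure_mono (iUnion₂_subset fun k _ x hx => hx.1))⟩
  have hle : c ≤ volume (⋂ m, ⋃ k ≥ m, {x ∈ Ω | u (φ k) x = 0}) :=
    ge_of_tendsto' htend fun m => (hc (φ m)).trans
      (measure_mono (subset_iUnion₂ (s := fun k (_ : k ≥ m) => {x ∈ Ω | u (φ k) x = 0}) m le_rfl))
  refine hle.trans (measure_mono_ae ?_)
  filter_upwards [(ae_restrict_iff' hΩ).1 hlim] with x hx hxm
  have hxm' : ∀ m, ∃ k ≥ m, x ∈ Ω ∧ u (φ k) x = 0 := by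
    intro m
    obtain ⟨k, hk, hxk⟩ := mem_iUnion₂.1 (mem_iInter.1 hxm m)
    exact ⟨k, hk, hxk⟩
  have hxΩ : x ∈ Ω := by
    obtain ⟨k, -, h, -⟩ := hxm' 0
    exact h
  refine ⟨hxΩ, ?_⟩
  exact (isClosed_singleton (x := (0 : ℝ))).mem_of_frequently_of_tendsto
    (frequently_atTop.2 fun m => (hxm' m).imp fun k hk => ⟨hk.1, hk.2.2⟩) (hx hxΩ)

theorem sobolevEnergy_congr {Ω : Set 𝔼} {p : ℝ} {u v : 𝔼 → ℝ} {g k : 𝔼 → 𝔼}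
    (hu : u =ᵐ[volume.restrict Ω] v) (hg : g =ᵐ[volume.restrict Ω] k) :
    sobolevEnergy Ω p u g = sobolevEnergy Ω p v k := by
  refine integral_congr_ae ?_
  filter_upwards [hu, hg] with x h1 h2
  rw [h1, h2]

theorem intLqPow_congr {Ω : Set 𝔼} {q : ℝ} {u v : 𝔼 → ℝ} (hu : u =ᵐ[volume.restrict Ω] v) :
    intLqPow Ω q u = intLqPow Ω q v := by
  refine integral_congr_ae ?_
  filter_upwards [hu] with x h1
  rw [h1]

theorem sobolevEnergy_const_mul (Ω : Set 𝔼) (p : ℝ) (u : 𝔼 → ℝ) (g : 𝔼 → 𝔼) {c : ℝ}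
    (hc : 0 ≤ c) :
    sobolevEnergy Ω p (fun x => c * u x) (fun x => c • g x) = c ^ p * sobolevEnergy Ω p u g := by
  unfold sobolevEnergy
  rw [← integral_const_mul]
  refine integral_congr_ae (Eventually.of_forall fun x => ?_)
  simp only [norm_smul, abs_mul, Real.norm_eq_abs, abs_of_nonneg hc]
  rw [Real.mul_rpow hc (norm_nonneg _), Real.mul_rpow hc (abs_nonneg _), mul_add]

theorem intLqPow_const_mul (Ω : Set 𝔼) (q : ℝ) (u : 𝔼 → ℝ) {c : ℝ} (hc : 0 ≤ c) :
    intLqPow Ω q (fun x => c * u x) = c ^ q * intLqPow Ω q u := by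
  unfold intLqPow
  rw [← integral_const_mul]
  refine integral_congr_ae (Eventually.of_forall fun x => ?_)
  simp only [abs_mul, abs_of_nonneg hc]
  rw [Real.mul_rpow hc (abs_nonneg _)]

/-- Every competitor can be replaced by a measurable one with unit `L^q` norm. -/
theorem MemW1p.exists_normalized {Ω : Set 𝔼} (hΩ : MeasurableSet Ω) {p q : ℝ} (hq : 0 < q)
    {v : 𝔼 → ℝ} {g : 𝔼 → 𝔼} (h : MemW1p Ω p v g) (hN : 0 < intLqPow Ω q v) :
    ∃ u k, IsSobolevRep Ω p u k ∧ intLqPow Ω q u = 1 ∧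
      sobolevEnergy Ω p u k = sobolevQuotient Ω p q v g ∧
      volume {x ∈ Ω | u x = 0} = volume {x ∈ Ω | v x = 0} := by
  set c : ℝ := intLqPow Ω q v ^ (-(1 / q)) with hc
  have hc0 : 0 < c := Real.rpow_pos_of_pos hN _
  obtain ⟨u, k, hu, h1, h2⟩ := (h.const_mul c).exists_rep hΩ
  refine ⟨u, k, hu, ?_, ?_, ?_⟩
  · rw [← intLqPow_congr h1, intLqPow_const_mul _ _ _ hc0.le, hc, ← Real.rpow_mul hN.le,
      show -(1 / q) * q = -1 by field_simp, Real.rpow_neg_one, inv_mul_cancel₀ hN.ne']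
  · rw [← sobolevEnergy_congr h1 h2, sobolevEnergy_const_mul _ _ _ _ hc0.le, hc,
      ← Real.rpow_mul hN.le, sobolevQuotient, show -(1 / q) * p = -(p / q) by ring,
      Real.rpow_neg hN.le, div_eq_inv_mul (sobolevEnergy Ω p v g)]
  · rw [← measure_zero_set_congr hΩ h1]
    simp [ne_of_gt hc0]

/-- The infimum defining `interiorConst` is attained. -/
theorem exists_minimizer (hn : 1 ≤ n) {Ω : Set 𝔼} (hΩ : IsOpen Ω) (hΩb : IsBounded Ω)
    (hne : Ω.Nonempty) (hΩs : HasSmoothBoundary Ω) [IsFiniteMeasure (volume.restrict Ω)]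
    {p q α : ℝ} (hp : 1 < p) (hq : 1 ≤ q) (hsub : p < n → q < p * n / (n - p)) (hα : 0 ≤ α)
    (hα1 : α < 1) :
    ∃ v g, MemW1p Ω p v g ∧ 0 < intLqPow Ω q v ∧
      ENNReal.ofReal α * volume Ω ≤ volume {x ∈ Ω | v x = 0} ∧
      sobolevQuotient Ω p q v g ≤ interiorConst Ω p q α := by
  have hp0 : 0 < p := by linarith
  have hq0 : 0 < q := by linarith
  have hΩm := hΩ.measurableSet
  obtain ⟨s, -, hs, hsmem⟩ := exists_seq_tendsto_sInf
    (S := { r | ∃ v g, MemW1p Ω p v g ∧ 0 < intLqPow Ω q v ∧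
      ENNReal.ofReal α * volume Ω ≤ volume {x ∈ Ω | v x = 0} ∧ r = sobolevQuotient Ω p q v g })
    (by
      obtain ⟨v, g, h1, h2, h3⟩ := exists_admissible (q := q) hn hΩ hne hp.le hq hα hα1
      exact ⟨_, v, g, h1, h2, h3, rfl⟩)
    ⟨0, by
      rintro r ⟨w, k, -, -, -, rfl⟩
      exact sobolevQuotient_nonneg _ _ _ _ _⟩
  change Tendsto s atTop (𝓝 (interiorConst Ω p q α)) at hs
  have hseq : ∀ k, ∃ u g, IsSobolevRep Ω p u g ∧ intLqPow Ω q u = 1 ∧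
      sobolevEnergy Ω p u g = s k ∧
      ENNReal.ofReal α * volume Ω ≤ volume {x ∈ Ω | u x = 0} := by
    intro k
    obtain ⟨v, g, h1, h2, h3, h4⟩ := hsmem k
    obtain ⟨u, b, e1, e2, e3, e4⟩ := h1.exists_normalized hΩm hq0 h2
    exact ⟨u, b, e1, e2, e3.trans h4.symm, e4 ▸ h3⟩
  choose u g hrep hN hE hZ using hseq
  obtain ⟨B, hB⟩ := hs.bddAbove_range
  have hsB : ∀ k, s k ≤ B := fun k => hB ⟨k, rfl⟩
  have hiu : ∀ k, IntegrableOn (fun x => |u k x| ^ p) Ω := fun k =>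
    integrable_norm_rpow_of_memLp hp0 (hrep k).memW1p.1
  have hig : ∀ k, IntegrableOn (fun x => ‖g k x‖ ^ p) Ω := fun k =>
    integrable_norm_rpow_of_memLp hp0 (hrep k).memW1p.2.1
  have hsum : ∀ k, (∫ x in Ω, ‖g k x‖ ^ p) + (∫ x in Ω, |u k x| ^ p) = s k := fun k => by
    rw [← hE k, sobolevEnergy, integral_add (hig k) (hiu k)]
  have hu0 : ∀ k, 0 ≤ ∫ x in Ω, |u k x| ^ p := fun k => integral_nonneg fun x => by positivity
  have hg0 : ∀ k, 0 ≤ ∫ x in Ω, ‖g k x‖ ^ p := fun k => integral_nonneg fun x => by positivity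
  have hB0 : 0 ≤ B := by linarith [hu0 0, hg0 0, hsum 0, hsB 0]
  set M : ℝ := max B (B ^ (1 / p)) with hM
  have hpt : ENNReal.ofReal p ≠ ⊤ := ENNReal.ofReal_ne_top
  have hpz : ENNReal.ofReal p ≠ 0 := by simpa using hp0
  have hMu : ∀ k, eLpNorm (u k) (ENNReal.ofReal p) (volume.restrict Ω) ≤ ENNReal.ofReal M := by
    intro k
    rw [(hrep k).memW1p.1.eLpNorm_eq_integral_rpow_norm hpz hpt, ENNReal.toReal_ofReal hp0.le]
    refine ENNReal.ofReal_le_ofReal (le_trans ?_ (le_max_right _ _))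
    rw [← one_div]
    refine Real.rpow_le_rpow (hu0 k) ?_ (by positivity)
    have : ∫ x in Ω, |u k x| ^ p ≤ B := by linarith [hg0 k, hsum k, hsB k]
    exact this
  have hMg : ∀ k, ∫⁻ x, ‖g k x‖ₑ ^ p ≤ ENNReal.ofReal M := by
    intro k
    have e1 : ∫⁻ x, ‖g k x‖ₑ ^ p = ∫⁻ x in Ω, ‖g k x‖ₑ ^ p := by
      refine (setLIntegral_eq_of_support_subset ?_).symm
      refine Function.support_subset_iff'.2 fun x hx => ?_
      rw [(hrep k).grad_eq_zero x hx, enorm_zero, ENNReal.zero_rpow_of_pos hp0]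
    have e2 : ∫⁻ x in Ω, ‖g k x‖ₑ ^ p = ENNReal.ofReal (∫ x in Ω, ‖g k x‖ ^ p) := by
      rw [ofReal_integral_eq_lintegral_ofReal (hig k)
        (Eventually.of_forall fun x => by positivity)]
      refine lintegral_congr fun x => ?_
      rw [← ENNReal.ofReal_rpow_of_nonneg (norm_nonneg _) hp0.le, ofReal_norm]
    rw [e1, e2]
    exact ENNReal.ofReal_le_ofReal
      (le_trans (by linarith [hu0 k, hsum k, hsB k]) (le_max_left _ _))
  set r : ℝ := max p q with hr
  have hpr : p ≤ r := le_max_left _ _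
  have hqr : q ≤ r := le_max_right _ _
  have hur : ∀ k, MemLp (u k) (ENNReal.ofReal r) (volume.restrict Ω) := by
    intro k
    rcases le_total p q with h | h
    · rw [hr, max_eq_right h]
      exact memLp_of_intLqPow_pos hq (hrep k).memW1p.1.aestronglyMeasurable
        (by rw [hN k]; exact one_pos)
    · rw [hr, max_eq_left h]
      exact (hrep k).memW1p.1
  have hτ : 0 < 1 - n * (1 / p - 1 / r) := by
    rcases le_total p q with h | h
    · rw [hr, max_eq_right h]
      have hn0 : (0 : ℝ) < n := by exact_mod_cast hn
      rcases lt_or_ge p n with hpn | hpn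
      · have h1 := hsub hpn
        rw [lt_div_iff₀ (by linarith)] at h1
        have h2 : 1 - n * (1 / p - 1 / q) = (p * n - q * (n - p)) / (p * q) := by
          field_simp
          ring
        rw [h2]
        exact div_pos (by linarith) (by positivity)
      · have h1 : n * (1 / p) ≤ 1 := by
          rw [mul_one_div, div_le_one hp0]
          exact hpn
        have h2 : 0 < n * (1 / q) := by positivity
        linarith
    · rw [hr, max_eq_left h]
      simp
  obtain ⟨φ, hφ, v, hv, hlim⟩ :=
    exists_subseq_tendsto_eLpNorm hΩ hΩb hΩs hp hpr hτ hrep hur hMu hMg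
  have hms : ∀ k, AEStronglyMeasurable (u (φ k) - v) (volume.restrict Ω) := fun k =>
    ((hur _).sub hv).aestronglyMeasurable
  have h1p : (1 : ℝ≥0∞) ≤ ENNReal.ofReal p := by simpa using ENNReal.ofReal_le_ofReal hp.le
  have h1q : (1 : ℝ≥0∞) ≤ ENNReal.ofReal q := by simpa using ENNReal.ofReal_le_ofReal hq
  have hlimp := tendsto_eLpNorm_of_exponent_le (ENNReal.ofReal_le_ofReal hpr) h1p hms hlim
  have hlimq := tendsto_eLpNorm_of_exponent_le (ENNReal.ofReal_le_ofReal hqr) h1q hms hlim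
  have hvp : MemLp v (ENNReal.ofReal p) (volume.restrict Ω) :=
    hv.mono_exponent (ENNReal.ofReal_le_ofReal hpr)
  have hvq : MemLp v (ENNReal.ofReal q) (volume.restrict Ω) :=
    hv.mono_exponent (ENNReal.ofReal_le_ofReal hqr)
  have hNv : intLqPow Ω q v = 1 := by
    have h1 := tendsto_integral_norm_rpow hq
      (fun k => (hur (φ k)).mono_exponent (ENNReal.ofReal_le_ofReal hqr)) hvq hlimq
    refine tendsto_nhds_unique h1 (tendsto_const_nhds.congr fun k => (hN (φ k)).symm)
  have hup := tendsto_integral_norm_rpow hp.le (fun k => (hrep (φ k)).memW1p.1) hvp hlimp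
  have hgl : Tendsto (fun k => ∫ x in Ω, ‖g (φ k) x‖ ^ p) atTop
      (𝓝 (interiorConst Ω p q α - ∫ x in Ω, ‖v x‖ ^ p)) := by
    refine ((hs.comp hφ.tendsto_atTop).sub hup).congr fun k => ?_
    rw [Function.comp_apply, ← hsum (φ k)]
    simp only [Real.norm_eq_abs, add_sub_cancel_right]
  obtain ⟨b, hb, hbl⟩ :=
    exists_gradient_of_tendsto hp (fun k => (hrep (φ k)).memW1p) hvp hlimp hgl
  refine ⟨v, b, hb, by rw [hNv]; exact one_pos, ?_, ?_⟩
  · exact le_measure_zero_set_of_tendsto hΩm (by simpa using hp0)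
      (fun k => (hrep (φ k)).measurable_fun) hvp.aestronglyMeasurable hlimp fun k => hZ (φ k)
  · simp only [sobolevQuotient, hNv, Real.one_rpow, div_one, sobolevEnergy, ← Real.norm_eq_abs]
    rw [integral_add (integrable_norm_rpow_of_memLp hp0 hb.2.1)
        (integrable_norm_rpow_of_memLp hp0 hvp)]
    linarith

/-- **Existence of extremals and strict monotonicity for the interior problem.**
For every `0 < α < 1` the constant `𝕊(α)` is attained at some `v_α ∈ W^{1,p}(Ω₁)` whose zero set
has measure exactly `α |Ω₁|`; moreover `α ↦ 𝕊(α)` is strictly increasing on `(0,1)`. -/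
theorem interiorConst_attained_and_strictMono {n : ℕ} (hn : 1 ≤ n)
    (Ω₁ : Set (EuclideanSpace ℝ (Fin n)))
    (hΩo : IsOpen Ω₁) (hΩb : IsBounded Ω₁) (hΩc : IsConnected Ω₁) (hΩs : HasSmoothBoundary Ω₁)
    (p q : ℝ) (hp : 1 < p) (hq : 1 ≤ q)
    (hsub : p < n → q < p * n / (n - p)) :
    (∀ α ∈ Ioo (0 : ℝ) 1,
      ∃ (v : EuclideanSpace ℝ (Fin n) → ℝ)
        (g : EuclideanSpace ℝ (Fin n) → EuclideanSpace ℝ (Fin n)),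
        MemW1p Ω₁ p v g ∧
        volume {x ∈ Ω₁ | v x = 0} = ENNReal.ofReal α * volume Ω₁ ∧
        0 < intLqPow Ω₁ q v ∧
        interiorConst Ω₁ p q α = sobolevQuotient Ω₁ p q v g) ∧
    StrictMonoOn (interiorConst Ω₁ p q) (Ioo (0 : ℝ) 1) := by
  have hfin : volume Ω₁ ≠ ⊤ := hΩb.measure_lt_top.ne
  have hpos : volume Ω₁ ≠ 0 := (hΩo.measure_pos volume hΩc.nonempty).ne'
  have : IsFiniteMeasure (volume.restrict Ω₁) :=
    ⟨by rw [Measure.restrict_apply_univ]; exact hfin.lt_top⟩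
  have hex : ∀ α ∈ Ioo (0 : ℝ) 1, ∃ v g, MemW1p Ω₁ p v g ∧
      volume {x ∈ Ω₁ | v x = 0} = ENNReal.ofReal α * volume Ω₁ ∧ 0 < intLqPow Ω₁ q v ∧
      interiorConst Ω₁ p q α = sobolevQuotient Ω₁ p q v g := by
    intro α hα
    obtain ⟨v, g, h1, h2, h3, h4⟩ :=
      exists_minimizer hn hΩo hΩb hΩc.nonempty hΩs hp hq hsub hα.1.le hα.2
    exact ⟨v, g, h1, measure_zero_set_eq_of_minimizer hn hΩo hΩc hp hq h1 h2 h3 h4, h2,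
      (interiorConst_le h1 h2 h3).antisymm h4⟩
  refine ⟨hex, fun α hα β hβ hαβ => lt_of_not_ge fun hle => ?_⟩
  obtain ⟨v, g, h1, h2, h3, h4⟩ := hex β hβ
  have hlt : ENNReal.ofReal α * volume Ω₁ < volume {x ∈ Ω₁ | v x = 0} := by
    rw [h2]
    exact ENNReal.mul_lt_mul_left hpos hfin ((ENNReal.ofReal_lt_ofReal_iff hβ.1).2 hαβ)
  exact hlt.ne' (measure_zero_set_eq_of_minimizer hn hΩo hΩc hp hq h1 h3 hlt.le (h4 ▸ hle))
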